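/- arXiv:2307.08497 — 2 statements merged into one kernel-verified Lean document; each statement's English description precedes it below -/
import Mathlib

section
/- Let k ∈ ℕ. If a graph G contains no (≥3k)-subdivision of the claw K_{1,3} as a 3-quasi-geodesic subgraph, then G has radial cycle-width at most 18k + 2. -/
open SimpleGraph

namespace RadialPaper

variable {V W N : Type*}

/-- The ball of radius `r` around a set `U` of vertices of `G`. -/
def ballSet (G : SimpleGraph V) (U : Set V) (r : ℕ) : Set V :=
  {v | ∃ u ∈ U, G.edist u v ≤ (r : ℕ∞)}

/-- `G` has radius at most `r`: some vertex has distance at most `r` from every vertex.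
The empty graph has radius `0`; a nonempty disconnected graph has radius `∞`, hence
satisfies `radiusLE` for no `r`. -/
def radiusLE (G : SimpleGraph V) (r : ℕ) : Prop :=
  Nonempty V → ∃ v : V, ∀ w : V, G.edist v w ≤ (r : ℕ∞)

/-- `(Hg, B)` is a graph-decomposition of `G` modelled on `Hg`. -/
def IsGraphDecomp (G : SimpleGraph V) (Hg : SimpleGraph N) (B : N → Set V) : Prop :=
  (∀ v : V, ∃ h : N, v ∈ B h) ∧
  (∀ ⦃u v : V⦄, G.Adj u v → ∃ h : N, u ∈ B h ∧ v ∈ B h) ∧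
  (∀ v : V, (Hg.induce {h : N | v ∈ B h}).Connected)

/-- A subgraph `X` of `G` is `c`-quasi-geodesic. -/
def IsQuasiGeodesic (G : SimpleGraph V) (X : G.Subgraph) (c : ℕ) : Prop :=
  ∀ u v : X.verts, X.coe.edist u v ≤ (c : ℕ∞) * G.edist (u : V) (v : V)

/-- The subgraph `Y` of `G` is a `(≥ k)`-subdivision of the graph `X`. -/
def IsSubdivGE (k : ℕ) (X : SimpleGraph W) {G : SimpleGraph V} (Y : G.Subgraph) : Prop :=
  ∃ (f : W → V) (p : ∀ ⦃u v : W⦄, X.Adj u v → G.Walk (f u) (f v)),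
    Function.Injective f ∧
    (∀ ⦃u v : W⦄ (h : X.Adj u v), (p h).IsPath) ∧
    (∀ ⦃u v : W⦄ (h : X.Adj u v), k + 1 ≤ (p h).length) ∧
    (∀ ⦃u v : W⦄ (h : X.Adj u v), p h.symm = (p h).reverse) ∧
    (∀ ⦃u v : W⦄ (h : X.Adj u v) (w : W), f w ∈ (p h).support → w = u ∨ w = v) ∧
    (∀ ⦃u v u' v' : W⦄ (h : X.Adj u v) (h' : X.Adj u' v'), s(u, v) ≠ s(u', v') →
      ∀ x : V, x ∈ (p h).support → x ∈ (p h').support →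
        (x = f u ∨ x = f v) ∧ (x = f u' ∨ x = f v')) ∧
    Y.verts = Set.range f ∪ {x : V | ∃ (u v : W) (h : X.Adj u v), x ∈ (p h).support} ∧
    Y.edgeSet = {e : Sym2 V | ∃ (u v : W) (h : X.Adj u v), e ∈ (p h).edges}

/-- `G` contains a `(≥ k)`-subdivision of `X` as a `c`-quasi-geodesic subgraph. -/
def ContainsQuasiGeodesicSubdivGE (G : SimpleGraph V) (k : ℕ) (X : SimpleGraph W) (c : ℕ) :
    Prop :=
  ∃ Y : G.Subgraph, IsSubdivGE k X Y ∧ IsQuasiGeodesic G Y c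

/-- `X` is a minor of `Hg`. -/
def IsMinorOf (X : SimpleGraph W) (Hg : SimpleGraph N) : Prop :=
  ∃ B : W → Set N, (∀ w, (B w).Nonempty) ∧ (∀ w, (Hg.induce (B w)).Connected) ∧
    (∀ ⦃w w' : W⦄, w ≠ w' → Disjoint (B w) (B w')) ∧
    (∀ ⦃w w' : W⦄, X.Adj w w' → ∃ a ∈ B w, ∃ b ∈ B w', Hg.Adj a b)

/-- A class of (finite) graphs, given on the canonical vertex sets `Fin n`, is minor-closed. -/
def MinorClosed (ℋ : ∀ n : ℕ, SimpleGraph (Fin n) → Prop) : Prop :=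
  ∀ ⦃m n : ℕ⦄ (X : SimpleGraph (Fin m)) (Hg : SimpleGraph (Fin n)),
    ℋ n Hg → IsMinorOf X Hg → ℋ m X

/-- The triangle `K³`. -/
def triangleGraph : SimpleGraph (Fin 3) := ⊤

/-- The claw `K_{1,3}`, with centre `0`. -/
def clawGraph : SimpleGraph (Fin 4) := SimpleGraph.fromRel (fun a _ => a = 0)

/-- The wrench graph: two adjacent vertices `0, 1` of degree three, with leaves `2,3` and
`4,5` respectively. -/
def wrenchGraph : SimpleGraph (Fin 6) :=
  SimpleGraph.fromRel (fun a b =>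
    (a = 0 ∧ b = 1) ∨ (a = 0 ∧ b = 2) ∨ (a = 0 ∧ b = 3) ∨ (a = 1 ∧ b = 4) ∨ (a = 1 ∧ b = 5))

/-- The star `K_{1,m}`, with centre `none`. -/
def starGraph (m : ℕ) : SimpleGraph (Option (Fin m)) :=
  SimpleGraph.fromRel (fun a _ => a = none)

/-- `Hg` is a disjoint union of paths: every connected component is a path. -/
def IsUnionOfPaths (Hg : SimpleGraph N) : Prop :=
  ∀ cc : Hg.ConnectedComponent, ∃ m : ℕ,
    Nonempty (Hg.induce cc.supp ≃g SimpleGraph.pathGraph m)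

/-- `Hg` is a disjoint union of cycles: every connected component is a cycle. -/
def IsUnionOfCycles (Hg : SimpleGraph N) : Prop :=
  ∀ cc : Hg.ConnectedComponent, ∃ m : ℕ, 3 ≤ m ∧
    Nonempty (Hg.induce cc.supp ≃g SimpleGraph.cycleGraph m)

/-- `Hg` is a subdivided star, i.e. a `(≥ 0)`-subdivision of some star `K_{1,m}`. -/
def IsSubdividedStar (Hg : SimpleGraph N) : Prop :=
  ∃ m : ℕ, IsSubdivGE 0 (starGraph m) (⊤ : Hg.Subgraph)

/-- `Hg` is a disjoint union of subdivided stars. -/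
def IsUnionOfSubdividedStars (Hg : SimpleGraph N) : Prop :=
  ∀ cc : Hg.ConnectedComponent, IsSubdividedStar (Hg.induce cc.supp)

/-- A graph-decomposition is honest: bags of adjacent nodes intersect. -/
def Honest (Hg : SimpleGraph N) (B : N → Set V) : Prop :=
  ∀ ⦃h h' : N⦄, Hg.Adj h h' → (B h ∩ B h').Nonempty

/-- The outer-radial width of a decomposition of `G` is at most `r`. -/
def OuterRadialWidthLE (G : SimpleGraph V) (B : N → Set V) (r : ℕ) : Prop :=
  ∀ h : N, ∃ z : V, ∀ v ∈ B h, G.edist z v ≤ (r : ℕ∞)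

/-- The radial spread of a decomposition `(Hg, B)` of a graph with vertex set `V`
is at most `r`. -/
def RadialSpreadLE (Hg : SimpleGraph N) (B : N → Set V) (r : ℕ) : Prop :=
  ∀ v : V, radiusLE (Hg.induce {h : N | v ∈ B h}) r

/-- `φ` is an `(m, a, M, A, r)`-quasi-isometry from `Hg` to `G`. -/
def IsQuasiIsometry (Hg : SimpleGraph N) (G : SimpleGraph V) (m a M A r : ℕ)
    (φ : N → V) : Prop :=
  (∀ h h' : N, Hg.edist h h' ≤ (m : ℕ∞) * G.edist (φ h) (φ h') + (a : ℕ∞)) ∧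
  (∀ h h' : N, G.edist (φ h) (φ h') ≤ (M : ℕ∞) * Hg.edist h h' + (A : ℕ∞)) ∧
  (∀ v : V, ∃ h : N, G.edist v (φ h) ≤ (r : ℕ∞))

/-- `C` is a connected component of `G - S`: a maximal connected set of vertices
disjoint from `S`. -/
def IsCompOf (G : SimpleGraph V) (C S : Set V) : Prop :=
  C.Nonempty ∧ Disjoint C S ∧ (G.induce C).Connected ∧
  ∀ D : Set V, C ⊆ D → Disjoint D S → (G.induce D).Connected → D = C

/-- The subgraph `P` of `G` is an `M₀`–`M₁` path meeting `C`. -/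
def IsM01Path (G : SimpleGraph V) (M₀ M₁ C : Set V) (P : G.Subgraph) : Prop :=
  ∃ (x y : V) (q : G.Walk x y), q.IsPath ∧ q.toSubgraph = P ∧ x ∈ M₀ ∧ y ∈ M₁ ∧
    (∀ z ∈ q.support, z ≠ x → z ≠ y → z ∉ M₀ ∪ M₁) ∧ ∃ z ∈ q.support, z ∈ C

/-- The number of `M₀`–`M₁` paths meeting `C` that are contained in the subgraph `OS`. -/
noncomputable def Wcount (G : SimpleGraph V) (M₀ M₁ C : Set V) (OS : G.Subgraph) : ℕ :=
  Set.ncard {P : G.Subgraph | P ≤ OS ∧ IsM01Path G M₀ M₁ C P}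

/-!
Call three geodesics of length `ℓ + 1` with a common start a tripod if their union is a
`3`-quasi-geodesic claw. It suffices to decompose a connected graph `G` without tripods. Take a
geodesic `p` of length `D = diam G`; if `D ≤ 6ℓ + 2`, a single bag is enough. Otherwise
send every vertex `v` to the index `π v` of a nearest point of `p`. A vertex `v` farther than `ℓ`
from `p` has `π v` within `ℓ` of an end of `p`, as otherwise the two halves of `p` at `p (π v)`
and a geodesic towards `v` would form a tripod.

If `π` changes by at most `2ℓ + 2` along every edge, then all vertices are within `3ℓ` of `p`, and
windows of `2ℓ + 3` consecutive fibres of `π` decompose `G` along a path. Otherwise some edge is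
long, and then it joins vertices projecting near the two ends of `p`. Count the long edges of a
closed walk with signs: a shortest closed walk with nonzero count is an isometrically embedded
cycle, since any shortcut splits it into two closed walks, one of which has nonzero count. It has
to come back along `p`, so it is long; a vertex farther than `ℓ` from it would again give a tripod,
and hence windows of fibres of the projection to the cycle decompose `G`.
-/

section Walks
variable {G : SimpleGraph V} {u v x : V}

lemma dist_add_dist_le_length_of_mem_support (q : G.Walk u v) (hx : x ∈ q.support) :
    G.dist u x + G.dist x v ≤ q.length := by
  classical
  rw [← q.take_spec hx, Walk.length_append]
  exact add_le_add (dist_le _) (dist_le _)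

lemma two_mul_dist_le_length_of_mem_support (w : G.Walk x x) (hu : u ∈ w.support)
    (hv : v ∈ w.support) : 2 * G.dist u v ≤ w.length := by
  classical
  have h := dist_add_dist_le_length_of_mem_support (w.rotate u hu)
    ((w.mem_support_rotate_iff u hu).2 hv)
  rw [Walk.length_rotate, G.dist_comm (u := v)] at h
  omega

lemma exists_walk_getVert_eq (f : ℕ → V) (n : ℕ) (h : ∀ t < n, G.Adj (f t) (f (t + 1))) :
    ∃ q : G.Walk (f 0) (f n), q.length = n ∧ ∀ t ≤ n, q.getVert t = f t := by
  induction n generalizing f with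
  | zero => exact ⟨Walk.nil, rfl, fun t ht => by rw [Nat.le_zero.1 ht, Walk.getVert_zero]⟩
  | succ n ih =>
    obtain ⟨q, hq, hqf⟩ := ih (fun t => f (t + 1)) fun t ht => h _ (by omega)
    refine ⟨Walk.cons (h 0 (by omega)) q, by rw [Walk.length_cons, hq], ?_⟩
    rintro (_ | t) ht
    · exact Walk.getVert_zero _
    · rw [Walk.getVert_cons_succ]
      exact hqf t (by omega)

end Walks

section Geodesics
variable {G : SimpleGraph V} {D : ℕ} {p : ℕ → V}

/-- `p 0, p 1, …, p D` is a geodesic of `G`; the values of `p` beyond `D` are irrelevant. -/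
def IsGeodesicSeq (G : SimpleGraph V) (D : ℕ) (p : ℕ → V) : Prop :=
  ∀ ⦃i j : ℕ⦄, i ≤ j → j ≤ D → G.dist (p i) (p j) = j - i

namespace IsGeodesicSeq

lemma adj (hp : IsGeodesicSeq G D p) {t : ℕ} (ht : t < D) : G.Adj (p t) (p (t + 1)) := by
  rw [← dist_eq_one_iff_adj, hp (Nat.le_add_right t 1) ht, Nat.add_sub_cancel_left]

lemma dist_zero (hp : IsGeodesicSeq G D p) {t : ℕ} (ht : t ≤ D) : G.dist (p 0) (p t) = t :=
  hp (Nat.zero_le t) ht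

lemma le_add_dist (hp : IsGeodesicSeq G D p) {s t : ℕ} (ht : t ≤ D) :
    t ≤ s + G.dist (p s) (p t) := by
  rcases le_total s t with h | h
  · rw [hp h ht]
    omega
  · omega

lemma injOn (hp : IsGeodesicSeq G D p) : Set.InjOn p (Set.Iic D) := by
  intro s hs t ht hst
  have h₁ := hp.le_add_dist (s := s) ht
  have h₂ := hp.le_add_dist (s := t) hs
  rw [hst, dist_self] at h₁ h₂
  omega

lemma forward (hp : IsGeodesicSeq G D p) {a n : ℕ} (h : a + n ≤ D) :
    IsGeodesicSeq G n fun t => p (a + t) := by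
  intro i j hij hj
  rw [hp (by omega) (by omega)]
  omega

lemma backward (hp : IsGeodesicSeq G D p) {a n : ℕ} (hn : n ≤ a) (ha : a ≤ D) :
    IsGeodesicSeq G n fun t => p (a - t) := by
  intro i j hij hj
  rw [dist_comm, hp (by omega) (by omega)]
  omega

end IsGeodesicSeq

lemma isGeodesicSeq_getVert {u v : V} (q : G.Walk u v) (hq : q.length = G.dist u v) :
    IsGeodesicSeq G q.length q.getVert := by
  intro i j hij hj
  have hsub : ((q.drop i).take (j - i)).IsSubwalk q :=
    ((q.drop i).isSubwalk_take (j - i)).trans (q.isSubwalk_drop i)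
  have h := length_eq_dist_of_subwalk hq hsub
  rw [Walk.take_length, Walk.drop_length, Walk.drop_getVert, Nat.add_sub_cancel' hij] at h
  omega

lemma exists_isGeodesicSeq (hG : G.Connected) (u v : V) :
    ∃ p : ℕ → V, p 0 = u ∧ p (G.dist u v) = v ∧ IsGeodesicSeq G (G.dist u v) p := by
  obtain ⟨q, hq⟩ := hG.exists_walk_length_eq_dist u v
  exact ⟨q.getVert, q.getVert_zero, hq ▸ q.getVert_length, hq ▸ isGeodesicSeq_getVert q hq⟩

end Geodesics

section SubdividedClaw
variable {G : SimpleGraph V} {z : V} {tip : Fin 3 → V}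

lemma clawGraph_adj_iff {u v : Fin 4} :
    clawGraph.Adj u v ↔ ∃ i : Fin 3, u = 0 ∧ v = i.succ ∨ u = i.succ ∧ v = 0 := by
  cases u using Fin.cases <;> cases v using Fin.cases <;>
    simp [clawGraph, Fin.succ_ne_zero, eq_comm]

lemma clawGraph_adj_zero_succ (i : Fin 3) : clawGraph.Adj 0 i.succ :=
  clawGraph_adj_iff.2 ⟨i, Or.inl ⟨rfl, rfl⟩⟩

/-- The branch vertices of a subdivided claw with centre `z` and leaves `tip i`, indexed by the
vertices of `clawGraph`. -/
def clawVert (z : V) (tip : Fin 3 → V) : Fin 4 → V :=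
  Fin.cons z tip

/-- The branch paths of a subdivided claw with legs `P i`, indexed by the edges of `clawGraph`; an
edge directed towards the centre runs through its leg backwards. -/
def clawWalk (P : ∀ i, G.Walk z (tip i)) :
    ∀ u v : Fin 4, clawGraph.Adj u v → G.Walk (clawVert z tip u) (clawVert z tip v) :=
  Fin.cases
    (Fin.cases (fun h => (clawGraph.irrefl h).elim) fun i _ => P i)
    fun i => Fin.cases (fun _ => (P i).reverse) fun j h =>
      (by simp [clawGraph_adj_iff, Fin.succ_ne_zero] at h : False).elim

lemma exists_leg_clawWalk (P : ∀ i, G.Walk z (tip i)) {u v : Fin 4} (h : clawGraph.Adj u v) :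
    ∃ i : Fin 3, s(u, v) = s(0, i.succ) ∧
      (∀ x, x ∈ (clawWalk P u v h).support ↔ x ∈ (P i).support) ∧
      ∀ e, e ∈ (clawWalk P u v h).edges ↔ e ∈ (P i).edges := by
  obtain ⟨i, ⟨rfl, rfl⟩ | ⟨rfl, rfl⟩⟩ := clawGraph_adj_iff.1 h
  · exact ⟨i, rfl, fun x => Iff.rfl, fun e => Iff.rfl⟩
  · refine ⟨i, Sym2.eq_swap, fun x => ?_, fun e => ?_⟩
    · exact (P i).support_reverse ▸ List.mem_reverse
    · exact (P i).edges_reverse ▸ List.mem_reverse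

lemma clawVert_injective (P : ∀ i, G.Walk z (tip i)) (htip : ∀ i, tip i ≠ z)
    (hmeet : ∀ i j, i ≠ j → ∀ x ∈ (P i).support, x ∈ (P j).support → x = z) :
    Function.Injective (clawVert z tip) := by
  refine Fin.cons_injective_iff.2 ⟨fun ⟨i, hi⟩ => htip i hi, fun i j hij => ?_⟩
  by_contra hne
  have hmem : tip i ∈ (P j).support := by
    rw [hij]
    exact (P j).end_mem_support
  exact htip i (hmeet i j hne _ (P i).end_mem_support hmem)

lemma mem_edge_of_clawVert_mem_support (P : ∀ i, G.Walk z (tip i)) (htip : ∀ i, tip i ≠ z)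
    (hmeet : ∀ i j, i ≠ j → ∀ x ∈ (P i).support, x ∈ (P j).support → x = z) {i : Fin 3}
    {w : Fin 4} (hw : clawVert z tip w ∈ (P i).support) : w ∈ s(0, i.succ) := by
  induction w using Fin.cases with
  | zero => exact Sym2.mem_mk_left _ _
  | succ j =>
    by_cases hij : i = j
    · subst hij
      exact Sym2.mem_mk_right _ _
    · exact (htip j (hmeet i j hij _ hw (P j).end_mem_support)).elim

lemma verts_iSup_leg_eq (P : ∀ i, G.Walk z (tip i)) :
    (⨆ i, (P i).toSubgraph).verts = Set.range (clawVert z tip) ∪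
      {x | ∃ (u v : Fin 4) (h : clawGraph.Adj u v), x ∈ (clawWalk P u v h).support} := by
  ext x
  simp only [Subgraph.verts_iSup, Walk.verts_toSubgraph, Set.mem_iUnion]
  constructor
  · rintro ⟨i, hx⟩
    exact Or.inr ⟨0, i.succ, clawGraph_adj_zero_succ i, hx⟩
  · rintro (⟨w, rfl⟩ | ⟨u, v, h, hx⟩)
    · induction w using Fin.cases with
      | zero => exact ⟨0, (P 0).start_mem_support⟩
      | succ i => exact ⟨i, (P i).end_mem_support⟩
    · obtain ⟨i, -, hsupp, -⟩ := exists_leg_clawWalk P h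
      exact ⟨i, (hsupp x).1 hx⟩

lemma edgeSet_iSup_leg_eq (P : ∀ i, G.Walk z (tip i)) :
    (⨆ i, (P i).toSubgraph).edgeSet =
      {e | ∃ (u v : Fin 4) (h : clawGraph.Adj u v), e ∈ (clawWalk P u v h).edges} := by
  ext e
  simp only [Subgraph.edgeSet_iSup, Walk.edgeSet_toSubgraph, Set.mem_iUnion]
  constructor
  · rintro ⟨i, he⟩
    exact ⟨0, i.succ, clawGraph_adj_zero_succ i, he⟩
  · rintro ⟨u, v, h, he⟩
    obtain ⟨i, -, -, hedges⟩ := exists_leg_clawWalk P h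
    exact ⟨i, (hedges e).1 he⟩

lemma isSubdivGE_claw {k : ℕ} (P : ∀ i, G.Walk z (tip i)) (hpath : ∀ i, (P i).IsPath)
    (hlen : ∀ i, k + 1 ≤ (P i).length)
    (hmeet : ∀ i j, i ≠ j → ∀ x ∈ (P i).support, x ∈ (P j).support → x = z) :
    IsSubdivGE k clawGraph (⨆ i, (P i).toSubgraph) := by
  have htip : ∀ i, tip i ≠ z := fun i hi => by
    have hzero := Walk.length_eq_zero_iff.2 ((hpath i).nil_iff_eq.2 hi.symm)
    have := hlen i
    omega
  refine ⟨clawVert z tip, fun u v h => clawWalk P u v h,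
    clawVert_injective P htip hmeet, ?_, ?_, ?_, ?_, ?_, verts_iSup_leg_eq P, edgeSet_iSup_leg_eq P⟩
  · intro u v h
    obtain ⟨i, ⟨rfl, rfl⟩ | ⟨rfl, rfl⟩⟩ := clawGraph_adj_iff.1 h
    exacts [hpath i, (hpath i).reverse]
  · intro u v h
    obtain ⟨i, ⟨rfl, rfl⟩ | ⟨rfl, rfl⟩⟩ := clawGraph_adj_iff.1 h
    exacts [hlen i, (hlen i).trans_eq (P i).length_reverse.symm]
  · intro u v h
    obtain ⟨i, ⟨rfl, rfl⟩ | ⟨rfl, rfl⟩⟩ := clawGraph_adj_iff.1 h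
    exacts [rfl, (P i).reverse_reverse.symm]
  · intro u v h w hw
    obtain ⟨i, huv, hsupp, -⟩ := exists_leg_clawWalk P h
    exact Sym2.mem_iff.1
      (huv ▸ mem_edge_of_clawVert_mem_support P htip hmeet ((hsupp _).1 hw))
  · intro u v u' v' h h' hne x hx hx'
    obtain ⟨i, huv, hsupp, -⟩ := exists_leg_clawWalk P h
    obtain ⟨j, huv', hsupp', -⟩ := exists_leg_clawWalk P h'
    have hij : i ≠ j := fun hij => hne (by rw [huv, huv', hij])
    have hxz : x = clawVert z tip 0 := hmeet i j hij x ((hsupp x).1 hx) ((hsupp' x).1 hx')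
    have hcentre : ∀ {u v : Fin 4} {i : Fin 3}, s(u, v) = s(0, i.succ) →
        x = clawVert z tip u ∨ x = clawVert z tip v := fun {u v i} e =>
      (Sym2.mem_iff.1 (e ▸ Sym2.mem_mk_left 0 i.succ)).imp (hxz.trans <| congrArg _ ·)
        (hxz.trans <| congrArg _ ·)
    exact ⟨hcentre huv, hcentre huv'⟩

lemma edist_coe_getVert_le {Y : G.Subgraph} {u v : V} (q : G.Walk u v) (hq : q.toSubgraph ≤ Y)
    {s t : ℕ} (hst : s ≤ t) (ht : t ≤ q.length) (hs : q.getVert s ∈ Y.verts)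
    (ht' : q.getVert t ∈ Y.verts) :
    Y.coe.edist ⟨q.getVert s, hs⟩ ⟨q.getVert t, ht'⟩ ≤ (t - s : ℕ) := by
  induction t, hst using Nat.le_induction with
  | base => simp
  | succ t hst ih =>
    have hadj : Y.Adj (q.getVert t) (q.getVert (t + 1)) :=
      hq.2 (q.toSubgraph_adj_getVert (by omega))
    calc Y.coe.edist ⟨q.getVert s, hs⟩ ⟨q.getVert (t + 1), ht'⟩
      _ ≤ Y.coe.edist ⟨q.getVert s, hs⟩ ⟨q.getVert t, hadj.fst_mem⟩ +
          Y.coe.edist ⟨q.getVert t, hadj.fst_mem⟩ ⟨q.getVert (t + 1), ht'⟩ :=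
        SimpleGraph.edist_triangle
      _ ≤ (t - s : ℕ) + 1 :=
        add_le_add (ih (by omega) _) (edist_le_one_iff_adj_or_eq.2 (Or.inl hadj))
      _ = (t + 1 - s : ℕ) := by rw [Nat.sub_add_comm hst, Nat.cast_add, Nat.cast_one]

lemma natCast_le_mul_edist {c n : ℕ} {u v : V} (h : n ≤ c * G.dist u v) :
    (n : ℕ∞) ≤ c * G.edist u v :=
  calc (n : ℕ∞) ≤ (c * G.dist u v : ℕ) := Nat.cast_le.2 h
    _ = c * (G.dist u v : ℕ∞) := Nat.cast_mul c _
    _ ≤ c * G.edist u v := by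
      gcongr
      exact ENat.natCast_toNat_le_self _

lemma isQuasiGeodesic_iSup_toSubgraph {ι : Type*} {c : ℕ} {tip : ι → V}
    (P : ∀ i, G.Walk z (tip i))
    (hsame : ∀ i, ∀ s ≤ (P i).length, ∀ t ≤ (P i).length,
      t ≤ s + c * G.dist ((P i).getVert s) ((P i).getVert t))
    (hdiff : ∀ i j, i ≠ j → ∀ s ≤ (P i).length, ∀ t ≤ (P j).length,
      s + t ≤ c * G.dist ((P i).getVert s) ((P j).getVert t)) :
    IsQuasiGeodesic G (⨆ i, (P i).toSubgraph) c := by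
  have hle : ∀ i, (P i).toSubgraph ≤ ⨆ i, (P i).toSubgraph := le_iSup fun i => (P i).toSubgraph
  rintro ⟨u, hu⟩ ⟨v, hv⟩
  obtain ⟨i, hi⟩ := Set.mem_iUnion.1 (Subgraph.verts_iSup ▸ hu)
  obtain ⟨j, hj⟩ := Set.mem_iUnion.1 (Subgraph.verts_iSup ▸ hv)
  obtain ⟨s, rfl, hs⟩ := Walk.mem_support_iff_exists_getVert.1 ((P i).mem_verts_toSubgraph.1 hi)
  obtain ⟨t, rfl, ht⟩ := Walk.mem_support_iff_exists_getVert.1 ((P j).mem_verts_toSubgraph.1 hj)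
  by_cases hij : i = j
  · subst hij
    rcases le_total s t with hst | hts
    · refine (edist_coe_getVert_le (P i) (hle i) hst ht _ _).trans
        (natCast_le_mul_edist (Nat.sub_le_iff_le_add'.2 (hsame i s hs t ht)))
    · rw [SimpleGraph.edist_comm, G.edist_comm]
      refine (edist_coe_getVert_le (P i) (hle i) hts hs _ _).trans
        (natCast_le_mul_edist (Nat.sub_le_iff_le_add'.2 (hsame i t ht s hs)))
  · have hz : z ∈ (⨆ i, (P i).toSubgraph).verts := (hle i).1 (P i).start_mem_verts_toSubgraph
    have hcentre : ∀ i t (_ : t ≤ (P i).length) (hv : (P i).getVert t ∈ _),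
        (⨆ i, (P i).toSubgraph).coe.edist ⟨z, hz⟩ ⟨(P i).getVert t, hv⟩ ≤ t := fun i t ht hv => by
      simpa only [Walk.getVert_zero, Nat.sub_zero] using
        edist_coe_getVert_le (P i) (hle i) (Nat.zero_le t) ht (by rwa [Walk.getVert_zero]) hv
    refine SimpleGraph.edist_triangle.trans
      ((add_le_add (SimpleGraph.edist_comm.trans_le (hcentre i s hs hu))
        (hcentre j t ht hv)).trans ?_)
    exact_mod_cast natCast_le_mul_edist (hdiff i j hij s hs t ht)

end SubdividedClaw

section Tripods
variable {G : SimpleGraph V} {ℓ : ℕ}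

/-- Three geodesics of length `ℓ` with a common starting point whose union is a `3`-quasi-geodesic
subdivided claw. -/
structure IsGeodesicTripod (G : SimpleGraph V) (ℓ : ℕ) (leg : Fin 3 → ℕ → V) : Prop where
  leg_zero : ∀ i j, leg i 0 = leg j 0
  geodesic : ∀ i, IsGeodesicSeq G ℓ (leg i)
  spread : ∀ i j, i < j → ∀ s ≤ ℓ, ∀ t ≤ ℓ, s + t ≤ 3 * G.dist (leg i s) (leg j t)

namespace IsGeodesicTripod
variable {leg : Fin 3 → ℕ → V}

lemma spread_of_ne (h : IsGeodesicTripod G ℓ leg) {i j : Fin 3} (hij : i ≠ j) {s t : ℕ}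
    (hs : s ≤ ℓ) (ht : t ≤ ℓ) : s + t ≤ 3 * G.dist (leg i s) (leg j t) := by
  rcases hij.lt_or_gt with hlt | hgt
  · exact h.spread i j hlt s hs t ht
  · rw [add_comm, G.dist_comm]
    exact h.spread j i hgt t ht s hs

lemma containsQuasiGeodesicSubdivGE {k : ℕ} (h : IsGeodesicTripod G (k + 1) leg) :
    ContainsQuasiGeodesicSubdivGE G k clawGraph 3 := by
  have hwalk : ∀ i, ∃ q : G.Walk (leg 0 0) (leg i (k + 1)),
      q.length = k + 1 ∧ ∀ t ≤ k + 1, q.getVert t = leg i t := fun i =>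
    h.leg_zero i 0 ▸ exists_walk_getVert_eq (leg i) (k + 1) fun t ht => (h.geodesic i).adj ht
  choose P hlen hvert using hwalk
  have hpath : ∀ i, (P i).IsPath := fun i => (P i).isPath_of_length_eq_dist <| by
    rw [hlen, h.leg_zero 0 i, (h.geodesic i).dist_zero le_rfl]
  have hmeet : ∀ i j, i ≠ j → ∀ x ∈ (P i).support, x ∈ (P j).support → x = leg 0 0 := by
    intro i j hij x hx hx'
    obtain ⟨s, rfl, hs⟩ := Walk.mem_support_iff_exists_getVert.1 hx
    obtain ⟨t, hst, ht⟩ := Walk.mem_support_iff_exists_getVert.1 hx'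
    rw [hlen] at hs ht
    have hspread := h.spread_of_ne hij hs ht
    rw [← hvert i s hs, ← hvert j t ht, hst, dist_self] at hspread
    rw [show s = 0 by omega, Walk.getVert_zero]
  refine ⟨⨆ i, (P i).toSubgraph, isSubdivGE_claw P hpath (fun i => (hlen i).ge) hmeet,
    isQuasiGeodesic_iSup_toSubgraph P ?_ ?_⟩
  · intro i s hs t ht
    rw [hlen] at hs ht
    rw [hvert i s hs, hvert i t ht]
    have := (h.geodesic i).le_add_dist (s := s) ht
    omega
  · intro i j hij s hs t ht
    rw [hlen] at hs ht
    rw [hvert i s hs, hvert j t ht]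
    exact h.spread_of_ne hij hs ht

end IsGeodesicTripod

/-- The third leg leads from `A 0` towards `v`: its vertex at distance `t` from `A 0` is at distance
at least `t` from `A` and `B`. -/
lemma exists_isGeodesicTripod_of_nearest (hG : G.Connected) {A B : ℕ → V} {v : V}
    (hA : IsGeodesicSeq G ℓ A) (hB : IsGeodesicSeq G ℓ B) (hAB : A 0 = B 0)
    (hspread : ∀ s ≤ ℓ, ∀ t ≤ ℓ, s + t ≤ 3 * G.dist (A s) (B t))
    (hv : ℓ ≤ G.dist v (A 0)) (hvA : ∀ t ≤ ℓ, G.dist v (A 0) ≤ G.dist v (A t))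
    (hvB : ∀ t ≤ ℓ, G.dist v (B 0) ≤ G.dist v (B t)) :
    ∃ leg, IsGeodesicTripod G ℓ leg := by
  obtain ⟨C, hC₀, hCv, hC⟩ := exists_isGeodesicSeq hG (A 0) v
  rw [G.dist_comm] at hCv hC
  have hspreadC : ∀ {P : ℕ → V}, IsGeodesicSeq G ℓ P → A 0 = P 0 →
      (∀ t ≤ ℓ, G.dist v (P 0) ≤ G.dist v (P t)) →
      ∀ s ≤ ℓ, ∀ t ≤ ℓ, s + t ≤ 3 * G.dist (P s) (C t) := by
    intro P hP hAP hvP s hs t ht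
    have hCt₀ := hC.dist_zero (ht.trans hv)
    have hCtv := hC (ht.trans hv) le_rfl
    have hvPs := hvP s hs
    have hPs := hP.dist_zero hs
    have t₁ := hG.dist_triangle (u := v) (v := C t) (w := P s)
    have t₂ := hG.dist_triangle (u := P 0) (v := C t) (w := P s)
    rw [hCv, G.dist_comm] at hCtv
    rw [hC₀, hAP] at hCt₀
    rw [← hAP] at hvPs
    rw [G.dist_comm (u := C t)] at t₁ t₂
    omega
  refine ⟨![A, B, C], ⟨?_, ?_, ?_⟩⟩
  · have h₀ : ∀ i, (![A, B, C] : Fin 3 → ℕ → V) i 0 = A 0 := by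
      intro i
      fin_cases i
      exacts [rfl, hAB.symm, hC₀]
    exact fun i j => (h₀ i).trans (h₀ j).symm
  · intro i
    fin_cases i
    exacts [hA, hB, fun i j hij hj => hC hij (hj.trans hv)]
  · intro i j hij
    fin_cases i <;> fin_cases j
    all_goals first | exact absurd hij (by decide) | skip
    exacts [hspread, hspreadC hA rfl hvA, hspreadC hB hAB hvB]

end Tripods

section Radius
variable {G : SimpleGraph V} {H : SimpleGraph W} {r s : ℕ}

lemma edist_map_le (f : G →g H) (u v : V) : H.edist (f u) (f v) ≤ G.edist u v := by
  by_cases h : G.Reachable u v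
  · obtain ⟨q, hq⟩ := h.exists_walk_length_eq_edist
    rw [← hq, ← q.length_map f]
    exact (q.map f).edist_le
  · rw [edist_eq_top_of_not_reachable h]
    exact le_top

lemma length_walk_induce {S : Set V} {u v : V} (q : G.Walk u v) (hq : ∀ x ∈ q.support, x ∈ S) :
    (q.induce S hq).length = q.length := by
  rw [← Walk.length_map (Embedding.induce S).toHom, Walk.map_induce]
  rfl

lemma edist_induce_supp (c : G.ConnectedComponent) (u v : c.supp) :
    (G.induce c.supp).edist u v = G.edist u v := by
  obtain ⟨q, hq⟩ := (c.reachable_of_mem_supp u.2 v.2).exists_walk_length_eq_edist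
  refine le_antisymm ?_ (edist_map_le (Embedding.induce c.supp).toHom u v)
  have hsupp : ∀ x ∈ q.support, x ∈ c.supp := by
    intro x hx
    obtain ⟨q', -⟩ := Walk.mem_support_iff_exists_append.1 hx
    exact (ConnectedComponent.sound q'.reachable).symm.trans u.2
  rw [← hq, ← length_walk_induce q hsupp]
  exact Walk.edist_le _

lemma IsGeodesicTripod.of_induce_supp {ℓ : ℕ} {c : G.ConnectedComponent} {leg : Fin 3 → ℕ → c.supp}
    (h : IsGeodesicTripod (G.induce c.supp) ℓ leg) :
    IsGeodesicTripod G ℓ fun i t => (leg i t : V) := by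
  have hdist : ∀ u v : c.supp, (G.induce c.supp).dist u v = G.dist u v := fun u v =>
    congrArg ENat.toNat (edist_induce_supp c u v)
  refine ⟨fun i j => congrArg _ (h.leg_zero i j), fun i s t hst ht => ?_,
    fun i j hij s hs t ht => ?_⟩
  · rw [← hdist]
    exact h.geodesic i hst ht
  · rw [← hdist]
    exact h.spread i j hij s hs t ht

namespace radiusLE

lemma mono (h : radiusLE G r) (hrs : r ≤ s) : radiusLE G s := fun hV =>
  (h hV).imp fun _ hz v => (hz v).trans (by exact_mod_cast hrs)

lemma of_surjective (h : radiusLE G r) (f : G →g H) (hf : Function.Surjective f) :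
    radiusLE H r := by
  rintro ⟨w⟩
  obtain ⟨z, hz⟩ := h ⟨(hf w).choose⟩
  refine ⟨f z, fun w => ?_⟩
  obtain ⟨v, rfl⟩ := hf w
  exact (edist_map_le f z v).trans (hz v)

lemma induce_of_walks {S : Set V} {z : V}
    (h : ∀ v ∈ S, ∃ q : G.Walk z v, q.length ≤ r ∧ ∀ x ∈ q.support, x ∈ S) :
    radiusLE (G.induce S) r := by
  rintro ⟨v, hv⟩
  have hz : z ∈ S := by
    obtain ⟨q, -, hq⟩ := h v hv
    exact hq z q.start_mem_support
  refine ⟨⟨z, hz⟩, fun w => ?_⟩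
  obtain ⟨q, hqr, hq⟩ := h w w.2
  refine (q.induce S hq).edist_le.trans ?_
  rw [length_walk_induce]
  exact_mod_cast hqr

end radiusLE
end Radius

section CycleDecompositions
variable {G : SimpleGraph V} {n r s : ℕ}

lemma induce_cycleGraph_connected {S : Set (Fin (n + 2))} {j : Fin (n + 2)} (hj : j ∈ S)
    (hS : ∀ i ∈ S, i ≠ j → i + 1 ∈ S) : ((cycleGraph (n + 2)).induce S).Connected := by
  rw [connected_iff_exists_forall_reachable]
  refine ⟨⟨j, hj⟩, fun ⟨i, hi⟩ => ?_⟩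
  induction hk : (j - i).val generalizing i with
  | zero =>
    obtain rfl : j = i := sub_eq_zero.1 (Fin.ext hk)
    rfl
  | succ k ih =>
    have hij : i ≠ j := by
      rintro rfl
      simp at hk
    have hnext : (j - (i + 1)).val = k := by
      rw [← sub_sub, Fin.val_sub_one_of_ne_zero (sub_ne_zero.2 hij.symm), hk, Nat.add_sub_cancel]
    have hadj : ((cycleGraph (n + 2)).induce S).Adj ⟨i + 1, hS i hi hij⟩ ⟨i, hi⟩ := by
      simp [cycleGraph_adj]
    exact (ih (i + 1) (hS i hi hij) hnext).trans hadj.reachable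

/-- `G` has radial cycle-width at most `r` as witnessed by a single cycle. Cycles `Fin (n + 3)`
are used so that the model is a genuine cycle. -/
def HasCycleDecomp (G : SimpleGraph V) (r : ℕ) : Prop :=
  ∃ (n : ℕ) (B : Fin (n + 3) → Set V),
    IsGraphDecomp G (cycleGraph (n + 3)) B ∧ ∀ i, radiusLE (G.induce (B i)) r

lemma HasCycleDecomp.mono (h : HasCycleDecomp G r) (hrs : r ≤ s) : HasCycleDecomp G s := by
  obtain ⟨n, B, hB, hr⟩ := h
  exact ⟨n, B, hB, fun i => (hr i).mono hrs⟩

/-- The bags containing `v` form the arc of the cycle that ends at `π v`. -/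
lemma isGraphDecomp_cycleGraph {B : Fin (n + 2) → Set V} (π : V → Fin (n + 2))
    (hself : ∀ v, v ∈ B (π v)) (hadj : ∀ ⦃u v⦄, G.Adj u v → v ∈ B (π u) ∨ u ∈ B (π v))
    (hsucc : ∀ i, ∀ v ∈ B i, i ≠ π v → v ∈ B (i + 1)) :
    IsGraphDecomp G (cycleGraph (n + 2)) B := by
  refine ⟨fun v => ⟨π v, hself v⟩, fun u v huv => ?_, fun v =>
    induce_cycleGraph_connected (hself v) fun i hi => hsucc i v hi⟩
  exact (hadj huv).elim (fun h => ⟨π u, hself u, h⟩) fun h => ⟨π v, h, hself v⟩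

lemma hasCycleDecomp_of_dist_le (hG : G.Connected) {z : V} (h : ∀ v, G.dist z v ≤ r) :
    HasCycleDecomp G r := by
  refine ⟨0, fun _ => Set.univ, isGraphDecomp_cycleGraph (fun _ => 0) (by simp) (by simp) (by simp),
    fun _ => radiusLE.induce_of_walks (z := z) fun v _ => ?_⟩
  obtain ⟨q, hq⟩ := hG.exists_walk_length_eq_dist z v
  exact ⟨q, hq.trans_le (h v), fun _ _ => Set.mem_univ _⟩

end CycleDecompositions

section DisjointUnions
variable {ι : Type*} {M : ι → Type*} {G : SimpleGraph V} {r : ℕ}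

/-- The disjoint union of a family of graphs. -/
def sigmaGraph (H : ∀ i, SimpleGraph (M i)) : SimpleGraph (Σ i, M i) :=
  ⨆ i, (H i).map (Function.Embedding.sigmaMk i)

lemma sigmaGraph_adj_mk {H : ∀ i, SimpleGraph (M i)} {i : ι} {a : M i} {x : Σ i, M i} :
    (sigmaGraph H).Adj ⟨i, a⟩ x ↔ ∃ b, (H i).Adj a b ∧ x = ⟨i, b⟩ := by
  rw [sigmaGraph, iSup_adj]
  constructor
  · rintro ⟨j, hj⟩
    obtain ⟨a', b, hab, ha', rfl⟩ := (map_adj ..).1 hj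
    obtain rfl : j = i := congrArg Sigma.fst ha'
    obtain rfl : a' = a := (Function.Embedding.sigmaMk j).injective ha'
    exact ⟨b, hab, rfl⟩
  · rintro ⟨b, hab, rfl⟩
    exact ⟨i, (map_adj ..).2 ⟨a, b, hab, rfl, rfl⟩⟩

/-- A summand as an induced subgraph of the disjoint union. -/
def sigmaGraphEmbedding (H : ∀ i, SimpleGraph (M i)) (i : ι) : H i ↪g sigmaGraph H where
  toEmbedding := Function.Embedding.sigmaMk i
  map_rel_iff' := by simp [sigmaGraph_adj_mk]

lemma supp_connectedComponentMk_eq_range {H : SimpleGraph V} {K : SimpleGraph W}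
    (hK : K.Preconnected) (f : K ↪g H) (hf : ∀ i, H.neighborSet (f i) ⊆ Set.range f) (i : W) :
    (H.connectedComponentMk (f i)).supp = Set.range f := by
  ext x
  rw [ConnectedComponent.mem_supp_iff, ConnectedComponent.eq]
  constructor
  · rintro ⟨q⟩
    suffices ∀ ⦃x y⦄, H.Walk x y → y ∈ Set.range f → x ∈ Set.range f from this q ⟨i, rfl⟩
    intro x y q hy
    induction q with
    | nil => exact hy
    | cons hadj _ ih =>
      obtain ⟨j, rfl⟩ := ih hy
      exact hf j hadj.symm
  · rintro ⟨j, rfl⟩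
    exact (hK j i).map f.toHom

namespace IsUnionOfCycles

lemma sigma {m : ι → ℕ} (hm : ∀ i, 3 ≤ m i) :
    IsUnionOfCycles (sigmaGraph fun i => cycleGraph (m i)) := by
  refine ConnectedComponent.ind fun ⟨i, a⟩ => ⟨m i, hm i, ?_⟩
  have hrange := supp_connectedComponentMk_eq_range cycleGraph_preconnected
    (sigmaGraphEmbedding (fun i => cycleGraph (m i)) i) (fun a x hx => by
      obtain ⟨b, -, rfl⟩ := sigmaGraph_adj_mk.1 hx
      exact ⟨b, rfl⟩) a
  change (connectedComponentMk _ (⟨i, a⟩ : Σ i, Fin (m i))).supp = _ at hrange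
  rw [hrange]
  exact ⟨(Embedding.isoInduceRange _).symm⟩

lemma of_iso {H : SimpleGraph V} {K : SimpleGraph W} (h : IsUnionOfCycles H) (e : K ≃g H) :
    IsUnionOfCycles K := by
  intro cc
  obtain ⟨m, hm, ⟨φ⟩⟩ := h (cc.map e.toEmbedding.toHom)
  have hbij : Set.BijOn e cc.supp (cc.map e.toEmbedding.toHom).supp :=
    e.toEquiv.bijOn fun v => ConnectedComponent.iso_image_comp_eq_map_iff_eq_comp (φ := e)
  exact ⟨m, hm, ⟨φ.comp (e.induce hbij)⟩⟩

end IsUnionOfCycles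

namespace IsGraphDecomp

lemma comp_iso {H : SimpleGraph W} {K : SimpleGraph N} {B : W → Set V} (h : IsGraphDecomp G H B)
    (e : K ≃g H) : IsGraphDecomp G K (B ∘ e) := by
  obtain ⟨hvert, hedge, hconn⟩ := h
  have hsurj : ∀ {P : W → Prop}, (∃ x, P x) → ∃ y, P (e y) := fun ⟨x, hx⟩ =>
    ⟨e.symm x, by rwa [e.apply_symm_apply]⟩
  refine ⟨fun v => hsurj (hvert v), fun u v huv => hsurj (hedge huv), fun v => ?_⟩
  have hbij : Set.BijOn e {y | v ∈ B (e y)} {x | v ∈ B x} := e.toEquiv.bijOn fun _ => Iff.rfl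
  exact (e.induce hbij).connected_iff.2 (hconn v)

lemma sigma {M : G.ConnectedComponent → Type*} {H : ∀ c, SimpleGraph (M c)}
    {B : ∀ c, M c → Set c.supp} (h : ∀ c, IsGraphDecomp (G.induce c.supp) (H c) (B c)) :
    IsGraphDecomp G (sigmaGraph H) fun x => Subtype.val '' B x.1 x.2 := by
  refine ⟨fun v => ?_, fun u v huv => ?_, fun v => ?_⟩
  · obtain ⟨a, ha⟩ := (h (G.connectedComponentMk v)).1 ⟨v, rfl⟩
    exact ⟨⟨_, a⟩, _, ha, rfl⟩
  · have huc : u ∈ (G.connectedComponentMk v).supp := ConnectedComponent.sound huv.reachable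
    obtain ⟨a, hu, hv⟩ := (h _).2.1
      (show (G.induce (G.connectedComponentMk v).supp).Adj ⟨u, huc⟩ ⟨v, rfl⟩ from huv)
    exact ⟨⟨_, a⟩, ⟨_, hu, rfl⟩, _, hv, rfl⟩
  · have himage : {x : Σ c, M c | v ∈ Subtype.val '' B x.1 x.2} =
        sigmaGraphEmbedding H (G.connectedComponentMk v) ''
          {a | (⟨v, rfl⟩ : (G.connectedComponentMk v).supp) ∈ B _ a} := by
      ext ⟨d, a⟩
      constructor
      · rintro ⟨⟨_, hvd⟩, ha, rfl⟩
        obtain rfl : G.connectedComponentMk _ = d := hvd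
        exact ⟨a, ha, rfl⟩
      · rintro ⟨a, ha, h⟩
        obtain ⟨rfl, h⟩ := Sigma.mk.inj h
        exact ⟨_, eq_of_heq h ▸ ha, rfl⟩
    rw [himage]
    exact ((h _).2.2 _).map (induceHom (sigmaGraphEmbedding H _).toHom (Set.mapsTo_image _ _))
      (Set.surjective_mapsTo_image_restrict _ _)

end IsGraphDecomp

lemma exists_isUnionOfCycles_decomp [Finite V]
    (h : ∀ c : G.ConnectedComponent, HasCycleDecomp (G.induce c.supp) r) :
    ∃ (n : ℕ) (H : SimpleGraph (Fin n)) (B : Fin n → Set V),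
      IsUnionOfCycles H ∧ IsGraphDecomp G H B ∧ ∀ i, radiusLE (G.induce (B i)) r := by
  choose n B hB hr using h
  have := Fintype.ofFinite (Σ c, Fin (n c + 3))
  let e := (sigmaGraph fun c => cycleGraph (n c + 3)).overFinIso rfl
  refine ⟨_, _, _, (IsUnionOfCycles.sigma fun c => by omega).of_iso e.symm,
    (IsGraphDecomp.sigma hB).comp_iso e.symm, fun i => ?_⟩
  exact (hr (e.symm i).1 (e.symm i).2).of_surjective
    (induceHom (Embedding.induce _).toHom (Set.mapsTo_image Subtype.val _))
    (Set.surjective_mapsTo_image_restrict _ _)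

end DisjointUnions

section NearestIndices
variable {G : SimpleGraph V} {p : ℕ → V} {S : Set ℕ} {u v : V} {i j r w : ℕ}

/-- `p i` is a nearest point to `v` among the points of `p` with index in `S`. -/
def IsNearestIndex (G : SimpleGraph V) (p : ℕ → V) (S : Set ℕ) (v : V) (i : ℕ) : Prop :=
  i ∈ S ∧ ∀ j ∈ S, G.dist v (p i) ≤ G.dist v (p j)

/-- The least index of a nearest point. Breaking ties by the index makes the set of vertices with a
given nearest index star-shaped, see `exists_walk_nearestIndex_eq`. -/
noncomputable def nearestIndex (G : SimpleGraph V) (p : ℕ → V) (S : Set ℕ) (v : V) : ℕ :=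
  sInf {i | IsNearestIndex G p S v i}

lemma isNearestIndex_nearestIndex (hS : S.Nonempty) (v : V) :
    IsNearestIndex G p S v (nearestIndex G p S v) :=
  Nat.sInf_mem (s := {i | IsNearestIndex G p S v i})
    ⟨Function.argminOn (fun i => G.dist v (p i)) S hS, Function.argminOn_mem _ _ _,
      fun _ hj => Function.argminOn_le (fun i => G.dist v (p i)) S hj⟩

lemma nearestIndex_apply (hG : G.Connected) (hp : Set.InjOn p S) (hi : i ∈ S) :
    nearestIndex G p S (p i) = i := by
  have h := isNearestIndex_nearestIndex (G := G) (p := p) ⟨i, hi⟩ (p i)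
  have hle := h.2 i hi
  rw [dist_self, Nat.le_zero, hG.dist_eq_zero_iff] at hle
  exact (hp hi h.1 hle).symm

lemma exists_walk_nearestIndex_eq (hG : G.Connected) (hS : S.Nonempty) (v : V) :
    ∃ q : G.Walk (p (nearestIndex G p S v)) v, q.length = G.dist v (p (nearestIndex G p S v)) ∧
      ∀ x ∈ q.support, nearestIndex G p S x = nearestIndex G p S v := by
  have hv := isNearestIndex_nearestIndex (G := G) (p := p) hS v
  obtain ⟨q, hq⟩ := hG.exists_walk_length_eq_dist v (p (nearestIndex G p S v))
  refine ⟨q.reverse, q.length_reverse.trans hq, fun x hx => ?_⟩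
  rw [Walk.support_reverse, List.mem_reverse] at hx
  have hsplit := dist_add_dist_le_length_of_mem_support q hx
  have htri : ∀ j, G.dist v (p j) ≤ G.dist v x + G.dist x (p j) := fun j => hG.dist_triangle
  have hxmin := isNearestIndex_nearestIndex (G := G) (p := p) hS x
  refine le_antisymm (Nat.sInf_le ⟨hv.1, fun j hj => ?_⟩) (Nat.sInf_le ⟨hxmin.1, fun j hj => ?_⟩)
  · have := hv.2 j hj
    have := htri j
    omega
  · have := hv.2 j hj
    have := hxmin.2 _ hv.1
    have := htri (nearestIndex G p S x)
    omega

lemma dist_le_add_add (hG : G.Connected) (u v x y : V) :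
    G.dist x y ≤ G.dist u x + G.dist u v + G.dist v y := by
  have hx := hG.dist_triangle (u := x) (v := u) (w := y)
  have hy := hG.dist_triangle (u := u) (v := v) (w := y)
  rw [G.dist_comm (u := x) (v := u)] at hx
  omega

lemma IsNearestIndex.dist_le_add_one (hu : IsNearestIndex G p S u i)
    (hv : IsNearestIndex G p S v j) (hG : G.Connected) (huv : G.Adj u v) :
    G.dist u (p i) ≤ G.dist v (p j) + 1 := by
  have htri := hG.dist_triangle (u := u) (v := v) (w := p j)
  rw [dist_eq_one_iff_adj.2 huv, add_comm] at htri
  exact (hu.2 j hv.1).trans htri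

lemma radiusLE_induce_nearestIndex (hG : G.Connected) (hS : S.Nonempty)
    (hr : ∀ v, G.dist v (p (nearestIndex G p S v)) ≤ r) {I : Set ℕ} (f : ℕ → V)
    (hf : ∀ v, nearestIndex G p S v ∈ I → ∃ n ≤ w, f n = p (nearestIndex G p S v) ∧
      (∀ t < n, G.Adj (f t) (f (t + 1))) ∧ ∀ t ≤ n, nearestIndex G p S (f t) ∈ I) :
    radiusLE (G.induce {v | nearestIndex G p S v ∈ I}) (w + r) := by
  refine radiusLE.induce_of_walks (z := f 0) fun v hv => ?_
  obtain ⟨n, hn, hfn, hadj, hmem⟩ := hf v hv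
  obtain ⟨q₁, hq₁, hget⟩ := exists_walk_getVert_eq f n hadj
  obtain ⟨q₂, hq₂, hcell⟩ := exists_walk_nearestIndex_eq (p := p) hG hS v
  refine ⟨q₁.append (q₂.copy hfn.symm rfl), ?_, fun x hx => ?_⟩
  · rw [Walk.length_append, Walk.length_copy, hq₁, hq₂]
    exact add_le_add hn (hr v)
  · rw [Walk.mem_support_append_iff, Walk.support_copy] at hx
    rcases hx with hx | hx
    · obtain ⟨t, rfl, ht⟩ := Walk.mem_support_iff_exists_getVert.1 hx
      rw [hq₁] at ht
      rw [hget t ht]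
      exact hmem t ht
    · rw [Set.mem_ofPred_eq, hcell x hx]
      exact hv

end NearestIndices

section GeodesicCycles
variable {G : SimpleGraph V} {L ℓ r : ℕ} {c : ℕ → V}

/-- `c` runs periodically along a cycle of length `L` that is isometrically embedded in `G`. -/
structure IsGeodesicCycle (G : SimpleGraph V) (L : ℕ) (c : ℕ → V) : Prop where
  periodic : Function.Periodic c L
  dist_add : ∀ i t, t ≤ L → G.dist (c i) (c (i + t)) = min t (L - t)

namespace IsGeodesicCycle

lemma adj (hc : IsGeodesicCycle G L c) (hL : 2 ≤ L) (i : ℕ) : G.Adj (c i) (c (i + 1)) := by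
  rw [← dist_eq_one_iff_adj, hc.dist_add i 1 (by omega)]
  omega

lemma injOn (hc : IsGeodesicCycle G L c) : Set.InjOn c (Set.Iio L) := by
  have hlt : ∀ i j, i < j → j < L → c i ≠ c j := by
    intro i j hij hj h
    have := hc.dist_add i (j - i) (by omega)
    rw [Nat.add_sub_cancel' hij.le, h, dist_self] at this
    omega
  intro i hi j hj h
  rcases lt_trichotomy i j with hij | hij | hij
  · exact absurd h (hlt i j hij hj)
  · exact hij
  · exact absurd h.symm (hlt j i hij hi)

lemma forward (hc : IsGeodesicCycle G L c) {n : ℕ} (hn : 2 * n ≤ L) (i : ℕ) :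
    IsGeodesicSeq G n fun t => c (i + t) := by
  intro s t hst ht
  have := hc.dist_add (i + s) (t - s) (by omega)
  rw [show i + s + (t - s) = i + t by omega] at this
  exact this.trans (by omega)

lemma backward (hc : IsGeodesicCycle G L c) {n i : ℕ} (hn : 2 * n ≤ L) (hi : n ≤ i) :
    IsGeodesicSeq G n fun t => c (i - t) := by
  intro s t hst ht
  have := hc.dist_add (i - t) (t - s) (by omega)
  rw [show i - t + (t - s) = i - s by omega, dist_comm] at this
  exact this.trans (by omega)

lemma nearestIndex_apply (hc : IsGeodesicCycle G L c) (hG : G.Connected) (hL : 0 < L) (i : ℕ) :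
    nearestIndex G c (Set.Iio L) (c i) = i % L := by
  rw [← hc.periodic.map_mod_nat i]
  exact RadialPaper.nearestIndex_apply hG hc.injOn (Nat.mod_lt i hL)

/-- A far vertex would span a tripod with the two arcs leaving its nearest point. -/
lemma dist_nearestIndex_le (hc : IsGeodesicCycle G L c) (hG : G.Connected)
    (hfree : ¬ ∃ leg, IsGeodesicTripod G (ℓ + 1) leg) (hL : 8 * (ℓ + 1) ≤ 3 * L) (v : V) :
    G.dist v (c (nearestIndex G c (Set.Iio L) v)) ≤ ℓ := by
  have hmin := isNearestIndex_nearestIndex (G := G) (p := c) (S := Set.Iio L)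
    ⟨0, show 0 < L by omega⟩ v
  set i := nearestIndex G c (Set.Iio L) v
  have hmin' : ∀ j, G.dist v (c i) ≤ G.dist v (c j) := fun j => by
    rw [← hc.periodic.map_mod_nat j]
    exact hmin.2 _ (Nat.mod_lt j (by omega))
  by_contra! hfar
  rw [← hc.periodic i] at hfar hmin'
  refine hfree (exists_isGeodesicTripod_of_nearest hG (hc.forward (by omega) (i + L))
    (hc.backward (i := i + L) (by omega) (by omega)) rfl (fun s hs t ht => ?_) hfar
    (fun t _ => hmin' _) fun t _ => hmin' _)
  have := hc.dist_add (i + L - t) (s + t) (by omega)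
  rw [show i + L - t + (s + t) = i + L + s by omega, dist_comm] at this
  omega

lemma hasCycleDecomp (hc : IsGeodesicCycle G L c) (hG : G.Connected) (hL : 3 ≤ L)
    (hr : ∀ v, G.dist v (c (nearestIndex G c (Set.Iio L) v)) ≤ r) :
    HasCycleDecomp G (2 * r + 1 + r) := by
  obtain ⟨n, rfl⟩ := Nat.exists_eq_add_of_le' hL
  have hne : (Set.Iio (n + 3)).Nonempty := ⟨0, by simp⟩
  set π := nearestIndex G c (Set.Iio (n + 3))
  have hπ : ∀ v, π v < n + 3 := fun v => (isNearestIndex_nearestIndex hne v).1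
  have hadj : ∀ u v, G.Adj u v → π u ≤ π v → (∃ t ≤ 2 * r + 1, (π u + t) % (n + 3) = π v) ∨
      ∃ t ≤ 2 * r + 1, (π v + t) % (n + 3) = π u := by
    intro u v huv hle
    have hv := hπ v
    have hdist : G.dist (c (π u)) (c (π v)) ≤ 2 * r + 1 := by
      have := dist_le_add_add hG u v (c (π u)) (c (π v))
      rw [dist_eq_one_iff_adj.2 huv] at this
      have := hr u
      have := hr v
      omega
    rw [← Nat.add_sub_cancel' hle, hc.dist_add _ _ (by omega), min_le_iff] at hdist
    refine hdist.imp (fun h => ⟨π v - π u, h, ?_⟩) fun h => ⟨n + 3 - (π v - π u), h, ?_⟩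
    · rw [Nat.add_sub_cancel' hle, Nat.mod_eq_of_lt hv]
    · rw [show π v + (n + 3 - (π v - π u)) = π u + (n + 3) by omega, Nat.add_mod_right,
        Nat.mod_eq_of_lt (hπ u)]
  refine ⟨n, fun i => {v | π v ∈ {j | ∃ t ≤ 2 * r + 1, (i + t) % (n + 3) = j}},
    isGraphDecomp_cycleGraph (fun v => ⟨π v, hπ v⟩)
      (fun v => ⟨0, by omega, Nat.mod_eq_of_lt (hπ v)⟩)
      (fun u v huv => ?_) (fun i v hv hne => ?_), fun i =>
    radiusLE_induce_nearestIndex hG hne hr (fun t => c (i + t)) ?_⟩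
  · rcases le_total (π u) (π v) with h | h
    · exact hadj u v huv h
    · exact (hadj v u huv.symm h).symm
  · obtain ⟨_ | t, ht, hiv⟩ := hv
    · exact absurd (Fin.ext (by rwa [add_zero, Nat.mod_eq_of_lt i.2] at hiv)) hne
    · refine ⟨t, by omega, ?_⟩
      rw [Fin.val_add, Fin.val_one, Nat.mod_add_mod, ← hiv, add_assoc, add_comm t]
  · rintro v ⟨t, ht, hiv⟩
    refine ⟨t, ht, by rw [← hiv, hc.periodic.map_mod_nat], fun s _ => hc.adj (by omega) _,
      fun s hs => ⟨s, by omega, (hc.nearestIndex_apply hG (by omega) _).symm⟩⟩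

end IsGeodesicCycle
end GeodesicCycles

section GeodesicPaths
variable {G : SimpleGraph V} {D ℓ m r : ℕ} {p : ℕ → V}

namespace IsGeodesicSeq

/-- A far vertex with its nearest point well inside the geodesic would span a tripod with the two
halves of the geodesic. -/
lemma lt_or_lt_of_isNearestIndex (hp : IsGeodesicSeq G D p) (hG : G.Connected)
    (hfree : ¬ ∃ leg, IsGeodesicTripod G ℓ leg) {v : V} {i : ℕ}
    (hv : IsNearestIndex G p (Set.Iic D) v i) (hfar : ℓ ≤ G.dist v (p i)) :
    i < ℓ ∨ D < i + ℓ := by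
  by_contra! ⟨hi, hiD⟩
  refine hfree (exists_isGeodesicTripod_of_nearest hG (hp.forward hiD) (hp.backward hi hv.1) rfl
    (fun s hs t _ => ?_) hfar (fun t ht => hv.2 _ (show i + t ≤ D by omega))
    fun t _ => hv.2 _ (show i - t ≤ D by omega))
  have := hp (i := i - t) (j := i + s) (by omega) (by omega)
  rw [dist_comm] at this
  omega

/-- On the way from a far vertex to the other end of `p`, consider the first vertex that is no
longer far from an initial segment of `p`: it is close to `p`, and its nearest point is early on
`p`. -/
lemma dist_le_of_index_le (hp : IsGeodesicSeq G D p) (hG : G.Connected)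
    (hfree : ¬ ∃ leg, IsGeodesicTripod G (ℓ + 1) leg) (hD : 6 * ℓ + 3 ≤ D)
    (hdiam : ∀ u v, G.dist u v ≤ D) {f : V → ℕ} (hf : ∀ v, IsNearestIndex G p (Set.Iic D) v (f v))
    (hshort : ∀ u v, G.Adj u v → f v ≤ f u + (2 * ℓ + 2)) {v : V} (hv : f v ≤ ℓ) :
    G.dist v (p (f v)) ≤ 3 * ℓ := by
  by_contra! hfar
  obtain ⟨q, hq⟩ := hG.exists_walk_length_eq_dist v (p D)
  have hstart : v ∈ {x | ℓ < G.dist x (p (f x)) ∧ f x ≤ ℓ} := ⟨by omega, hv⟩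
  have hend : p D ∉ {x | ℓ < G.dist x (p (f x)) ∧ f x ≤ ℓ} := by
    rintro ⟨h, -⟩
    have := (hf (p D)).2 D Set.self_mem_Iic
    rw [dist_self] at this
    omega
  obtain ⟨⟨⟨u, x⟩, hux⟩, hd, ⟨hu, hfu⟩, hx⟩ := q.exists_boundary_dart _ hstart hend
  have hqx := dist_add_dist_le_length_of_mem_support q (q.dart_snd_mem_support_of_mem_darts hd)
  have hvD := hdiam v (p D)
  dsimp only at hux hu hfu hx hqx
  have hfx := hshort u x hux
  have hxnear : G.dist x (p (f x)) ≤ ℓ := by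
    by_contra! hxfar
    have := hp.lt_or_lt_of_isNearestIndex hG hfree (hf x) hxfar
    have : ¬ f x ≤ ℓ := fun h => hx ⟨hxfar, h⟩
    omega
  have hux' := hG.dist_triangle (u := u) (v := x) (w := p (f x))
  rw [dist_eq_one_iff_adj.2 hux] at hux'
  have hfxu : IsNearestIndex G p (Set.Iic D) u (f x) :=
    ⟨(hf x).1, fun j hj => by have := (hf u).2 j hj; omega⟩
  have hfxu' := hp.lt_or_lt_of_isNearestIndex hG hfree hfxu (hu.trans_le ((hf u).2 _ (hf x).1))
  have hfxD := hp (hf x).1 le_rfl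
  have hpxD := hG.dist_triangle (u := p (f x)) (v := x) (w := p D)
  have hvx := hG.dist_triangle (u := v) (v := x) (w := p (f x))
  have hvmin := (hf v).2 _ (hf x).1
  rw [G.dist_comm (v := x)] at hpxD
  omega

lemma dist_le (hp : IsGeodesicSeq G D p) (hG : G.Connected)
    (hfree : ¬ ∃ leg, IsGeodesicTripod G (ℓ + 1) leg) (hD : 6 * ℓ + 3 ≤ D)
    (hdiam : ∀ u v, G.dist u v ≤ D) {f : V → ℕ} (hf : ∀ v, IsNearestIndex G p (Set.Iic D) v (f v))
    (hshort : ∀ u v, G.Adj u v → f v ≤ f u + (2 * ℓ + 2)) (v : V) :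
    G.dist v (p (f v)) ≤ 3 * ℓ := by
  by_contra! hfar
  rcases hp.lt_or_lt_of_isNearestIndex hG hfree (hf v) (by omega) with hv | hv
  · exact hfar.not_ge (hp.dist_le_of_index_le hG hfree hD hdiam hf hshort (by omega))
  · have hfD : ∀ x, f x ≤ D := fun x => (hf x).1
    have hrev : ∀ x, D - (D - f x) = f x := fun x => Nat.sub_sub_self (hfD x)
    have := (hp.backward le_rfl le_rfl).dist_le_of_index_le hG hfree hD hdiam
      (f := fun x => D - f x)
      (fun x => ⟨Nat.sub_le _ _, fun j _ => by
        simpa only [hrev] using (hf x).2 (D - j) (Nat.sub_le _ _)⟩)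
      (fun u x hux => by have := hshort x u hux.symm; have := hfD x; omega)
      (v := v) (by omega)
    simp only [hrev] at this
    omega

/-- The bags with index beyond `D` are empty; they close the path up to a cycle. -/
lemma hasCycleDecomp (hp : IsGeodesicSeq G D p) (hG : G.Connected)
    (hr : ∀ v, G.dist v (p (nearestIndex G p (Set.Iic D) v)) ≤ r)
    (hshort : ∀ u v, G.Adj u v →
      nearestIndex G p (Set.Iic D) v ≤ nearestIndex G p (Set.Iic D) u + m) :
    HasCycleDecomp G (m + r) := by
  have hne : (Set.Iic D).Nonempty := ⟨0, Nat.zero_le D⟩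
  set π := nearestIndex G p (Set.Iic D)
  have hπ : ∀ v, π v ≤ D := fun v => (isNearestIndex_nearestIndex hne v).1
  refine ⟨D, fun i => {v | π v ∈ Set.Icc (i : ℕ) (i + m)},
    isGraphDecomp_cycleGraph (fun v => ⟨π v, (hπ v).trans_lt (Nat.lt_add_of_pos_right three_pos)⟩)
      (fun v => ⟨le_rfl, Nat.le_add_right _ _⟩) (fun u v huv => ?_) (fun i v hv hne => ?_), fun i =>
    radiusLE_induce_nearestIndex hG hne hr (fun t => p (i + t)) fun v hv => ?_⟩
  · rcases le_total (π u) (π v) with h | h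
    · exact Or.inl ⟨h, hshort u v huv⟩
    · exact Or.inr ⟨h, hshort v u huv.symm⟩
  · obtain ⟨hiv, hvi⟩ : (i : ℕ) ≤ π v ∧ π v ≤ i + m := hv
    have hlt : (i : ℕ) < π v := hiv.lt_of_ne fun h => hne (Fin.ext h)
    have hi : ((i + 1 : Fin (D + 3)) : ℕ) = i + 1 := by
      have := hπ v
      exact (Fin.val_add i 1).trans (Nat.mod_eq_of_lt (show (i : ℕ) + 1 < D + 3 by omega))
    refine ⟨?_, ?_⟩ <;> rw [hi] <;> omega
  · obtain ⟨hiv, hvi⟩ : (i : ℕ) ≤ π v ∧ π v ≤ i + m := hv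
    have hvD := hπ v
    refine ⟨π v - i, by omega, congrArg p (Nat.add_sub_cancel' hiv), fun t ht => hp.adj (by omega),
      fun t ht => ?_⟩
    rw [nearestIndex_apply hG hp.injOn (show i + t ≤ D by omega)]
    exact ⟨Nat.le_add_right _ _, by omega⟩

end IsGeodesicSeq
end GeodesicPaths

section Cochains
variable {G : SimpleGraph V} {A : Type*} [AddGroup A] {ω : V → V → A} {u v x : V}

/-- The sum of the weights `ω` of the directed edges of a walk, i.e. the value on the walk of the
1-cochain `ω`. -/
def walkSum (ω : V → V → A) (q : G.Walk u v) : A :=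
  (q.darts.map fun d => ω d.fst d.snd).sum

@[simp] lemma walkSum_nil : walkSum ω (Walk.nil : G.Walk u u) = 0 := rfl

@[simp] lemma walkSum_cons (h : G.Adj u v) (q : G.Walk v x) :
    walkSum ω (Walk.cons h q) = ω u v + walkSum ω q :=
  List.sum_cons

lemma walkSum_append (q : G.Walk u v) (r : G.Walk v x) :
    walkSum ω (q.append r) = walkSum ω q + walkSum ω r := by
  simp only [walkSum, Walk.darts_append, List.map_append, List.sum_append]

lemma walkSum_reverse (hω : ∀ a b, ω b a = -ω a b) (q : G.Walk u v) :
    walkSum ω q.reverse = -walkSum ω q := by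
  induction q with
  | nil => exact neg_zero.symm
  | cons h q ih =>
    rw [Walk.reverse_cons, walkSum_append, ih, walkSum_cons, walkSum_cons, walkSum_nil, hω,
      add_zero, neg_add_rev]

lemma walkSum_eq_of_coboundary (g : V → A) (q : G.Walk u v)
    (h : ∀ i < q.length, ω (q.getVert i) (q.getVert (i + 1)) =
      -g (q.getVert i) + g (q.getVert (i + 1))) :
    walkSum ω q = -g u + g v := by
  induction q with
  | nil => exact (neg_add_cancel _).symm
  | cons hadj q ih =>
    have h₀ := h 0 (Nat.succ_pos _)
    simp only [zero_add, Walk.getVert_zero, Walk.getVert_cons_succ] at h₀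
    rw [walkSum_cons, h₀, ih fun i hi => h (i + 1) (Nat.succ_lt_succ hi), add_assoc,
      add_neg_cancel_left]

lemma walkSum_eq_zero (q : G.Walk u v)
    (h : ∀ i < q.length, ω (q.getVert i) (q.getVert (i + 1)) = 0) : walkSum ω q = 0 := by
  simpa using walkSum_eq_of_coboundary (fun _ => (0 : A)) q (by simpa using h)

/-- `w` is a shortest closed walk on which the cochain `ω` does not vanish. -/
structure IsSystole (ω : V → V → A) (w : G.Walk x x) : Prop where
  walkSum_ne_zero : walkSum ω w ≠ 0
  length_le : ∀ y (w' : G.Walk y y), walkSum ω w' ≠ 0 → w.length ≤ w'.length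

lemma exists_isSystole (w : G.Walk x x) (hw : walkSum ω w ≠ 0) :
    ∃ y, ∃ w' : G.Walk y y, IsSystole ω w' := by
  obtain ⟨⟨y, w'⟩, hw', hmin⟩ := (measure fun w : Σ x, G.Walk x x => w.2.length).wf.has_min
    {w | walkSum ω w.2 ≠ 0} ⟨⟨x, w⟩, hw⟩
  exact ⟨y, w', hw', fun z q hq => not_lt.1 (hmin ⟨z, q⟩ hq)⟩

namespace IsSystole

lemma three_le_length (hω : ∀ a b, ω b a = -ω a b) {w : G.Walk x x} (hw : IsSystole ω w) :
    3 ≤ w.length := by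
  by_contra! hlt
  match w, hw.walkSum_ne_zero, hlt with
  | .nil, hne, _ => exact hne rfl
  | .cons h .nil, _, _ => exact G.irrefl h
  | .cons h (.cons h' .nil), hne, _ => exact hne (by simp [hω x])

/-- Replacing `M` by a geodesic `R` changes the sum by that of the closed walk `M - R`; one of the
two closed walks thus has nonzero sum and is not shorter than the original one. -/
lemma dist_eq_min (hG : G.Connected) (hω : ∀ a b, ω b a = -ω a b) {P : G.Walk x u} {M : G.Walk u v}
    {Q : G.Walk v x} (hw : IsSystole ω (P.append (M.append Q))) :
    G.dist u v = min M.length (P.length + Q.length) := by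
  have hM := dist_le M
  have hPQ := dist_le (Q.append P)
  obtain ⟨R, hR⟩ := hG.exists_walk_length_eq_dist u v
  have hshort : M.length ≤ G.dist u v ∨ P.length + Q.length ≤ G.dist u v := by
    by_cases h : walkSum ω M = walkSum ω R
    · have := hw.length_le _ (P.append (R.append Q))
        (by simpa only [walkSum_append, h] using hw.walkSum_ne_zero)
      simp only [Walk.length_append] at this
      omega
    · have := hw.length_le _ (M.append R.reverse)
        (by rwa [walkSum_append, walkSum_reverse hω, ← sub_eq_add_neg, sub_ne_zero])
      simp only [Walk.length_append, Walk.length_reverse] at this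
      omega
  rw [Walk.length_append, dist_comm] at hPQ
  omega

lemma dist_getVert (hG : G.Connected) (hω : ∀ a b, ω b a = -ω a b) {w : G.Walk x x}
    (hw : IsSystole ω w) {i t : ℕ} (hit : i + t ≤ w.length) :
    G.dist (w.getVert i) (w.getVert (i + t)) = min t (w.length - t) := by
  have hsplit : (w.take i).append (((w.drop i).take t).append ((w.drop i).drop t)) = w := by
    rw [Walk.append_take_drop_eq, Walk.append_take_drop_eq]
  have := dist_eq_min hG hω (hsplit.symm ▸ hw)
  simp only [Walk.take_length, Walk.drop_length, Walk.drop_getVert] at this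
  omega

lemma isGeodesicCycle (hG : G.Connected) (hω : ∀ a b, ω b a = -ω a b) {w : G.Walk x x}
    (hw : IsSystole ω w) : IsGeodesicCycle G w.length fun i => w.getVert (i % w.length) := by
  refine ⟨fun i => by simp only [Nat.add_mod_right], fun i t ht => ?_⟩
  have hi : i % w.length < w.length := Nat.mod_lt _ (by have := hw.three_le_length hω; omega)
  rw [← Nat.mod_add_mod]
  set s := i % w.length
  by_cases hst : s + t < w.length
  · rw [Nat.mod_eq_of_lt hst, hw.dist_getVert hG hω hst.le]
  · have := hw.dist_getVert hG hω (i := s + t - w.length) (t := w.length - t) (by omega)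
    rw [Nat.mod_eq_sub_mod (by omega), Nat.mod_eq_of_lt (by omega), dist_comm]
    rw [show s + t - w.length + (w.length - t) = s by omega] at this
    omega

end IsSystole
end Cochains

section Jumps
variable {G : SimpleGraph V} {f : V → ℕ} {m s : ℕ} {u v x : V}

/-- The cochain counting, with signs, the edges along which `f` changes by more than `m`. -/
def jump (m : ℕ) (f : V → ℕ) (u v : V) : ℤ :=
  if f u + m < f v then 1 else if f v + m < f u then -1 else 0

lemma jump_swap (u v : V) : jump m f v u = -jump m f u v := by
  unfold jump
  split_ifs <;> omega

lemma jump_eq_zero (huv : f v ≤ f u + m) (hvu : f u ≤ f v + m) : jump m f u v = 0 := by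
  rw [jump, if_neg huv.not_gt, if_neg hvu.not_gt]

/-- Otherwise `jump m f` would be the coboundary of the indicator function of `{v | s < f v}` along
the walk. -/
lemma exists_adj_crossing (hlong : ∀ u v, G.Adj u v → f u + m < f v → f u ≤ s ∧ s < f v)
    {w : G.Walk x x} (hw : walkSum (jump m f) w ≠ 0) :
    ∃ a ∈ w.support, ∃ b ∈ w.support, G.Adj a b ∧ f a ≤ s ∧ s < f b ∧ f b ≤ f a + m := by
  by_contra! hcross
  refine hw ((walkSum_eq_of_coboundary (fun v => if s < f v then 1 else 0) w fun i hi => ?_).trans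
    (neg_add_cancel _))
  have hadj := w.adj_getVert_succ hi
  have hi₀ := w.getVert_mem_support i
  have hi₁ := w.getVert_mem_support (i + 1)
  have h₁ := hlong _ _ hadj
  have h₂ := hlong _ _ hadj.symm
  have h₃ := hcross _ hi₀ _ hi₁ hadj
  have h₄ := hcross _ hi₁ _ hi₀ hadj.symm
  unfold jump
  split_ifs <;> omega

end Jumps

section Connected
variable {G : SimpleGraph V} {D ℓ m : ℕ} {p : ℕ → V} {u v x : V}

namespace IsGeodesicSeq

lemma exists_walkSum_jump_ne_zero (hp : IsGeodesicSeq G D p) (hG : G.Connected) (hm : 1 ≤ m)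
    (huv : G.Adj u v)
    (hlong : nearestIndex G p (Set.Iic D) u + m < nearestIndex G p (Set.Iic D) v) :
    ∃ w : G.Walk u u, walkSum (jump m (nearestIndex G p (Set.Iic D))) w ≠ 0 := by
  have hne : (Set.Iic D).Nonempty := ⟨0, Nat.zero_le D⟩
  set π := nearestIndex G p (Set.Iic D)
  have hzero : ∀ x, ∃ q : G.Walk (p 0) x, walkSum (jump m π) q = 0 := by
    intro x
    have hx : π x ≤ D := (isNearestIndex_nearestIndex hne x).1
    have hπp : ∀ i ≤ π x, π (p i) = i := fun i hi => nearestIndex_apply hG hp.injOn (hi.trans hx)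
    obtain ⟨q₁, hq₁, hget⟩ := exists_walk_getVert_eq p (π x) fun t ht => hp.adj (by omega)
    obtain ⟨q₂, -, hcell⟩ := exists_walk_nearestIndex_eq (p := p) hG hne x
    refine ⟨q₁.append q₂, ?_⟩
    have hsum₁ : walkSum (jump m π) q₁ = 0 := walkSum_eq_zero q₁ fun i hi => by
      rw [hq₁] at hi
      rw [hget i hi.le, hget (i + 1) hi]
      apply jump_eq_zero <;> rw [hπp _ hi.le, hπp _ hi] <;> omega
    have hsum₂ : walkSum (jump m π) q₂ = 0 := walkSum_eq_zero q₂ fun i _ => by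
      have hπ : ∀ j, π (q₂.getVert j) = π x := fun j => hcell _ (q₂.getVert_mem_support j)
      apply jump_eq_zero <;> rw [hπ, hπ] <;> exact Nat.le_add_right _ _
    rw [walkSum_append, hsum₁, hsum₂, add_zero]
  obtain ⟨qu, hqu⟩ := hzero u
  obtain ⟨qv, hqv⟩ := hzero v
  refine ⟨Walk.cons huv (qv.reverse.append qu), ?_⟩
  rw [walkSum_cons, walkSum_append, walkSum_reverse jump_swap, hqu, hqv, jump, if_pos hlong]
  decide

lemma index_of_adj_of_add_lt (hp : IsGeodesicSeq G D p) (hG : G.Connected)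
    (hfree : ¬ ∃ leg, IsGeodesicTripod G (ℓ + 1) leg) {f : V → ℕ}
    (hf : ∀ v, IsNearestIndex G p (Set.Iic D) v (f v)) (huv : G.Adj u v)
    (hlong : f u + (2 * ℓ + 2) < f v) : f u ≤ ℓ ∧ D ≤ f v + ℓ := by
  have hu := hp.lt_or_lt_of_isNearestIndex hG hfree (hf u)
  have hv := hp.lt_or_lt_of_isNearestIndex hG hfree (hf v)
  have huv_le := (hf u).dist_le_add_one (hf v) hG huv
  have hvu_le := (hf v).dist_le_add_one (hf u) hG huv.symm
  have hvD : f v ≤ D := (hf v).1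
  have hdist := dist_le_add_add hG u v (p (f u)) (p (f v))
  rw [hp (by omega) hvD, dist_eq_one_iff_adj.2 huv] at hdist
  omega

lemma dist_le_of_adj_of_lt (hp : IsGeodesicSeq G D p) (hG : G.Connected)
    (hfree : ¬ ∃ leg, IsGeodesicTripod G (ℓ + 1) leg) (hD : 6 * ℓ + 3 ≤ D) {f : V → ℕ}
    (hf : ∀ v, IsNearestIndex G p (Set.Iic D) v (f v)) (huv : G.Adj u v) {s : ℕ} (hs : ℓ ≤ s)
    (hsD : s + ℓ + 1 ≤ D) (hu : f u ≤ s) (hv : s < f v) (hshort : f v ≤ f u + (2 * ℓ + 2)) :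
    G.dist u (p (f u)) ≤ ℓ + 1 ∧ G.dist v (p (f v)) ≤ ℓ + 1 := by
  have := hp.lt_or_lt_of_isNearestIndex hG hfree (hf u)
  have := hp.lt_or_lt_of_isNearestIndex hG hfree (hf v)
  have := (hf u).dist_le_add_one (hf v) hG huv
  have := (hf v).dist_le_add_one (hf u) hG huv.symm
  omega

/-- Long edges join the two ends of `p`, so `w` has to come back along `p` by short edges; it
crosses the levels `ℓ` and `D - ℓ - 1` at vertices that are close to `p`. -/
lemma le_length_of_walkSum_jump_ne_zero (hp : IsGeodesicSeq G D p) (hG : G.Connected)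
    (hfree : ¬ ∃ leg, IsGeodesicTripod G (ℓ + 1) leg) (hD : 6 * ℓ + 3 ≤ D) {f : V → ℕ}
    (hf : ∀ v, IsNearestIndex G p (Set.Iic D) v (f v)) {w : G.Walk x x}
    (hw : walkSum (jump (2 * ℓ + 2) f) w ≠ 0) : 4 * ℓ + 2 ≤ w.length := by
  have hcross : ∀ s, ℓ ≤ s → s + ℓ + 1 ≤ D → ∃ a ∈ w.support, ∃ b ∈ w.support,
      (f a ≤ s ∧ G.dist a (p (f a)) ≤ ℓ + 1) ∧ s < f b ∧ G.dist b (p (f b)) ≤ ℓ + 1 := by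
    intro s hs hsD
    obtain ⟨a, ha, b, hb, hab, hfa, hfb, hshort⟩ := exists_adj_crossing (s := s)
      (fun u v huv hlong => by
        have := hp.index_of_adj_of_add_lt hG hfree hf huv hlong
        omega) hw
    have := hp.dist_le_of_adj_of_lt hG hfree hD hf hab hs hsD hfa hfb hshort
    exact ⟨a, ha, b, hb, ⟨hfa, this.1⟩, hfb, this.2⟩
  obtain ⟨a, ha, -, -, ⟨hfa, hda⟩, -⟩ := hcross ℓ le_rfl (by omega)
  obtain ⟨-, -, b, hb, -, hfb, hdb⟩ := hcross (D - ℓ - 1) (by omega) (by omega)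
  have hab := two_mul_dist_le_length_of_mem_support w ha hb
  have hdist := dist_le_add_add hG a b (p (f a)) (p (f b))
  rw [hp (by omega) (hf b).1] at hdist
  omega

end IsGeodesicSeq

lemma hasCycleDecomp_of_not_exists_isGeodesicTripod [Finite V] (hG : G.Connected)
    (hfree : ¬ ∃ leg, IsGeodesicTripod G (ℓ + 1) leg) : HasCycleDecomp G (6 * ℓ + 2) := by
  have := hG.nonempty
  obtain ⟨⟨a, b⟩, hmax⟩ := Finite.exists_max fun x : V × V => G.dist x.1 x.2
  have hdiam : ∀ u v, G.dist u v ≤ G.dist a b := fun u v => hmax (u, v)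
  rcases Nat.lt_or_ge (6 * ℓ + 2) (G.dist a b) with hD | hD
  swap
  · exact hasCycleDecomp_of_dist_le hG fun v => (hdiam a v).trans hD
  obtain ⟨p, -, -, hp⟩ := exists_isGeodesicSeq hG a b
  have hπ := isNearestIndex_nearestIndex (G := G) (p := p) (S := Set.Iic (G.dist a b))
    ⟨0, Nat.zero_le _⟩
  by_cases hshort : ∀ u v, G.Adj u v → nearestIndex G p (Set.Iic (G.dist a b)) v ≤
      nearestIndex G p (Set.Iic (G.dist a b)) u + (2 * ℓ + 2)
  · exact (hp.hasCycleDecomp hG (hp.dist_le hG hfree hD hdiam hπ hshort) hshort).mono (by omega)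
  · push Not at hshort
    obtain ⟨u, v, huv, hlong⟩ := hshort
    obtain ⟨w₀, hw₀⟩ := hp.exists_walkSum_jump_ne_zero hG (by omega) huv hlong
    obtain ⟨x, w, hw⟩ := exists_isSystole w₀ hw₀
    have hlen := hp.le_length_of_walkSum_jump_ne_zero hG hfree hD hπ hw.walkSum_ne_zero
    have hlen₃ := hw.three_le_length jump_swap
    have hc := hw.isGeodesicCycle hG jump_swap
    exact (hc.hasCycleDecomp hG hlen₃ (hc.dist_nearestIndex_le hG hfree (by omega))).mono (by omega)

end Connected

theorem radial_cycle_width_upper_bound_general {V : Type*} [Finite V] (ℓ : ℕ) (G : SimpleGraph V)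
    (hclaw : ¬ ContainsQuasiGeodesicSubdivGE G ℓ clawGraph 3) :
    ∃ (n : ℕ) (Hg : SimpleGraph (Fin n)) (B : Fin n → Set V),
      IsUnionOfCycles Hg ∧ IsGraphDecomp G Hg B ∧
      ∀ h, radiusLE (G.induce (B h)) (6 * ℓ + 2) :=
  exists_isUnionOfCycles_decomp fun c =>
    hasCycleDecomp_of_not_exists_isGeodesicTripod c.connected_toSimpleGraph fun ⟨_, hleg⟩ =>
      hclaw hleg.of_induce_supp.containsQuasiGeodesicSubdivGE

/-- Let `k : ℕ`. If a graph `G` contains no `(≥ 3k)`-subdivision of the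
claw `K_{1,3}` as a `3`-quasi-geodesic subgraph, then `G` has radial cycle-width at most
`18k + 2`. -/
theorem radial_cycle_width_upper_bound
    {V : Type*} [Fintype V] (k : ℕ) (G : SimpleGraph V)
    (hclaw : ¬ ContainsQuasiGeodesicSubdivGE G (3 * k) clawGraph 3) :
    ∃ (n : ℕ) (Hg : SimpleGraph (Fin n)) (B : Fin n → Set V),
      IsUnionOfCycles Hg ∧ IsGraphDecomp G Hg B ∧
      ∀ h, radiusLE (G.induce (B h)) (18 * k + 2) := by
  have h := radial_cycle_width_upper_bound_general (3 * k) G hclaw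
  rwa [← mul_assoc] at h

end RadialPaper
end

section
/- Let k ∈ ℕ. If a graph G contains no (≥k)-subdivision of the triangle K³ as a geodesic subgraph and no (≥3k)-subdivision of the wrench graph W as a 3-quasi-geodesic subgraph, then G has radial star-width at most 72k + 14. -/
open SimpleGraph

namespace RadialPaper

variable {V W N : Type*}

/-!
Let `s` be a longest geodesic of a connected graph `G`. As there is no wrench, the vertices far
from `s` are attached, through geodesics leading away from `s`, to feet that lie in one short
window of `s` or near the ends of `s`; the centre of `G` is chosen in this window. Consider a
component of the graph of vertices far from the centre, and two of its vertices `u`, `v` at the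
same distance from the centre. If `v` were far from `u`, then the component of `v` outside the
tube around a geodesic to `u` would be attached to that tube at two places far apart. A closed
walk through both places crosses from the one to the other an odd number of times, and splitting
it along shortcuts preserves this parity, so that a geodesic cycle longer than those admitted by
the absence of a subdivided triangle would remain. Hence the far layers of every such component
have small diameter. The ball around the centre and, for each such component, the sequence of its
layers, all enlarged by balls to bound their radius, form a decomposition modelled on a subdivided
star.
-/

section Sequences

variable {G : SimpleGraph V} {s : ℕ → V} {i j n : ℕ}

lemma exists_walk_support_eq_map (h : ∀ i < n, G.Adj (s i) (s (i + 1))) :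
    ∃ p : G.Walk (s 0) (s n), p.support = (List.range (n + 1)).map s ∧
      p.edges = (List.range n).map fun i => s(s i, s (i + 1)) := by
  induction n with
  | zero => exact ⟨Walk.nil, by simp⟩
  | succ n ih =>
    obtain ⟨p, hp, hp'⟩ := ih fun i hi => h i (by omega)
    refine ⟨p.concat (h n n.lt_succ_self), ?_, ?_⟩
    · rw [Walk.support_concat, hp, List.range_succ (n := n + 1)]
      simp
    · rw [Walk.edges_concat, hp', List.range_succ (n := n)]
      simp

lemma exists_walk_length_eq_sub (h : ∀ i < n, G.Adj (s i) (s (i + 1))) (hij : i ≤ j)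
    (hj : j ≤ n) : ∃ p : G.Walk (s i) (s j), p.length = j - i := by
  induction j, hij using Nat.le_induction with
  | base => exact ⟨Walk.nil, by simp⟩
  | succ j hij ih =>
    obtain ⟨p, hp⟩ := ih (by omega)
    exact ⟨p.concat (h j hj), by rw [Walk.length_concat, hp]; omega⟩

lemma reachable_of_adj (hij : i ≤ j) (h : ∀ m, i ≤ m → m < j → G.Adj (s m) (s (m + 1))) :
    G.Reachable (s i) (s j) := by
  induction j, hij using Nat.le_induction with
  | base => exact .rfl
  | succ j hij ih =>
    exact (ih fun m hm hm' => h m hm (by omega)).trans (h j hij j.lt_succ_self).reachable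

/-- The vertices `s 0, …, s n` form a geodesic of `G`. The values of `s` beyond `n` are irrelevant;
writing the distance as `max i j - min i j` keeps the definition symmetric in `i` and `j`. -/
structure IsGeodesicSeq_s4 (G : SimpleGraph V) (s : ℕ → V) (n : ℕ) : Prop where
  adj : ∀ i < n, G.Adj (s i) (s (i + 1))
  dist_eq : ∀ i ≤ n, ∀ j ≤ n, G.dist (s i) (s j) = max i j - min i j

lemma isGeodesicSeq_of_le_dist (h : ∀ i < n, G.Adj (s i) (s (i + 1)))
    (hn : n ≤ G.dist (s 0) (s n)) : IsGeodesicSeq_s4 G s n := by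
  have of_le : ∀ i j, i ≤ j → j ≤ n → G.dist (s i) (s j) = j - i := fun i j hij hj => by
    obtain ⟨p, hp⟩ := exists_walk_length_eq_sub h (Nat.zero_le i) (hij.trans hj)
    obtain ⟨q, hq⟩ := exists_walk_length_eq_sub h hij hj
    obtain ⟨r, hr⟩ := exists_walk_length_eq_sub h hj le_rfl
    have hp' := dist_le p
    have hq' := dist_le q
    have hr' := dist_le r
    have h₁ := p.reachable.dist_triangle_left (s n)
    have h₂ := q.reachable.dist_triangle_left (s n)
    omega
  refine ⟨h, fun i hi j hj => ?_⟩
  rcases le_total i j with hij | hij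
  · rw [of_le i j hij hj, max_eq_right hij, min_eq_left hij]
  · rw [dist_comm, of_le j i hij hi, max_eq_left hij, min_eq_right hij]

lemma exists_isGeodesicSeq_s4 {x y : V} (h : G.Reachable x y) :
    ∃ s, IsGeodesicSeq_s4 G s (G.dist x y) ∧ s 0 = x ∧ s (G.dist x y) = y := by
  obtain ⟨p, hp⟩ := h.exists_walk_length_eq_dist
  rw [← hp]
  refine ⟨p.getVert, isGeodesicSeq_of_le_dist (fun i hi => p.adj_getVert_succ hi) ?_,
    p.getVert_zero, p.getVert_length⟩
  rw [p.getVert_zero, p.getVert_length, hp]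

namespace IsGeodesicSeq_s4

lemma injOn_s4 (hs : IsGeodesicSeq_s4 G s n) : Set.InjOn s (Set.Iic n) := fun i hi j hj h => by
  have := hs.dist_eq i hi j hj
  rw [h, dist_self] at this
  omega

lemma exists_walk_of_adj {H : SimpleGraph V} (hs : IsGeodesicSeq_s4 G s n)
    (hH : ∀ i < n, H.Adj (s i) (s (i + 1))) {i j : ℕ} (hi : i ≤ n) (hj : j ≤ n) :
    ∃ p : H.Walk (s i) (s j), p.length = G.dist (s i) (s j) := by
  rw [hs.dist_eq i hi j hj]
  rcases le_total i j with hij | hij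
  · obtain ⟨p, hp⟩ := exists_walk_length_eq_sub hH hij hj
    exact ⟨p, by omega⟩
  · obtain ⟨p, hp⟩ := exists_walk_length_eq_sub hH hij hi
    exact ⟨p.reverse, by rw [Walk.length_reverse]; omega⟩

lemma reachable (hs : IsGeodesicSeq_s4 G s n) {i j : ℕ} (hi : i ≤ n) (hj : j ≤ n) :
    G.Reachable (s i) (s j) :=
  (hs.exists_walk_of_adj hs.adj hi hj).nonempty

lemma reverse (hs : IsGeodesicSeq_s4 G s n) : IsGeodesicSeq_s4 G (fun i => s (n - i)) n where
  adj i hi := by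
    have := hs.adj (n - (i + 1)) (by omega)
    rw [show n - (i + 1) + 1 = n - i by omega] at this
    exact this.symm
  dist_eq i hi j hj := by
    rw [hs.dist_eq _ (Nat.sub_le n i) _ (Nat.sub_le n j)]
    omega

end IsGeodesicSeq_s4

end Sequences

section Subdivisions

variable {E : Type*} {G : SimpleGraph V} {X : SimpleGraph W}

lemma exists_symmetric_walk_family {f : W → V} {src tgt : E → W}
    (q : ∀ e, G.Walk (f (src e)) (f (tgt e)))
    (hX : ∀ u v, X.Adj u v ↔ ∃ e, s(src e, tgt e) = s(u, v))
    (hE : Function.Injective fun e => s(src e, tgt e)) :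
    ∃ p : ∀ ⦃u v : W⦄, X.Adj u v → G.Walk (f u) (f v),
      (∀ e (h : X.Adj (src e) (tgt e)), p h = q e) ∧
      ∀ ⦃u v⦄ (h : X.Adj u v), p h.symm = (p h).reverse := by
  classical
  have exists_bwd : ∀ {u v}, X.Adj u v → (¬ ∃ e, src e = u ∧ tgt e = v) →
      ∃ e, src e = v ∧ tgt e = u := fun {u v} h hne => by
    obtain ⟨e, he⟩ := (hX u v).1 h
    rcases Sym2.eq_iff.1 he with he | he
    exacts [absurd ⟨e, he⟩ hne, ⟨e, he⟩]
  have copy_eq : ∀ {e e' : E} (hu : src e' = src e) (hv : tgt e' = tgt e),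
      (q e').copy (congrArg f hu) (congrArg f hv) = q e := fun {e e'} hu hv => by
    obtain rfl : e' = e := hE (by simp only [hu, hv])
    rfl
  refine ⟨fun u v h => if hf : ∃ e, src e = u ∧ tgt e = v then
      (q hf.choose).copy (congrArg f hf.choose_spec.1) (congrArg f hf.choose_spec.2)
    else ((q (exists_bwd h hf).choose).copy (congrArg f (exists_bwd h hf).choose_spec.1)
      (congrArg f (exists_bwd h hf).choose_spec.2)).reverse, fun e h => ?_, fun u v h => ?_⟩
  · have hf : ∃ e', src e' = src e ∧ tgt e' = tgt e := ⟨e, rfl, rfl⟩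
    simp only [dif_pos hf]
    exact copy_eq hf.choose_spec.1 hf.choose_spec.2
  · by_cases hf : ∃ e, src e = u ∧ tgt e = v
    · have hb : ¬ ∃ e, src e = v ∧ tgt e = u := by
        rintro ⟨e, rfl, rfl⟩
        obtain ⟨e', hu, hv⟩ := hf
        obtain rfl : e' = e := hE (by simp only [hu, hv, Sym2.eq_swap])
        exact h.ne hv
      simp only [dif_pos hf, dif_neg hb]
    · have hb := exists_bwd h hf
      simp only [dif_neg hf, dif_pos hb, Walk.reverse_reverse]

/-- Sequences of vertices of `G` that form the subdivided edges of a `(≥ k)`-subdivision of `X`: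
the branch vertices are the `branch w`, and the edge of `X` indexed by `e`, oriented from `src e`
to `tgt e`, is replaced by the path `pt e 0, …, pt e (len e)`. -/
structure SubdivisionData (G : SimpleGraph V) (X : SimpleGraph W) (k : ℕ) (E : Type*) where
  branch : W → V
  src : E → W
  tgt : E → W
  len : E → ℕ
  pt : E → ℕ → V
  adj_iff : ∀ u v, X.Adj u v ↔ ∃ e, s(src e, tgt e) = s(u, v)
  edge_injective : Function.Injective fun e => s(src e, tgt e)
  branch_injective : Function.Injective branch
  pt_zero : ∀ e, pt e 0 = branch (src e)
  pt_len : ∀ e, pt e (len e) = branch (tgt e)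
  adj : ∀ e, ∀ i < len e, G.Adj (pt e i) (pt e (i + 1))
  lt_len : ∀ e, k < len e
  pt_ne_branch : ∀ e i w, 0 < i → i < len e → pt e i ≠ branch w
  pt_inj : ∀ e e' i i', 0 < i → i < len e → 0 < i' → i' < len e' → pt e i = pt e' i' →
    e = e' ∧ i = i'

namespace SubdivisionData

variable {k : ℕ} (S : SubdivisionData G X k E)

lemma adj_src_tgt (e : E) : X.Adj (S.src e) (S.tgt e) := (S.adj_iff _ _).2 ⟨e, rfl⟩

lemma end_of_pt_eq_branch {e : E} {i : ℕ} {w : W} (hi : i ≤ S.len e)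
    (h : S.pt e i = S.branch w) : i = 0 ∧ w = S.src e ∨ i = S.len e ∧ w = S.tgt e := by
  rcases Nat.eq_zero_or_pos i with rfl | hpos
  · exact Or.inl ⟨rfl, S.branch_injective (h.symm.trans (S.pt_zero e))⟩
  · rcases hi.eq_or_lt with rfl | hlt
    · exact Or.inr ⟨rfl, S.branch_injective (h.symm.trans (S.pt_len e))⟩
    · exact absurd h (S.pt_ne_branch e i w hpos hlt)

lemma exists_branch_or_inner {e : E} {i : ℕ} (hi : i ≤ S.len e) :
    (∃ w, S.pt e i = S.branch w) ∨ 0 < i ∧ i < S.len e := by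
  rcases Nat.eq_zero_or_pos i with rfl | hpos
  · exact Or.inl ⟨_, S.pt_zero e⟩
  · rcases hi.eq_or_lt with rfl | hlt
    exacts [Or.inl ⟨_, S.pt_len e⟩, Or.inr ⟨hpos, hlt⟩]

lemma pt_injOn (e : E) : Set.InjOn (S.pt e) (Set.Iic (S.len e)) := fun i hi j hj h => by
  have hne := (S.adj_src_tgt e).ne
  rcases S.exists_branch_or_inner hi with ⟨w, hw⟩ | ⟨hi₀, hi₁⟩
  · rcases S.end_of_pt_eq_branch hi hw with ⟨rfl, rfl⟩ | ⟨rfl, rfl⟩ <;>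
      rcases S.end_of_pt_eq_branch hj (h.symm.trans hw) with ⟨hj', hw'⟩ | ⟨hj', hw'⟩
    exacts [hj'.symm, absurd hw' hne, absurd hw' hne.symm, hj'.symm]
  · rcases S.exists_branch_or_inner hj with ⟨w, hw⟩ | ⟨hj₀, hj₁⟩
    · exact absurd (h.trans hw) (S.pt_ne_branch e i w hi₀ hi₁)
    · exact (S.pt_inj e e i j hi₀ hi₁ hj₀ hj₁ h).2

lemma exists_path (e : E) : ∃ q : G.Walk (S.branch (S.src e)) (S.branch (S.tgt e)),
    q.IsPath ∧ k + 1 ≤ q.length ∧ (∀ x, x ∈ q.support ↔ ∃ i ≤ S.len e, S.pt e i = x) ∧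
    ∀ z, z ∈ q.edges ↔ ∃ i < S.len e, s(S.pt e i, S.pt e (i + 1)) = z := by
  obtain ⟨p, hp, hp'⟩ := exists_walk_support_eq_map (S.adj e)
  refine ⟨p.copy (S.pt_zero e) (S.pt_len e), ?_, ?_, fun x => ?_, fun z => ?_⟩
  · rw [Walk.isPath_copy, Walk.isPath_def, hp]
    refine List.Nodup.map_on (fun i hi j hj => S.pt_injOn e ?_ ?_) List.nodup_range
    exacts [Nat.le_of_lt_succ (List.mem_range.1 hi), Nat.le_of_lt_succ (List.mem_range.1 hj)]
  · rw [Walk.length_copy, ← Walk.length_edges, hp', List.length_map, List.length_range]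
    exact S.lt_len e
  · simp only [Walk.support_copy, hp, List.mem_map, List.mem_range, Nat.lt_succ_iff]
  · simp only [Walk.edges_copy, hp', List.mem_map, List.mem_range]

/-- The subgraph formed by the branch vertices and the subdivided edges. -/
def subgraph : G.Subgraph where
  verts := {x | (∃ w, S.branch w = x) ∨ ∃ e, ∃ i ≤ S.len e, S.pt e i = x}
  Adj x y := ∃ e, ∃ i < S.len e, s(S.pt e i, S.pt e (i + 1)) = s(x, y)
  adj_sub := by
    rintro x y ⟨e, i, hi, h⟩
    rw [← SimpleGraph.mem_edgeSet, ← h]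
    exact S.adj e i hi
  edge_vert := by
    rintro x y ⟨e, i, hi, h⟩
    rcases Sym2.eq_iff.1 h with ⟨rfl, -⟩ | ⟨-, rfl⟩
    exacts [Or.inr ⟨e, i, hi.le, rfl⟩, Or.inr ⟨e, i + 1, hi, rfl⟩]
  symm := ⟨fun x y ⟨e, i, hi, h⟩ => ⟨e, i, hi, h.trans Sym2.eq_swap⟩⟩

lemma exists_walk_family :
    ∃ p : ∀ ⦃u v : W⦄, X.Adj u v → G.Walk (S.branch u) (S.branch v),
      (∀ ⦃u v⦄ (h : X.Adj u v), p h.symm = (p h).reverse) ∧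
      ∀ ⦃u v⦄ (h : X.Adj u v), (p h).IsPath ∧ k + 1 ≤ (p h).length ∧
        ∃ e, s(S.src e, S.tgt e) = s(u, v) ∧
          (∀ x, x ∈ (p h).support ↔ ∃ i ≤ S.len e, S.pt e i = x) ∧
          ∀ z, z ∈ (p h).edges ↔ ∃ i < S.len e, s(S.pt e i, S.pt e (i + 1)) = z := by
  choose q hpath hlen hsupp hedges using S.exists_path
  obtain ⟨p, hpq, hsymm⟩ := exists_symmetric_walk_family q S.adj_iff S.edge_injective
  have fwd : ∀ e, p (S.adj_src_tgt e) = q e := fun e => hpq e _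
  have bwd : ∀ e, p (S.adj_src_tgt e).symm = (q e).reverse := fun e => by
    rw [hsymm (S.adj_src_tgt e), fwd]
  refine ⟨p, hsymm, fun u v h => ?_⟩
  obtain ⟨e, he⟩ := (S.adj_iff u v).1 h
  rcases Sym2.eq_iff.1 he with ⟨rfl, rfl⟩ | ⟨rfl, rfl⟩
  · rw [fwd e]
    exact ⟨hpath e, hlen e, e, rfl, hsupp e, hedges e⟩
  · rw [bwd e, Walk.length_reverse]
    refine ⟨(hpath e).reverse, hlen e, e, Sym2.eq_swap, ?_⟩
    simp only [Walk.support_reverse, Walk.edges_reverse, List.mem_reverse]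
    exact ⟨hsupp e, hedges e⟩

lemma eq_or_eq_of_pt_eq_branch {e : E} {i : ℕ} {u v w : W} (he : s(S.src e, S.tgt e) = s(u, v))
    (hi : i ≤ S.len e) (h : S.pt e i = S.branch w) : w = u ∨ w = v := by
  rw [← Sym2.mem_iff, ← he, Sym2.mem_iff]
  exact (S.end_of_pt_eq_branch hi h).imp And.right And.right

lemma exists_branch_of_pt_eq_pt {e e' : E} {i i' : ℕ} (hne : e ≠ e') (hi : i ≤ S.len e)
    (hi' : i' ≤ S.len e') (h : S.pt e i = S.pt e' i') : ∃ w, S.pt e i = S.branch w := by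
  rcases S.exists_branch_or_inner hi with hw | ⟨hi₀, hi₁⟩
  · exact hw
  rcases S.exists_branch_or_inner hi' with ⟨w, hw⟩ | ⟨hi'₀, hi'₁⟩
  · exact ⟨w, h.trans hw⟩
  exact absurd (S.pt_inj e e' i i' hi₀ hi₁ hi'₀ hi'₁ h).1 hne

lemma isSubdivGE : IsSubdivGE k X S.subgraph := by
  obtain ⟨p, hsymm, hp⟩ := S.exists_walk_family
  have edge_eq : ∀ {e e'}, s(S.src e', S.tgt e') = s(S.src e, S.tgt e) → e' = e :=
    fun h => S.edge_injective h
  refine ⟨S.branch, p, S.branch_injective, fun u v h => (hp h).1, fun u v h => (hp h).2.1, hsymm,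
    fun u v h w hw => ?_, fun u v u' v' h h' hne x hx hx' => ?_, Set.ext fun x => ?_,
    Set.ext fun z => ?_⟩
  · obtain ⟨-, -, e, he, hsupp, -⟩ := hp h
    obtain ⟨i, hi, hiw⟩ := (hsupp _).1 hw
    exact S.eq_or_eq_of_pt_eq_branch he hi hiw
  · obtain ⟨-, -, e, he, hsupp, -⟩ := hp h
    obtain ⟨-, -, e', he', hsupp', -⟩ := hp h'
    obtain ⟨i, hi, rfl⟩ := (hsupp _).1 hx
    obtain ⟨i', hi', hii'⟩ := (hsupp' _).1 hx'
    have hee' : e ≠ e' := by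
      rintro rfl
      exact hne (he.symm.trans he')
    obtain ⟨w, hw⟩ := S.exists_branch_of_pt_eq_pt hee' hi hi' hii'.symm
    rw [hw]
    exact ⟨(S.eq_or_eq_of_pt_eq_branch he hi hw).imp (congrArg _) (congrArg _),
      (S.eq_or_eq_of_pt_eq_branch he' hi' (hii'.trans hw)).imp (congrArg _) (congrArg _)⟩
  · refine or_congr_right ⟨fun ⟨e, h⟩ => ⟨_, _, S.adj_src_tgt e, ?_⟩, fun ⟨u, v, h, hx⟩ => ?_⟩
    · obtain ⟨-, -, e', he', hsupp, -⟩ := hp (S.adj_src_tgt e)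
      obtain rfl := edge_eq he'
      exact (hsupp x).2 h
    · obtain ⟨-, -, e, -, hsupp, -⟩ := hp h
      exact ⟨e, (hsupp x).1 hx⟩
  · induction z using Sym2.ind with | _ x y => ?_
    refine ⟨fun ⟨e, h⟩ => ⟨_, _, S.adj_src_tgt e, ?_⟩, fun ⟨u, v, h, hz⟩ => ?_⟩
    · obtain ⟨-, -, e', he', -, hedges⟩ := hp (S.adj_src_tgt e)
      obtain rfl := edge_eq he'
      exact (hedges _).2 h
    · obtain ⟨-, -, e, -, -, hedges⟩ := hp h
      exact ⟨e, (hedges _).1 hz⟩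

end SubdivisionData

lemma edist_coe_le_length (Y : G.Subgraph) {x y : V} (p : Y.spanningCoe.Walk x y)
    (hx : x ∈ Y.verts) (hy : y ∈ Y.verts) : Y.coe.edist ⟨x, hx⟩ ⟨y, hy⟩ ≤ p.length := by
  induction p with
  | nil => simp only [edist_self, Walk.length_nil, Nat.cast_zero, le_refl]
  | @cons u v w h p ih =>
    have hv : v ∈ Y.verts := Subgraph.Adj.snd_mem h
    have huv : Y.coe.edist ⟨u, hx⟩ ⟨v, hv⟩ = 1 := edist_eq_one_iff_adj.2 h
    calc Y.coe.edist ⟨u, hx⟩ ⟨w, hy⟩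
        ≤ Y.coe.edist ⟨u, hx⟩ ⟨v, hv⟩ + Y.coe.edist ⟨v, hv⟩ ⟨w, hy⟩ := SimpleGraph.edist_triangle
      _ ≤ 1 + p.length := add_le_add huv.le (ih hv hy)
      _ = (Walk.cons h p).length := by rw [Walk.length_cons, Nat.cast_add, Nat.cast_one, add_comm]

lemma isQuasiGeodesic_of_exists_walk {Y : G.Subgraph} {c : ℕ}
    (h : ∀ x ∈ Y.verts, ∀ y ∈ Y.verts, ∃ p : Y.spanningCoe.Walk x y, p.length ≤ c * G.dist x y) :
    IsQuasiGeodesic G Y c := by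
  rintro ⟨x, hx⟩ ⟨y, hy⟩
  obtain ⟨p, hp⟩ := h x hx y hy
  have hreach : G.Reachable x y := Reachable.mono (Subgraph.spanningCoe_le Y) ⟨p⟩
  rw [← hreach.coe_dist_eq_edist]
  exact (edist_coe_le_length Y p hx hy).trans (by exact_mod_cast hp)

end Subdivisions

section GeodesicCycles

variable {G : SimpleGraph V} {v : V} {k : ℕ}

/-- Every geodesic cycle of `G` has length at most `ℓ`. A cycle is given as a closed walk that is
nowhere shortened by `G`; this makes it injective, so nothing else is required of it. -/
def GeodesicCyclesLE (G : SimpleGraph V) (ℓ : ℕ) : Prop :=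
  ∀ (v : V) (p : G.Walk v v), (∀ i j, i ≤ j → j ≤ p.length →
    min (j - i) (p.length - (j - i)) ≤ G.dist (p.getVert i) (p.getVert j)) → p.length ≤ ℓ

/-- A closed walk without repeated vertices, split at its positions `0`, `k + 1`, `2 * k + 2`. -/
def cycleSubdivision (p : G.Walk v v) (hinj : Set.InjOn p.getVert (Set.Iio p.length))
    (hp : 3 * k + 3 ≤ p.length) : SubdivisionData G triangleGraph k (Fin 3) :=
  let b : Fin 3 → ℕ := ![0, k + 1, 2 * k + 2]
  let len : Fin 3 → ℕ := ![k + 1, k + 1, p.length - (2 * k + 2)]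
  have b_lt : ∀ w, b w < p.length := fun w => by fin_cases w <;> simp [b] <;> omega
  have b_add_lt : ∀ e i, i < len e → b e + i < p.length := fun e i hi => by
    fin_cases e <;> simp [b, len] at hi ⊢ <;> omega
  { branch w := p.getVert (b w)
    src e := e
    tgt e := e + 1
    len := len
    pt e i := p.getVert (b e + i)
    adj_iff u v := by
      simp only [triangleGraph, top_adj]
      revert u v
      decide
    edge_injective := by decide
    branch_injective u v h := by
      have := hinj (b_lt u) (b_lt v) h
      fin_cases u <;> fin_cases v <;> simp [b] at this ⊢ <;> omega
    pt_zero e := rfl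
    pt_len e := by
      fin_cases e
      · simp [b, len]
      · simp [b, len, show k + 1 + (k + 1) = 2 * k + 2 by omega]
      · simp [b, len, show 2 * k + 2 + (p.length - (2 * k + 2)) = p.length by omega]
    adj e i hi := p.adj_getVert_succ (b_add_lt e i hi)
    lt_len e := by fin_cases e <;> simp [len]; omega
    pt_ne_branch e i w hi₀ hi h := by
      have := hinj (b_add_lt e i hi) (b_lt w) h
      fin_cases e <;> fin_cases w <;> simp [b, len] at this hi <;> omega
    pt_inj e e' i i' hi₀ hi hi'₀ hi' h := by
      have := hinj (b_add_lt e i hi) (b_add_lt e' i' hi') h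
      fin_cases e <;> fin_cases e' <;> simp [b, len] at this hi hi' ⊢ <;> omega }

variable {p : G.Walk v v} {hinj : Set.InjOn p.getVert (Set.Iio p.length)}
  {hp : 3 * k + 3 ≤ p.length}

lemma adj_cycleSubdivision {i : ℕ} (hi : i < p.length) :
    (cycleSubdivision p hinj hp).subgraph.spanningCoe.Adj (p.getVert i) (p.getVert (i + 1)) := by
  rcases lt_or_ge i (k + 1) with h₁ | h₁
  · exact ⟨0, i, h₁, by simp [cycleSubdivision]⟩
  · obtain ⟨i, rfl⟩ := Nat.exists_eq_add_of_le h₁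
    rcases lt_or_ge i (k + 1) with h₂ | h₂
    · exact ⟨1, i, h₂, by simp [cycleSubdivision, add_assoc]⟩
    · obtain ⟨i, rfl⟩ := Nat.exists_eq_add_of_le h₂
      refine ⟨2, i, by simp [cycleSubdivision]; omega, ?_⟩
      simp [cycleSubdivision, two_mul, add_assoc, add_left_comm, add_comm]

lemma exists_getVert_of_mem_cycleSubdivision {x : V}
    (hx : x ∈ (cycleSubdivision p hinj hp).subgraph.verts) : ∃ i ≤ p.length, p.getVert i = x := by
  rcases hx with ⟨w, rfl⟩ | ⟨e, i, hi, rfl⟩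
  · exact ⟨_, by fin_cases w <;> simp <;> omega, rfl⟩
  · exact ⟨_, by fin_cases e <;> simp [cycleSubdivision] at hi ⊢ <;> omega, rfl⟩

lemma geodesicCyclesLE_of_not_contains
    (h : ¬ ContainsQuasiGeodesicSubdivGE G k triangleGraph 1) : GeodesicCyclesLE G (3 * k + 2) := by
  intro v p hgeo
  by_contra! hp
  have inj_of_le : ∀ i j, i ≤ j → j < p.length → p.getVert i = p.getVert j → i = j := by
    intro i j hij hj heq
    have := hgeo i j hij hj.le
    rw [heq, dist_self] at this
    omega
  have hinj : Set.InjOn p.getVert (Set.Iio p.length) := fun i hi j hj heq =>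
    (le_total i j).elim (inj_of_le i j · hj heq) fun hij => (inj_of_le j i hij hi heq.symm).symm
  let S := cycleSubdivision p hinj hp
  have exists_walk : ∀ i j, i ≤ j → j ≤ p.length →
      ∃ q : S.subgraph.spanningCoe.Walk (p.getVert i) (p.getVert j),
        q.length ≤ G.dist (p.getVert i) (p.getVert j) := by
    intro i j hij hj
    have hadj : ∀ i < p.length, S.subgraph.spanningCoe.Adj (p.getVert i) (p.getVert (i + 1)) :=
      fun i hi => adj_cycleSubdivision hi
    have hle := hgeo i j hij hj
    obtain ⟨q, hq⟩ := exists_walk_length_eq_sub hadj hij hj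
    obtain ⟨q₁, hq₁⟩ := exists_walk_length_eq_sub hadj (Nat.zero_le i) (hij.trans hj)
    obtain ⟨q₂, hq₂⟩ := exists_walk_length_eq_sub hadj hj le_rfl
    rcases min_le_iff.1 hle with hle | hle
    · exact ⟨q, hq.trans_le hle⟩
    · have hclosed : p.getVert p.length = p.getVert 0 := by rw [p.getVert_length, p.getVert_zero]
      refine ⟨q₁.reverse.append (q₂.reverse.copy hclosed rfl), ?_⟩
      rw [Walk.length_append, Walk.length_copy, Walk.length_reverse, Walk.length_reverse]
      omega
  refine h ⟨S.subgraph, S.isSubdivGE, isQuasiGeodesic_of_exists_walk fun x hx y hy => ?_⟩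
  obtain ⟨i, hi, rfl⟩ := exists_getVert_of_mem_cycleSubdivision hx
  obtain ⟨j, hj, rfl⟩ := exists_getVert_of_mem_cycleSubdivision hy
  rw [one_mul]
  rcases le_total i j with hij | hij
  · exact exists_walk i j hij hj
  · obtain ⟨q, hq⟩ := exists_walk j i hij hi
    exact ⟨q.reverse, by rwa [Walk.length_reverse, dist_comm]⟩

end GeodesicCycles

section Wrenches

variable {G H : SimpleGraph V} {s q r : ℕ → V} {n i j k ℓ : ℕ}

lemma le_dist_of_leg (hq : IsGeodesicSeq_s4 G q ℓ) {x : V} (hx : ℓ ≤ G.dist (q ℓ) x) {m : ℕ}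
    (hm : m ≤ ℓ) : m ≤ G.dist (q m) x := by
  have h₁ := (hq.reachable le_rfl hm).dist_triangle_left x
  have h₂ := hq.dist_eq ℓ le_rfl m hm
  omega

lemma leg_ne_spine (hq : IsGeodesicSeq_s4 G q ℓ) (hfar : ∀ p ≤ n, ℓ ≤ G.dist (q ℓ) (s p)) {m p : ℕ}
    (hm₀ : 0 < m) (hm : m ≤ ℓ) (hp : p ≤ n) : q m ≠ s p := fun heq => by
  have := le_dist_of_leg hq (hfar p hp) hm
  rw [heq, dist_self] at this
  omega

lemma exists_walk_leg_to_spine (hs : IsGeodesicSeq_s4 G s n) (hq : IsGeodesicSeq_s4 G q ℓ)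
    (hqs : q 0 = s i) (hi : i ≤ n) (hfar : ∀ p ≤ n, ℓ ≤ G.dist (q ℓ) (s p))
    (hsH : ∀ p < n, H.Adj (s p) (s (p + 1))) (hqH : ∀ m < ℓ, H.Adj (q m) (q (m + 1)))
    {m p : ℕ} (hm : m ≤ ℓ) (hp : p ≤ n) :
    ∃ w : H.Walk (q m) (s p), w.length ≤ 3 * G.dist (q m) (s p) := by
  obtain ⟨w₁, hw₁⟩ := hq.exists_walk_of_adj hqH hm (Nat.zero_le ℓ)
  obtain ⟨w₂, hw₂⟩ := hs.exists_walk_of_adj hsH hi hp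
  refine ⟨(w₁.copy rfl hqs).append w₂, ?_⟩
  rw [Walk.length_append, Walk.length_copy, hw₁, hw₂]
  have h₁ := hq.dist_eq 0 (Nat.zero_le ℓ) m hm
  have h₂ := hq.dist_eq m hm 0 (Nat.zero_le ℓ)
  have h₃ := (hq.reachable (Nat.zero_le ℓ) hm).dist_triangle_left (s p)
  have h₄ := le_dist_of_leg hq (hfar p hp) hm
  rw [← hqs]
  omega

/-- A geodesic `s` of length `n` with two legs: geodesics `q` and `r` of length `ℓ` that start at
`s i` and `s j` and lead away from `s`. The leaves `2, 3, 4, 5` of the wrench graph correspond to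
`s 0`, `q ℓ`, `s n`, `r ℓ`. -/
structure WrenchConfig (G : SimpleGraph V) (s q r : ℕ → V) (n i j ℓ : ℕ) : Prop where
  spine : IsGeodesicSeq_s4 G s n
  left : IsGeodesicSeq_s4 G q ℓ
  right : IsGeodesicSeq_s4 G r ℓ
  left_zero : q 0 = s i
  right_zero : r 0 = s j
  le_left : ℓ ≤ i
  gap : i + 4 * ℓ ≤ j
  right_le : j + ℓ ≤ n
  left_far : ∀ p ≤ n, ℓ ≤ G.dist (q ℓ) (s p)
  right_far : ∀ p ≤ n, ℓ ≤ G.dist (r ℓ) (s p)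

/-- There is no `WrenchConfig` in `G` with legs of length `ℓ`. -/
def WrenchFree (G : SimpleGraph V) (ℓ : ℕ) : Prop :=
  ∀ s q r n i j, ¬ WrenchConfig G s q r n i j ℓ

namespace WrenchConfig

/-- The vertices `(t, p)` of a wrench configuration, where `t = 0, 1, 2` stands for the spine, the
left leg and the right leg. The feet of the legs are only counted as vertices of the spine. -/
def Valid (n ℓ : ℕ) (t : Fin 3) (p : ℕ) : Prop :=
  (![p ≤ n, 0 < p ∧ p ≤ ℓ, 0 < p ∧ p ≤ ℓ] : Fin 3 → Prop) t

lemma le_dist_left_right (h : WrenchConfig G s q r n i j ℓ) {m m' : ℕ} (hm : m ≤ ℓ)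
    (hm' : m' ≤ ℓ) : j ≤ i + m + m' + G.dist (q m) (r m') := by
  have hgap := h.gap
  have hright := h.right_le
  have h₁ := h.spine.dist_eq i (by omega) j (by omega)
  have h₂ := h.left.dist_eq 0 (Nat.zero_le ℓ) m hm
  have h₃ := h.right.dist_eq m' hm' 0 (Nat.zero_le ℓ)
  have h₄ := (h.left.reachable (Nat.zero_le ℓ) hm).dist_triangle_left (r 0)
  have h₅ := (h.right.reachable hm' (Nat.zero_le ℓ)).dist_triangle_right (q m)
  rw [← h.left_zero, ← h.right_zero] at h₁
  omega

lemma left_ne_right (h : WrenchConfig G s q r n i j ℓ) {m m' : ℕ} (hm₀ : 0 < m) (hm : m ≤ ℓ)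
    (hm' : m' ≤ ℓ) : q m ≠ r m' := fun heq => by
  have := h.le_dist_left_right hm hm'
  have := h.gap
  rw [heq, dist_self] at *
  omega

lemma point_inj (h : WrenchConfig G s q r n i j ℓ) {t t' : Fin 3} {p p' : ℕ}
    (hp : Valid n ℓ t p) (hp' : Valid n ℓ t' p')
    (heq : (![s, q, r] : Fin 3 → ℕ → V) t p = (![s, q, r] : Fin 3 → ℕ → V) t' p') :
    t = t' ∧ p = p' := by
  fin_cases t <;> fin_cases t'
  · exact ⟨rfl, h.spine.injOn_s4 hp hp' heq⟩
  · exact absurd heq.symm (leg_ne_spine h.left h.left_far hp'.1 hp'.2 hp)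
  · exact absurd heq.symm (leg_ne_spine h.right h.right_far hp'.1 hp'.2 hp)
  · exact absurd heq (leg_ne_spine h.left h.left_far hp.1 hp.2 hp')
  · exact ⟨rfl, h.left.injOn_s4 hp.2 hp'.2 heq⟩
  · exact absurd heq (h.left_ne_right hp.1 hp.2 hp'.2)
  · exact absurd heq (leg_ne_spine h.right h.right_far hp.1 hp.2 hp')
  · exact absurd heq.symm (h.left_ne_right hp'.1 hp'.2 hp.2)
  · exact ⟨rfl, h.right.injOn_s4 hp.2 hp'.2 heq⟩

/-- The subdivision of the wrench graph formed by a wrench configuration. Its edges are, in this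
order, the middle part of the spine, the initial part of the spine traversed backwards, the left
leg, the final part of the spine, and the right leg. -/
def subdivision (h : WrenchConfig G s q r n i j (k + 1)) :
    SubdivisionData G wrenchGraph k (Fin 5) :=
  let point : Fin 3 → ℕ → V := ![s, q, r]
  let branchPart : Fin 6 → Fin 3 := ![0, 0, 0, 1, 0, 2]
  let branchPos : Fin 6 → ℕ := ![i, j, 0, k + 1, n, k + 1]
  let len : Fin 5 → ℕ := ![j - i, i, k + 1, n - j, k + 1]
  let part : Fin 5 → Fin 3 := ![0, 0, 1, 0, 2]
  let pos : Fin 5 → ℕ → ℕ := ![(i + ·), (i - ·), id, (j + ·), id]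
  have hleft := h.le_left
  have hgap := h.gap
  have hright := h.right_le
  have valid_branch : ∀ w, Valid n (k + 1) (branchPart w) (branchPos w) := fun w => by
    fin_cases w <;> simp [Valid, branchPart, branchPos] <;> omega
  have valid_pos : ∀ e m, 0 < m → m < len e → Valid n (k + 1) (part e) (pos e m) :=
    fun e m hm₀ hm => by fin_cases e <;> simp [Valid, part, pos, len] at hm ⊢ <;> omega
  { branch w := point (branchPart w) (branchPos w)
    src := ![0, 0, 0, 1, 1]
    tgt := ![1, 2, 3, 4, 5]
    len := len
    pt e m := point (part e) (pos e m)
    adj_iff u v := by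
      simp only [wrenchGraph, fromRel_adj]
      revert u v
      decide
    edge_injective := by decide
    branch_injective u v heq := by
      have := h.point_inj (valid_branch u) (valid_branch v) heq
      fin_cases u <;> fin_cases v <;> simp [branchPart, branchPos] at this ⊢ <;> omega
    pt_zero e := by
      fin_cases e <;> simp [point, part, pos, branchPart, branchPos, h.left_zero, h.right_zero]
    pt_len e := by
      fin_cases e <;> simp [point, part, pos, branchPart, branchPos, len] <;> congr 1 <;> omega
    adj e m hm := by
      fin_cases e
      · replace hm : m < j - i := hm
        exact h.spine.adj (i + m) (by omega)
      · replace hm : m < i := hm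
        have := h.spine.adj (i - (m + 1)) (by omega)
        rw [show i - (m + 1) + 1 = i - m by omega] at this
        exact this.symm
      · exact h.left.adj m hm
      · replace hm : m < n - j := hm
        exact h.spine.adj (j + m) (by omega)
      · exact h.right.adj m hm
    lt_len e := by fin_cases e <;> simp [len] <;> omega
    pt_ne_branch e m w hm₀ hm heq := by
      have := h.point_inj (valid_pos e m hm₀ hm) (valid_branch w) heq
      fin_cases e <;> fin_cases w <;>
        simp [len, part, pos, branchPart, branchPos] at this hm <;> omega
    pt_inj e e' m m' hm₀ hm hm'₀ hm' heq := by
      have := h.point_inj (valid_pos e m hm₀ hm) (valid_pos e' m' hm'₀ hm') heq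
      fin_cases e <;> fin_cases e' <;> simp [len, part, pos] at this hm hm' ⊢ <;> omega }

lemma adj_spine (h : WrenchConfig G s q r n i j (k + 1)) {p : ℕ} (hp : p < n) :
    h.subdivision.subgraph.spanningCoe.Adj (s p) (s (p + 1)) := by
  rcases lt_or_ge p i with h₁ | h₁
  · refine ⟨1, i - (p + 1), by simp [subdivision]; omega, ?_⟩
    have h₂ : i - (i - (p + 1)) = p + 1 := by omega
    have h₃ : i - (i - (p + 1) + 1) = p := by omega
    simp [subdivision, h₂, h₃]
  · rcases lt_or_ge p j with h₂ | h₂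
    · refine ⟨0, p - i, by simp [subdivision]; omega, ?_⟩
      have h₃ : i + (p - i) = p := by omega
      simp [subdivision, ← add_assoc, h₃]
    · refine ⟨3, p - j, by simp [subdivision]; omega, ?_⟩
      have h₃ : j + (p - j) = p := by omega
      simp [subdivision, ← add_assoc, h₃]

lemma adj_left (h : WrenchConfig G s q r n i j (k + 1)) {m : ℕ} (hm : m < k + 1) :
    h.subdivision.subgraph.spanningCoe.Adj (q m) (q (m + 1)) :=
  ⟨2, m, hm, rfl⟩

lemma adj_right (h : WrenchConfig G s q r n i j (k + 1)) {m : ℕ} (hm : m < k + 1) :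
    h.subdivision.subgraph.spanningCoe.Adj (r m) (r (m + 1)) :=
  ⟨4, m, hm, rfl⟩

lemma mem_part_of_mem_subdivision (h : WrenchConfig G s q r n i j (k + 1)) {x : V}
    (hx : x ∈ h.subdivision.subgraph.verts) :
    (∃ p ≤ n, s p = x) ∨ (∃ m ≤ k + 1, q m = x) ∨ ∃ m ≤ k + 1, r m = x := by
  have hgap := h.gap
  have hright := h.right_le
  rcases hx with ⟨w, rfl⟩ | ⟨e, m, hm, rfl⟩
  · fin_cases w
    exacts [Or.inl ⟨i, by omega, rfl⟩, Or.inl ⟨j, by omega, rfl⟩, Or.inl ⟨0, by omega, rfl⟩,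
      Or.inr (Or.inl ⟨k + 1, le_rfl, rfl⟩), Or.inl ⟨n, le_rfl, rfl⟩,
      Or.inr (Or.inr ⟨k + 1, le_rfl, rfl⟩)]
  · fin_cases e <;> simp [subdivision] at hm
    exacts [Or.inl ⟨i + m, by omega, rfl⟩, Or.inl ⟨i - m, by omega, rfl⟩,
      Or.inr (Or.inl ⟨m, by omega, rfl⟩), Or.inl ⟨j + m, by omega, rfl⟩,
      Or.inr (Or.inr ⟨m, by omega, rfl⟩)]

lemma exists_walk_left_to_right (h : WrenchConfig G s q r n i j ℓ)
    (hsH : ∀ p < n, H.Adj (s p) (s (p + 1))) (hqH : ∀ m < ℓ, H.Adj (q m) (q (m + 1)))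
    (hrH : ∀ m < ℓ, H.Adj (r m) (r (m + 1))) {m m' : ℕ} (hm : m ≤ ℓ) (hm' : m' ≤ ℓ) :
    ∃ w : H.Walk (q m) (r m'), w.length ≤ 3 * G.dist (q m) (r m') := by
  have hgap := h.gap
  have hright := h.right_le
  obtain ⟨w₁, hw₁⟩ := h.left.exists_walk_of_adj hqH hm (Nat.zero_le ℓ)
  obtain ⟨w₂, hw₂⟩ := h.spine.exists_walk_of_adj hsH (i := i) (j := j) (by omega) (by omega)
  obtain ⟨w₃, hw₃⟩ := h.right.exists_walk_of_adj hrH (Nat.zero_le ℓ) hm'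
  refine ⟨(w₁.copy rfl h.left_zero).append (w₂.append (w₃.copy h.right_zero rfl)), ?_⟩
  simp only [Walk.length_append, Walk.length_copy, hw₁, hw₂, hw₃]
  have h₁ := h.left.dist_eq m hm 0 (Nat.zero_le ℓ)
  have h₂ := h.spine.dist_eq i (by omega) j (by omega)
  have h₃ := h.right.dist_eq 0 (Nat.zero_le ℓ) m' hm'
  have h₄ := h.le_dist_left_right hm hm'
  omega

lemma isQuasiGeodesic (h : WrenchConfig G s q r n i j (k + 1)) :
    IsQuasiGeodesic G h.subdivision.subgraph 3 := by
  have hgap := h.gap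
  have hright := h.right_le
  have hsH := fun p hp => h.adj_spine (p := p) hp
  have hqH := fun m hm => h.adj_left (m := m) hm
  have hrH := fun m hm => h.adj_right (m := m) hm
  have symm : ∀ {x y}, (∃ w : h.subdivision.subgraph.spanningCoe.Walk x y,
      w.length ≤ 3 * G.dist x y) → ∃ w : h.subdivision.subgraph.spanningCoe.Walk y x,
      w.length ≤ 3 * G.dist y x := fun ⟨w, hw⟩ =>
    ⟨w.reverse, by rwa [Walk.length_reverse, dist_comm]⟩
  have geodesic : ∀ {t : ℕ → V} {l : ℕ}, IsGeodesicSeq_s4 G t l →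
      (∀ m < l, h.subdivision.subgraph.spanningCoe.Adj (t m) (t (m + 1))) → ∀ {m m'}, m ≤ l →
      m' ≤ l → ∃ w : h.subdivision.subgraph.spanningCoe.Walk (t m) (t m'),
        w.length ≤ 3 * G.dist (t m) (t m') := fun {t l} ht htH {m m'} hm hm' =>
    (ht.exists_walk_of_adj htH hm hm').imp fun w hw => by omega
  have left_spine : ∀ {m p}, m ≤ k + 1 → p ≤ n → _ := exists_walk_leg_to_spine h.spine h.left
    h.left_zero (by omega) h.left_far hsH hqH
  have right_spine : ∀ {m p}, m ≤ k + 1 → p ≤ n → _ := exists_walk_leg_to_spine h.spine h.right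
    h.right_zero (by omega) h.right_far hsH hrH
  have left_right : ∀ {m m'}, m ≤ k + 1 → m' ≤ k + 1 → _ := h.exists_walk_left_to_right hsH hqH hrH
  refine isQuasiGeodesic_of_exists_walk fun x hx y hy => ?_
  rcases h.mem_part_of_mem_subdivision hx with ⟨p, hp, rfl⟩ | ⟨p, hp, rfl⟩ | ⟨p, hp, rfl⟩ <;>
    rcases h.mem_part_of_mem_subdivision hy with ⟨p', hp', rfl⟩ | ⟨p', hp', rfl⟩ | ⟨p', hp', rfl⟩
  exacts [geodesic h.spine hsH hp hp', symm (left_spine hp' hp), symm (right_spine hp' hp),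
    left_spine hp hp', geodesic h.left hqH hp hp', left_right hp hp',
    right_spine hp hp', symm (left_right hp' hp), geodesic h.right hrH hp hp']

end WrenchConfig

lemma wrenchFree_of_not_contains (h : ¬ ContainsQuasiGeodesicSubdivGE G k wrenchGraph 3) :
    WrenchFree G (k + 1) := fun _ _ _ _ _ _ hw =>
  h ⟨hw.subdivision.subgraph, hw.subdivision.isSubdivGE, hw.isQuasiGeodesic⟩

end Wrenches

section Restriction

variable {G : SimpleGraph V} {X : Set V} {x y z : V}

/-- The graph `G` restricted to the edges with both ends in `X`, on the same vertex set, so that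
walks inside `X` and walks outside `X` can be compared without coercions. -/
def restrictTo (G : SimpleGraph V) (X : Set V) : SimpleGraph V :=
  (G.induce X).spanningCoe

lemma restrictTo_adj : (restrictTo G X).Adj x y ↔ G.Adj x y ∧ x ∈ X ∧ y ∈ X := by
  simp [restrictTo]

lemma restrictTo_le : restrictTo G X ≤ G := fun _ _ h => (restrictTo_adj.1 h).1

lemma reachable_induction {P : V → Prop} (h : G.Reachable x y) (hx : P x)
    (step : ∀ a b, G.Adj a b → P a → P b) : P y := by
  obtain ⟨p⟩ := h
  induction p with
  | nil => exact hx
  | cons h _ ih => exact ih (step _ _ h hx)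

lemma mem_of_reachable_restrictTo (h : (restrictTo G X).Reachable x y) (hx : x ∈ X) : y ∈ X :=
  reachable_induction h hx fun _ _ hab _ => (restrictTo_adj.1 hab).2.2

/-- The attachments of the component of `G - X` that contains `y`: the vertices of `X` with a
neighbour in that component. -/
def attachments (G : SimpleGraph V) (X : Set V) (y : V) : Set V :=
  {w | w ∈ X ∧ ∃ z, (restrictTo G Xᶜ).Reachable y z ∧ G.Adj w z}

lemma mem_attachments_of_adj (hz : (restrictTo G Xᶜ).Reachable y z) (hy : y ∉ X)
    (hzx : G.Adj z x) (hx : ¬ (restrictTo G Xᶜ).Reachable y x) : x ∈ attachments G X y := by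
  refine ⟨?_, z, hz, hzx.symm⟩
  by_contra hxX
  have hzX := mem_of_reachable_restrictTo hz hy
  exact hx (hz.trans (restrictTo_adj.2 ⟨hzx, hzX, hxX⟩).reachable)

lemma attachments_congr (h : (restrictTo G Xᶜ).Reachable x y) :
    attachments G X x = attachments G X y := by
  have h' : ∀ z, (restrictTo G Xᶜ).Reachable x z ↔ (restrictTo G Xᶜ).Reachable y z :=
    fun z => ⟨h.symm.trans, h.trans⟩
  simp only [attachments, h']

lemma exists_attachment_of_reachable {F : Set V} (h : (restrictTo G F).Reachable x y) (hx : x ∉ X)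
    (hy : y ∈ X) : ∃ w ∈ attachments G X x, (restrictTo G F).Reachable x w := by
  by_contra! hcon
  refine mem_of_reachable_restrictTo (G := G) (X := Xᶜ) (x := x) (y := y) ?_ hx hy
  refine (reachable_induction (P := fun z => (restrictTo G F).Reachable x z ∧
    (restrictTo G Xᶜ).Reachable x z) h ⟨.rfl, .rfl⟩ fun a b hab ⟨ha, ha'⟩ => ?_).2
  have hb := ha.trans hab.reachable
  refine ⟨hb, by_contra fun hb' => ?_⟩
  exact hcon b (mem_attachments_of_adj ha' hx (restrictTo_adj.1 hab).1 hb') hb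

end Restriction

section Parity

variable {G : SimpleGraph V} {f : Sym2 V → ZMod 2} {x y z : V} {ℓ : ℕ}

/-- The sum modulo `2` of the values of `f` along the edges of a walk, with multiplicities. -/
def walkWeight (f : Sym2 V → ZMod 2) (p : G.Walk x y) : ZMod 2 :=
  (p.edges.map f).sum

@[simp]
lemma walkWeight_cons (h : G.Adj x y) (p : G.Walk y z) :
    walkWeight f (Walk.cons h p) = f s(x, y) + walkWeight f p := by
  simp [walkWeight]

@[simp]
lemma walkWeight_append (p : G.Walk x y) (q : G.Walk y z) :
    walkWeight f (p.append q) = walkWeight f p + walkWeight f q := by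
  simp [walkWeight]

@[simp]
lemma walkWeight_reverse (p : G.Walk x y) : walkWeight f p.reverse = walkWeight f p := by
  simp [walkWeight, List.sum_reverse]

lemma walkWeight_eq_zero {p : G.Walk x y} (h : ∀ e ∈ p.edges, f e = 0) : walkWeight f p = 0 :=
  List.sum_eq_zero fun c hc => by
    obtain ⟨e, he, rfl⟩ := List.mem_map.1 hc
    exact h e he

lemma walkWeight_eq_sub {χ : V → ZMod 2} {p : G.Walk x y}
    (h : ∀ a b, s(a, b) ∈ p.edges → f s(a, b) = χ b - χ a) : walkWeight f p = χ y - χ x := by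
  induction p with
  | nil => simp [walkWeight]
  | cons _ p ih =>
    rw [walkWeight_cons, h _ _ (by simp), ih fun a b hab => h a b (by simp [hab])]
    abel

lemma exists_walk_walkWeight_eq_zero {Y : Set V} (h : (restrictTo G Y).Reachable x y)
    (hf : ∀ a ∈ Y, ∀ b ∈ Y, f s(a, b) = 0) : ∃ p : G.Walk x y, walkWeight f p = 0 := by
  obtain ⟨p⟩ := h
  refine ⟨p.mapLe restrictTo_le, walkWeight_eq_zero fun e he => ?_⟩
  rw [Walk.edges_mapLe_eq_edges] at he
  induction e with
  | _ a b =>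
    obtain ⟨-, ha, hb⟩ := restrictTo_adj.1 (p.adj_of_mem_edges he)
    exact hf a ha b hb

lemma exists_append_append {u v : V} (p : G.Walk u v) {i j : ℕ} (hij : i ≤ j)
    (hj : j ≤ p.length) :
    ∃ (a : G.Walk u (p.getVert i)) (b : G.Walk (p.getVert i) (p.getVert j))
      (c : G.Walk (p.getVert j) v), p = a.append (b.append c) ∧ b.length = j - i := by
  obtain ⟨b, c, hbc, hb⟩ : ∃ (b : G.Walk (p.getVert i) (p.getVert j)) (c : G.Walk (p.getVert j) v),
      p.drop i = b.append c ∧ b.length = j - i := by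
    have hj' : (p.drop i).getVert (j - i) = p.getVert j := by
      rw [Walk.drop_getVert, Nat.add_sub_cancel' hij]
    rw [← hj']
    refine ⟨(p.drop i).take (j - i), (p.drop i).drop (j - i),
      (Walk.append_take_drop_eq _ _).symm, ?_⟩
    rw [Walk.take_length, Walk.drop_length]
    omega
  exact ⟨p.take i, b, c, by rw [← hbc, Walk.append_take_drop_eq], hb⟩

/-- A closed walk of odd weight that is not a geodesic cycle can be split along a shortcut into two
shorter closed walks, one of which has odd weight. -/
lemma exists_odd_closed_walk_length_le (hG : GeodesicCyclesLE G ℓ) (p : G.Walk x x)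
    (hp : walkWeight f p ≠ 0) :
    ∃ (y : V) (q : G.Walk y y), walkWeight f q ≠ 0 ∧ q.length ≤ ℓ := by
  induction hn : p.length using Nat.strong_induction_on generalizing x p with
  | _ n ih =>
    subst hn
    by_cases hgeo : ∀ i j, i ≤ j → j ≤ p.length →
        min (j - i) (p.length - (j - i)) ≤ G.dist (p.getVert i) (p.getVert j)
    · exact ⟨x, p, hp, hG x p hgeo⟩
    push Not at hgeo
    obtain ⟨i, j, hij, hj, hlt⟩ := hgeo
    obtain ⟨a, b, c, habc, hb⟩ := exists_append_append p hij hj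
    obtain ⟨d, hd⟩ := b.reachable.exists_walk_length_eq_dist
    have hlen := congrArg Walk.length habc
    simp only [Walk.length_append] at hlen
    rcases eq_or_ne (walkWeight f (b.append d.reverse)) 0 with hbd | hbd
    · refine ih _ ?_ (a.append (d.append c)) (fun hadc => hp ?_) rfl
      · simp only [Walk.length_append]
        omega
      · rw [habc]
        simp only [walkWeight_append, walkWeight_reverse] at hbd hadc ⊢
        linear_combination hadc + hbd - CharTwo.add_self_eq_zero (walkWeight f d)
    · refine ih _ ?_ _ hbd rfl
      simp only [Walk.length_append, Walk.length_reverse]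
      omega

lemma two_mul_dist_le_length {p : G.Walk x x} (hy : y ∈ p.support) (hz : z ∈ p.support) :
    2 * G.dist y z ≤ p.length := by
  classical
  have hz' : z ∈ (p.rotate y hy).support := (p.mem_support_rotate_iff y hy).2 hz
  have hlen := congrArg Walk.length ((p.rotate y hy).take_spec hz')
  have h₁ := dist_le ((p.rotate y hy).takeUntil z hz')
  have h₂ := dist_le ((p.rotate y hy).dropUntil z hz')
  rw [Walk.length_append, Walk.length_rotate] at hlen
  rw [SimpleGraph.dist_comm] at h₂
  omega

end Parity

section Attachments

variable {G : SimpleGraph V} {X S : Set V} {y a b : V} {ℓ : ℕ}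

open Classical in
/-- The indicator function of the edges between the component of `G - X` that contains `y` and its
attachments in `S`. -/
noncomputable def attachmentWeight (G : SimpleGraph V) (X S : Set V) (y : V) (e : Sym2 V) :
    ZMod 2 :=
  if ∃ w ∈ attachments G X y, w ∈ S ∧ ∃ z, (restrictTo G Xᶜ).Reachable y z ∧ e = s(w, z)
  then 1 else 0

lemma attachmentWeight_eq_zero_of_mem (hy : y ∉ X) (ha : a ∈ X) (hb : b ∈ X) :
    attachmentWeight G X S y s(a, b) = 0 := by
  refine if_neg ?_
  rintro ⟨w, -, -, z, hz, he⟩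
  have hzX := mem_of_reachable_restrictTo hz hy
  rcases Sym2.eq_iff.1 he with ⟨-, rfl⟩ | ⟨rfl, -⟩
  exacts [hzX hb, hzX ha]

lemma attachmentWeight_eq_zero_of_notMem (ha : a ∉ attachments G X y ∩ S)
    (hb : b ∉ attachments G X y ∩ S) : attachmentWeight G X S y s(a, b) = 0 := by
  refine if_neg ?_
  rintro ⟨w, hw, hwS, z, -, he⟩
  rcases Sym2.eq_iff.1 he with ⟨rfl, -⟩ | ⟨-, rfl⟩
  exacts [ha ⟨hw, hwS⟩, hb ⟨hw, hwS⟩]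

open Classical in
lemma attachmentWeight_eq_sub (hy : y ∉ X) (hab : G.Adj a b)
    (ha : a ∈ attachments G X y → a ∈ S) (hb : b ∈ attachments G X y → b ∈ S) :
    attachmentWeight G X S y s(a, b) =
      (if (restrictTo G Xᶜ).Reachable y b then 1 else 0) -
        if (restrictTo G Xᶜ).Reachable y a then 1 else 0 := by
  have not_attachment : ∀ {z}, (restrictTo G Xᶜ).Reachable y z → z ∉ attachments G X y :=
    fun hz hzA => mem_of_reachable_restrictTo hz hy hzA.1
  by_cases hra : (restrictTo G Xᶜ).Reachable y a <;> by_cases hrb : (restrictTo G Xᶜ).Reachable y b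
  · rw [attachmentWeight_eq_zero_of_notMem (fun h => not_attachment hra h.1)
      fun h => not_attachment hrb h.1, if_pos hra, if_pos hrb, sub_self]
  · have hbA := mem_attachments_of_adj hra hy hab hrb
    rw [attachmentWeight, if_pos ⟨b, hbA, hb hbA, a, hra, Sym2.eq_swap⟩, if_pos hra, if_neg hrb]
    decide
  · have haA := mem_attachments_of_adj hrb hy hab.symm hra
    rw [attachmentWeight, if_pos ⟨a, haA, ha haA, b, hrb, rfl⟩, if_pos hrb, if_neg hra, sub_zero]
  · rw [if_neg hra, if_neg hrb, sub_self]
    refine if_neg ?_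
    rintro ⟨w, -, -, z, hz, he⟩
    rcases Sym2.eq_iff.1 he with ⟨-, rfl⟩ | ⟨rfl, -⟩
    exacts [hrb hz, hra hz]

lemma exists_odd_closed_walk (hy : y ∉ X) (ha : a ∈ attachments G X y)
    (hb : b ∈ attachments G X y) (haS : a ∈ S) (hbS : b ∉ S)
    (hab : (restrictTo G X).Reachable a b) :
    ∃ p : G.Walk a a, walkWeight (attachmentWeight G X S y) p ≠ 0 := by
  obtain ⟨-, z, hz, haz⟩ := id ha
  obtain ⟨-, z', hz', hbz'⟩ := id hb
  have notMem : ∀ {v}, v ∈ Xᶜ → v ∉ attachments G X y ∩ S := fun hv h => hv h.1.1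
  obtain ⟨p, hp⟩ := exists_walk_walkWeight_eq_zero (f := attachmentWeight G X S y)
    (hz.symm.trans hz') fun _ hu _ hv => attachmentWeight_eq_zero_of_notMem (notMem hu) (notMem hv)
  obtain ⟨q, hq⟩ := exists_walk_walkWeight_eq_zero (f := attachmentWeight G X S y) hab
    fun _ hu _ hv => attachmentWeight_eq_zero_of_mem hy hu hv
  have hweight : attachmentWeight G X S y s(a, z) = 1 := if_pos ⟨a, ha, haS, z, hz, rfl⟩
  have hweight' : attachmentWeight G X S y s(z', b) = 0 := attachmentWeight_eq_zero_of_notMem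
    (notMem (mem_of_reachable_restrictTo hz' hy)) fun h => hbS h.2
  refine ⟨Walk.cons haz (p.append (Walk.cons hbz'.symm q.reverse)), ?_⟩
  simp [hp, hq, hweight, hweight']

lemma exists_attachments_dist_le (hG : GeodesicCyclesLE G ℓ) (hy : y ∉ X)
    (ha : a ∈ attachments G X y) (hb : b ∈ attachments G X y) (haS : a ∈ S) (hbS : b ∉ S)
    (hab : (restrictTo G X).Reachable a b) :
    ∃ u ∈ attachments G X y, ∃ v ∈ attachments G X y, u ∈ S ∧ v ∉ S ∧ 2 * G.dist u v ≤ ℓ := by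
  classical
  obtain ⟨p₀, hp₀⟩ := exists_odd_closed_walk hy ha hb haS hbS hab
  obtain ⟨x, p, hp, hlen⟩ := exists_odd_closed_walk_length_le hG p₀ hp₀
  obtain ⟨u, hu, hup⟩ : ∃ u ∈ attachments G X y ∩ S, u ∈ p.support := by
    by_contra! hcon
    refine hp (walkWeight_eq_zero fun e he => ?_)
    induction e with
    | _ c d =>
      exact attachmentWeight_eq_zero_of_notMem
        (fun h => hcon c h (p.fst_mem_support_of_mem_edges he))
        fun h => hcon d h (p.snd_mem_support_of_mem_edges he)
  obtain ⟨v, hv, hvp, hvS⟩ : ∃ v ∈ attachments G X y, v ∈ p.support ∧ v ∉ S := by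
    by_contra! hcon
    refine hp ((walkWeight_eq_sub fun c d hcd => attachmentWeight_eq_sub hy
      (p.adj_of_mem_edges hcd) (fun h => hcon c h (p.fst_mem_support_of_mem_edges hcd))
      fun h => hcon d h (p.snd_mem_support_of_mem_edges hcd)).trans (sub_self _))
  exact ⟨u, hu.1, v, hv, hu.2, hvS, (two_mul_dist_le_length hup hvp).trans hlen⟩

end Attachments

section Tubes

variable {G : SimpleGraph V} {X : Set V} {r n i j t : ℕ} {s : ℕ → V} {x y z : V}

lemma exists_last_exit (hs : ∀ i < n, G.Adj (s i) (s (i + 1))) (h₀ : s 0 ∈ X) (hn : s n ∉ X) :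
    ∃ t < n, s t ∈ attachments G X (s n) ∧
      ∀ j, t < j → j ≤ n → (restrictTo G Xᶜ).Reachable (s n) (s j) := by
  classical
  set t := Nat.findGreatest (fun t => s t ∈ X) n
  have htX : s t ∈ X := Nat.findGreatest_spec (P := fun t => s t ∈ X) (Nat.zero_le n) h₀
  have hle : t ≤ n := Nat.findGreatest_le n
  have hlt : t < n := lt_of_le_of_ne hle fun h => hn (h ▸ htX)
  have outside : ∀ j, t < j → j ≤ n → s j ∈ Xᶜ := fun j hj hjn =>
    Nat.findGreatest_is_greatest hj hjn
  have exit : ∀ j, t < j → j ≤ n → (restrictTo G Xᶜ).Reachable (s n) (s j) := fun j hj hjn =>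
    (reachable_of_adj hjn fun m hm hmn => restrictTo_adj.2 ⟨hs m hmn,
      outside m (hj.trans_le hm) hmn.le, outside (m + 1) (by omega) hmn⟩).symm
  exact ⟨t, hlt, ⟨htX, s (t + 1), exit _ t.lt_succ_self hlt, hs t hlt⟩, exit⟩

/-- The `r`-neighbourhood of `s 0, …, s n`. -/
def tube (G : SimpleGraph V) (r : ℕ) (s : ℕ → V) (n : ℕ) : Set V :=
  {x | ∃ i ≤ n, G.dist x (s i) ≤ r}

/-- A wrench can grow a leg of length `r + 1` at `s i` that leads away from `s 0, …, s n`. -/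
def IsFoot (G : SimpleGraph V) (r : ℕ) (s : ℕ → V) (n i : ℕ) : Prop :=
  i ≤ n ∧ ∃ y, G.dist y (s i) = r + 1 ∧ ∀ j ≤ n, r + 1 ≤ G.dist y (s j)

/-- The shadow of `y` on `s 0, …, s n`: the indices `i` such that `s i` is within distance `r` of
an attachment of the component of `y` outside the tube. -/
def shadow (G : SimpleGraph V) (r : ℕ) (s : ℕ → V) (n : ℕ) (y : V) : Set ℕ :=
  {i | i ≤ n ∧ ∃ w ∈ attachments G (tube G r s n) y, G.dist w (s i) ≤ r}

lemma mem_tube (hi : i ≤ n) : s i ∈ tube G r s n :=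
  ⟨i, hi, by simp⟩

lemma lt_dist_of_notMem_tube (hy : y ∉ tube G r s n) (hi : i ≤ n) : r < G.dist y (s i) :=
  not_le.1 fun h => hy ⟨i, hi, h⟩

lemma shadow_congr (h : (restrictTo G (tube G r s n)ᶜ).Reachable x y) :
    shadow G r s n x = shadow G r s n y := by
  simp only [shadow, attachments_congr h]

lemma mem_shadow_of_adj (hxy : G.Adj x y) (hi : i ≤ n) (hy : G.dist y (s i) ≤ r) :
    i ∈ shadow G r s n x :=
  ⟨hi, y, ⟨⟨i, hi, hy⟩, x, .rfl, hxy.symm⟩, hy⟩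

lemma isFoot_of_mem_shadow (hG : G.Connected) (hy : y ∉ tube G r s n)
    (hi : i ∈ shadow G r s n y) : IsFoot G r s n i := by
  obtain ⟨hin, w, ⟨-, z, hz, hwz⟩, hw⟩ := hi
  have hzt := mem_of_reachable_restrictTo hz hy
  have h₁ := lt_dist_of_notMem_tube hzt hin
  have h₂ := hG.dist_triangle (u := z) (v := w) (w := s i)
  rw [dist_eq_one_iff_adj.2 hwz.symm] at h₂
  exact ⟨hin, z, by omega, fun j hj => lt_dist_of_notMem_tube hzt hj⟩

lemma isFoot_of_forall_dist_le (hG : G.Connected) (ht : t ≤ n) (hy : r < G.dist y (s t))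
    (hmin : ∀ j ≤ n, G.dist y (s t) ≤ G.dist y (s j)) : IsFoot G r s n t := by
  obtain ⟨q, hq, hq₀, hq₁⟩ := exists_isGeodesicSeq_s4 (hG (s t) y)
  rw [dist_comm] at hq hq₁
  have h₁ := hq.dist_eq (r + 1) hy 0 (Nat.zero_le _)
  have h₂ := hq.dist_eq _ le_rfl (r + 1) hy
  rw [hq₀] at h₁
  rw [hq₁] at h₂
  refine ⟨ht, q (r + 1), by omega, fun j hj => ?_⟩
  have h₃ := hmin j hj
  have h₄ := hG.dist_triangle (u := y) (v := q (r + 1)) (w := s j)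
  omega

lemma not_isFoot_of_wrenchFree (hG : G.Connected) (hW : WrenchFree G (r + 1))
    (hs : IsGeodesicSeq_s4 G s n) (hi : IsFoot G r s n i) (hri : r + 1 ≤ i)
    (hij : i + 4 * (r + 1) ≤ j) (hjn : j + (r + 1) ≤ n) : ¬ IsFoot G r s n j := by
  rintro ⟨-, z, hz, hzs⟩
  obtain ⟨-, y, hy, hys⟩ := hi
  obtain ⟨p, hp, hp₀, hp₁⟩ := exists_isGeodesicSeq_s4 (hG (s i) y)
  obtain ⟨q, hq, hq₀, hq₁⟩ := exists_isGeodesicSeq_s4 (hG (s j) z)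
  rw [dist_comm, hy] at hp hp₁
  rw [dist_comm, hz] at hq hq₁
  exact hW s p q n i j ⟨hs, hp, hq, hp₀, hq₀, hri, hij, hjn, by rwa [hp₁], by rwa [hq₁]⟩

lemma reachable_restrictTo_tube (hG : G.Connected) (hs : IsGeodesicSeq_s4 G s n)
    (hx : x ∈ tube G r s n) (hy : y ∈ tube G r s n) :
    (restrictTo G (tube G r s n)).Reachable x y := by
  suffices h : ∀ x ∈ tube G r s n, (restrictTo G (tube G r s n)).Reachable (s 0) x from
    (h x hx).symm.trans (h y hy)
  rintro x ⟨i, hi, hx⟩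
  refine (reachable_of_adj (Nat.zero_le i) fun m _ hm => restrictTo_adj.2
    ⟨hs.adj m (by omega), mem_tube (by omega), mem_tube (by omega)⟩).trans ?_
  obtain ⟨q, hq, hq₀, hq₁⟩ := exists_isGeodesicSeq_s4 (hG (s i) x)
  have hqt : ∀ m ≤ G.dist (s i) x, q m ∈ tube G r s n := fun m hm => by
    have h := hq.dist_eq m hm 0 (Nat.zero_le _)
    rw [hq₀] at h
    rw [dist_comm] at hx
    exact ⟨i, hi, by omega⟩
  have := reachable_of_adj (Nat.zero_le (G.dist (s i) x)) fun m _ hm => restrictTo_adj.2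
    ⟨hq.adj m hm, hqt m hm.le, hqt (m + 1) hm⟩
  rwa [hq₀, hq₁] at this

lemma IsGeodesicSeq_s4.index_le_add (hG : G.Connected) (hs : IsGeodesicSeq_s4 G s n) (hi : i ≤ n)
    (hj : j ≤ n) (hx : G.dist x (s i) ≤ r) (hy : G.dist y (s j) ≤ r) :
    j ≤ i + 2 * r + G.dist x y := by
  have h₁ := hs.dist_eq i hi j hj
  have h₂ := hG.dist_triangle (u := s i) (v := x) (w := s j)
  have h₃ := hG.dist_triangle (u := x) (v := y) (w := s j)
  rw [dist_comm] at hx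
  omega

/-- If the shadow of `y` had indices on both sides of a long interval without feet, then two
attachments on different sides of that interval would be too close to each other. -/
lemma shadow_le_or_le (hG : G.Connected) (hcyc : GeodesicCyclesLE G (r + 2))
    (hs : IsGeodesicSeq_s4 G s n) (hy : y ∉ tube G r s n) (T₁ T₂ : ℕ) (hT : T₁ + 3 * r + 2 ≤ T₂)
    (hfeet : ∀ i, IsFoot G r s n i → i ≤ T₁ ∨ T₂ ≤ i) :
    (∀ i ∈ shadow G r s n y, i ≤ T₁) ∨ ∀ i ∈ shadow G r s n y, T₂ ≤ i := by
  by_contra! hcon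
  obtain ⟨⟨j, hj, hjT⟩, i, hi, hiT⟩ := hcon
  have hj' := (hfeet j (isFoot_of_mem_shadow hG hy hj)).resolve_left (by omega)
  have hi' := (hfeet i (isFoot_of_mem_shadow hG hy hi)).resolve_right (by omega)
  obtain ⟨hin, w, hw, hwi⟩ := hi
  obtain ⟨hjn, w', hw', hwj⟩ := hj
  obtain ⟨u, -, v, hv, ⟨p, hp, hpT, hup⟩, hvS, huv⟩ := exists_attachments_dist_le
    (S := {x | ∃ p ≤ n, p ≤ T₁ ∧ G.dist x (s p) ≤ r}) hcyc hy hw hw' ⟨i, hin, hi', hwi⟩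
    (fun ⟨p, hp, hpT, hwp⟩ => by
      have := hs.index_le_add hG hp hjn hwp hwj
      rw [dist_self] at this
      omega)
    (reachable_restrictTo_tube hG hs hw.1 hw'.1)
  obtain ⟨q, hq, hvq⟩ := hv.1
  have hqT : T₂ ≤ q := (hfeet q (isFoot_of_mem_shadow hG hy ⟨hq, v, hv, hvq⟩)).resolve_left
    fun h => hvS ⟨q, hq, h, hvq⟩
  have := hs.index_le_add hG hp hq hup hvq
  omega

lemma exists_mem_shadow (hG : G.Connected) (hz : z ∈ tube G r s n) (hy : y ∉ tube G r s n) :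
    ∃ i ∈ shadow G r s n y, G.dist z (s i) + G.dist (s i) y ≤ G.dist z y + 2 * r := by
  obtain ⟨q, hq, hq₀, hq₁⟩ := exists_isGeodesicSeq_s4 (hG z y)
  obtain ⟨t, ht, hatt, -⟩ := exists_last_exit hq.adj (hq₀ ▸ hz) (by rwa [hq₁])
  rw [hq₁] at hatt
  obtain ⟨i, hi, hti⟩ := hatt.1
  refine ⟨i, ⟨hi, q t, hatt, hti⟩, ?_⟩
  have h₁ := hq.dist_eq 0 (Nat.zero_le _) t ht.le
  have h₂ := hq.dist_eq t ht.le _ le_rfl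
  have h₃ := hG.dist_triangle (u := z) (v := q t) (w := s i)
  have h₄ := hG.dist_triangle (u := s i) (v := q t) (w := y)
  rw [hq₀] at h₁
  rw [hq₁] at h₂
  rw [dist_comm (u := s i) (v := q t)] at h₄
  omega

lemma tube_reverse : tube G r (fun i => s (n - i)) n = tube G r s n := by
  ext x
  refine ⟨fun ⟨i, _, hx⟩ => ⟨n - i, Nat.sub_le n i, hx⟩,
    fun ⟨i, hi, hx⟩ => ⟨n - i, Nat.sub_le n i, ?_⟩⟩
  simpa only [Nat.sub_sub_self hi] using hx

lemma mem_shadow_reverse (hi : i ≤ n) :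
    i ∈ shadow G r (fun i => s (n - i)) n y ↔ n - i ∈ shadow G r s n y := by
  simp only [shadow, tube_reverse, Set.mem_ofPred_eq, hi, Nat.sub_le, true_and]

lemma IsFoot.of_reverse (h : IsFoot G r (fun i => s (n - i)) n i) : IsFoot G r s n (n - i) := by
  obtain ⟨-, y, hy, hys⟩ := h
  refine ⟨Nat.sub_le n i, y, hy, fun j hj => ?_⟩
  have := hys (n - j) (Nat.sub_le n j)
  simpa only [Nat.sub_sub_self hj] using this

end Tubes

section Spines

variable {G : SimpleGraph V} {r n m a b i j : ℕ} {s q : ℕ → V} {x y u v : V}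

/-- A spine is a longest geodesic all of whose feet lie near its ends or in a short window
`[a, b]`. The centre of the star decomposition is chosen in that window. -/
structure Spine (G : SimpleGraph V) (r : ℕ) (s : ℕ → V) (n a b : ℕ) : Prop where
  geodesic : IsGeodesicSeq_s4 G s n
  dist_le : ∀ x y, G.dist x y ≤ n
  left_le_right : a ≤ b
  right_le : b ≤ n
  width_le : b ≤ a + 4 * r + 3
  feet : ∀ i, IsFoot G r s n i → i ≤ r ∨ (a ≤ i ∧ i ≤ b) ∨ n ≤ i + r

lemma exists_spine [Finite V] (hG : G.Connected) (hW : WrenchFree G (r + 1)) :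
    ∃ s n a b, Spine G r s n a b := by
  classical
  have := hG.nonempty
  obtain ⟨⟨x, y⟩, hmax⟩ := Finite.exists_max fun p : V × V => G.dist p.1 p.2
  obtain ⟨s, hs, -, -⟩ := exists_isGeodesicSeq_s4 (hG x y)
  have hdist : ∀ u v, G.dist u v ≤ G.dist x y := fun u v => hmax (u, v)
  generalize G.dist x y = n at hs hdist
  by_cases hfoot : ∃ i, IsFoot G r s n i ∧ r + 1 ≤ i ∧ i + (r + 1) ≤ n
  · obtain ⟨ha, hra, han⟩ := Nat.find_spec hfoot
    have hfirst : ∀ i, IsFoot G r s n i → r + 1 ≤ i → i + (r + 1) ≤ n → Nat.find hfoot ≤ i :=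
      fun i hi hri hin => Nat.find_min' hfoot ⟨hi, hri, hin⟩
    generalize Nat.find hfoot = a at ha hra han hfirst
    refine ⟨s, n, a, min n (a + 4 * r + 3), hs, hdist, by omega, by omega, by omega,
      fun i hi => ?_⟩
    by_contra! hcon
    have hle := hfirst i hi (by omega) (by omega)
    exact not_isFoot_of_wrenchFree hG hW hs ha hra (by omega) (by omega) hi
  · refine ⟨s, n, 0, 0, hs, hdist, le_rfl, Nat.zero_le n, by omega, fun i hi => ?_⟩
    by_contra! hcon
    exact hfoot ⟨i, hi, by omega, by omega⟩

lemma Spine.reverse (h : Spine G r s n a b) :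
    Spine G r (fun i => s (n - i)) n (n - b) (n - a) where
  geodesic := h.geodesic.reverse
  dist_le := h.dist_le
  left_le_right := Nat.sub_le_sub_left h.left_le_right n
  right_le := Nat.sub_le n a
  width_le := by
    have := h.width_le
    omega
  feet i hi := by
    have := h.feet _ hi.of_reverse
    have := hi.1
    omega

lemma Spine.shadow_le (hG : G.Connected) (hcyc : GeodesicCyclesLE G (r + 2))
    (h : Spine G r s n a b) (ham : a ≤ m) (hmb : m ≤ b) (hnb : n < b + 4 * r + 2)
    (hy : y ∉ tube G r s n) (hfar : 21 * r + 13 ≤ G.dist (s m) y) :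
    ∀ i ∈ shadow G r s n y, i ≤ r := by
  have hwidth := h.width_le
  have hbn := h.right_le
  have hmn := h.dist_le (s m) y
  refine (shadow_le_or_le hG hcyc h.geodesic hy r (min a (n - r)) (by omega)
    fun i hi => ?_).resolve_right fun hright => ?_
  · have := h.feet i hi
    omega
  · obtain ⟨i, hi, hle⟩ := exists_mem_shadow hG (mem_tube (Nat.zero_le n)) hy
    have h₁ := hright i hi
    have h₂ := h.dist_le (s 0) y
    have h₃ := h.geodesic.dist_eq 0 (Nat.zero_le n) i hi.1
    have h₄ := h.geodesic.dist_eq m (by omega) i hi.1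
    have h₅ := hG.dist_triangle (u := s m) (v := s i) (w := y)
    omega

/-- `x` lies outside the tube around the spine, and its component is attached to the spine only
within the window `[a, b]`. -/
def IsMiddle (G : SimpleGraph V) (r : ℕ) (s : ℕ → V) (n a b : ℕ) (x : V) : Prop :=
  x ∉ tube G r s n ∧ ∀ i ∈ shadow G r s n x, a ≤ i ∧ i ≤ b

/-- `x` lies in the part of the tube to the right of `s m`, or in a component outside the tube that
is attached only near the right end `s n`. The left side is obtained by reversing `s`. -/
def IsRight (G : SimpleGraph V) (r : ℕ) (s : ℕ → V) (n m : ℕ) (x : V) : Prop :=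
  (∃ i, m ≤ i ∧ i ≤ n ∧ G.dist x (s i) ≤ r) ∨
    (x ∉ tube G r s n ∧ ∀ i ∈ shadow G r s n x, n ≤ i + r)

lemma Spine.shadow_trichotomy (hG : G.Connected) (hcyc : GeodesicCyclesLE G (r + 2))
    (h : Spine G r s n a b) (ham : a ≤ m) (hmb : m ≤ b) (hy : y ∉ tube G r s n)
    (hfar : 21 * r + 13 ≤ G.dist (s m) y) :
    (∀ i ∈ shadow G r s n y, i ≤ r) ∨ (∀ i ∈ shadow G r s n y, n ≤ i + r) ∨
      (4 * r + 2 ≤ a ∧ b + 4 * r + 2 ≤ n ∧ IsMiddle G r s n a b y) := by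
  have hbn := h.right_le
  by_cases hright : n < b + 4 * r + 2
  · exact .inl (h.shadow_le hG hcyc ham hmb hright hy hfar)
  by_cases hleft : a < 4 * r + 2
  · refine .inr (.inl fun i hi => ?_)
    have hmn : n - (n - m) = m := by omega
    have := h.reverse.shadow_le hG hcyc (m := n - m) (by omega) (by omega) (by omega)
      (by rwa [tube_reverse]) (by rwa [hmn]) (n - i)
      ((mem_shadow_reverse (Nat.sub_le n i)).2 (by rwa [Nat.sub_sub_self hi.1]))
    omega
  have hfeet := h.feet
  have hwidth := h.left_le_right
  rcases shadow_le_or_le hG hcyc h.geodesic hy r a (by omega)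
    (fun i hi => by have := hfeet i hi; omega) with h₁ | h₁
  · exact .inl h₁
  rcases shadow_le_or_le hG hcyc h.geodesic hy b (n - r) (by omega)
    (fun i hi => by have := hfeet i hi; omega) with h₂ | h₂
  · exact .inr (.inr ⟨by omega, by omega, hy, fun i hi => ⟨h₁ i hi, h₂ i hi⟩⟩)
  · exact .inr (.inl fun i hi => by have := h₂ i hi; omega)

lemma IsGeodesicSeq_s4.index_add_le_or_add_le (hG : G.Connected) (hs : IsGeodesicSeq_s4 G s n)
    (hm : m ≤ n) (hi : i ≤ n) (hx : G.dist x (s i) ≤ r) {M : ℕ} (hfar : M + r ≤ G.dist (s m) x) :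
    m + M ≤ i ∨ i + M ≤ m := by
  have h₁ := hs.dist_eq m hm i hi
  have h₂ := hG.dist_triangle (u := s m) (v := s i) (w := x)
  rw [dist_comm] at hx
  omega

lemma isRight_reverse_of_dist_le (hm : m ≤ n) (him : i ≤ m) (hx : G.dist x (s i) ≤ r) :
    IsRight G r (fun i => s (n - i)) n (n - m) x :=
  .inl ⟨n - i, by omega, Nat.sub_le n i, by simpa only [Nat.sub_sub_self (him.trans hm)] using hx⟩

lemma isRight_reverse_of_shadow_le (hx : x ∉ tube G r s n) (h : ∀ i ∈ shadow G r s n x, i ≤ r) :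
    IsRight G r (fun i => s (n - i)) n m x :=
  .inr ⟨by rwa [tube_reverse], fun i hi => by
    have := h _ ((mem_shadow_reverse hi.1).1 hi)
    omega⟩

lemma Spine.isRight_or_isMiddle (hG : G.Connected) (hcyc : GeodesicCyclesLE G (r + 2))
    (h : Spine G r s n a b) (ham : a ≤ m) (hmb : m ≤ b) (hfar : 21 * r + 13 ≤ G.dist (s m) x) :
    IsRight G r s n m x ∨ IsRight G r (fun i => s (n - i)) n (n - m) x ∨
      (4 * r + 2 ≤ a ∧ b + 4 * r + 2 ≤ n ∧ IsMiddle G r s n a b x) := by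
  by_cases hx : x ∈ tube G r s n
  · obtain ⟨i, hi, hxi⟩ := hx
    rcases le_total m i with hmi | him
    · exact .inl (.inl ⟨i, hmi, hi, hxi⟩)
    · exact .inr (.inl (isRight_reverse_of_dist_le (hmb.trans h.right_le) him hxi))
  · rcases h.shadow_trichotomy hG hcyc ham hmb hx hfar with hleft | hright | hmid
    · exact .inr (.inl (isRight_reverse_of_shadow_le hx hleft))
    · exact .inl (.inr ⟨hx, hright⟩)
    · exact .inr (.inr hmid)

lemma Spine.isRight_of_adj (hG : G.Connected) (hcyc : GeodesicCyclesLE G (r + 2))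
    (h : Spine G r s n a b) (ham : a ≤ m) (hmb : m ≤ b) (hxy : G.Adj x y)
    (hx : 21 * r + 13 ≤ G.dist (s m) x) (hy : 21 * r + 13 ≤ G.dist (s m) y)
    (hright : IsRight G r s n m x) : IsRight G r s n m y := by
  have hmn : m ≤ n := hmb.trans h.right_le
  have hwidth := h.width_le
  have index_far : ∀ {z i}, i ≤ n → G.dist z (s i) ≤ r → 21 * r + 13 ≤ G.dist (s m) z →
      m + (20 * r + 13) ≤ i ∨ i + (20 * r + 13) ≤ m := fun hi hz hfar =>
    h.geodesic.index_add_le_or_add_le hG hmn hi hz (by omega)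
  by_cases hyt : y ∈ tube G r s n
  · obtain ⟨j, hj, hyj⟩ := hyt
    refine .inl ⟨j, ?_, hj, hyj⟩
    have hj' := index_far hj hyj hy
    rcases hright with ⟨i, hmi, hi, hxi⟩ | ⟨-, hshadow⟩
    · have hi' := index_far hi hxi hx
      have := h.geodesic.index_le_add hG hj hi hyj hxi
      rw [dist_eq_one_iff_adj.2 hxy.symm] at this
      omega
    · have := hshadow j (mem_shadow_of_adj hxy hj hyj)
      omega
  · refine .inr ⟨hyt, ?_⟩
    rcases hright with ⟨i, hmi, hi, hxi⟩ | ⟨hxt, hshadow⟩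
    · have hi' := index_far hi hxi hx
      have hiy := mem_shadow_of_adj hxy.symm hi hxi
      rcases h.shadow_trichotomy hG hcyc ham hmb hyt hy with h₁ | h₁ | ⟨-, -, -, h₁⟩
      · have := h₁ i hiy
        omega
      · exact h₁
      · have := h₁ i hiy
        omega
    · rwa [← shadow_congr (restrictTo_adj.2 ⟨hxy, hxt, hyt⟩).reachable]

lemma Spine.exists_index_of_isRight (hG : G.Connected) (h : Spine G r s n a b) (hm : m ≤ n)
    (hx : 21 * r + 13 ≤ G.dist (s m) x) (hright : IsRight G r s n m x) :
    ∃ i, m ≤ i ∧ i ≤ n ∧ i + G.dist (s i) x ≤ G.dist (s 0) x + 2 * r ∧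
      (G.dist (s i) x ≤ r ∨ n ≤ i + r) := by
  rcases hright with ⟨i, hmi, hi, hxi⟩ | ⟨hxt, hshadow⟩
  · have h₁ := h.geodesic.dist_eq 0 (Nat.zero_le n) i hi
    have h₂ := hG.dist_triangle (u := s 0) (v := x) (w := s i)
    rw [dist_comm (u := x)] at hxi h₂
    exact ⟨i, hmi, hi, by omega, .inl hxi⟩
  · obtain ⟨i, hi, hle⟩ := exists_mem_shadow hG (mem_tube (Nat.zero_le n)) hxt
    have h₁ := h.geodesic.dist_eq 0 (Nat.zero_le n) i hi.1
    have h₂ := h.geodesic.dist_eq m hm i hi.1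
    have h₃ := hG.dist_triangle (u := s m) (v := s i) (w := x)
    have h₄ := h.dist_le (s 0) x
    have h₅ := hshadow i hi
    exact ⟨i, by omega, hi.1, by omega, .inr h₅⟩

lemma Spine.dist_le_of_isRight (hG : G.Connected) (h : Spine G r s n a b) (hm : m ≤ n)
    (huv : G.dist (s m) u = G.dist (s m) v) (hfar : 21 * r + 13 ≤ G.dist (s m) u)
    (hu : IsRight G r s n m u) (hv : IsRight G r s n m v) : G.dist u v ≤ 6 * r := by
  obtain ⟨i, hmi, hi, hle_u, hi'⟩ := h.exists_index_of_isRight hG hm hfar hu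
  obtain ⟨j, hmj, hj, hle_v, hj'⟩ := h.exists_index_of_isRight hG hm (huv ▸ hfar) hv
  have h₁ := hG.dist_triangle (u := s m) (v := s i) (w := u)
  have h₂ := hG.dist_triangle (u := s m) (v := s j) (w := v)
  have h₃ := hG.dist_triangle (u := s 0) (v := s m) (w := u)
  have h₄ := hG.dist_triangle (u := s 0) (v := s m) (w := v)
  have h₅ := hG.dist_triangle (u := u) (v := s i) (w := v)
  have h₆ := hG.dist_triangle (u := s i) (v := s j) (w := v)
  have h₇ := h.dist_le (s 0) u
  have h₈ := h.dist_le (s 0) v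
  rw [h.geodesic.dist_eq m hm i hi] at h₁
  rw [h.geodesic.dist_eq m hm j hj] at h₂
  rw [h.geodesic.dist_eq 0 (Nat.zero_le n) m hm] at h₃ h₄
  rw [h.geodesic.dist_eq i hi j hj] at h₆
  rw [dist_comm (u := u) (v := s i)] at h₅
  omega

lemma Spine.dist_le_of_reachable_of_isRight (hG : G.Connected)
    (hcyc : GeodesicCyclesLE G (r + 2)) (h : Spine G r s n a b) (ham : a ≤ m) (hmb : m ≤ b)
    (huv : G.dist (s m) u = G.dist (s m) v) (hfar : 21 * r + 13 ≤ G.dist (s m) u)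
    (hreach : (restrictTo G {x | 21 * r + 13 ≤ G.dist (s m) x}).Reachable u v)
    (hu : IsRight G r s n m u) : G.dist u v ≤ 6 * r := by
  refine h.dist_le_of_isRight hG (hmb.trans h.right_le) huv hfar hu
    (reachable_induction hreach hu fun x y hxy hx => ?_)
  obtain ⟨hadj, hxfar, hyfar⟩ := restrictTo_adj.1 hxy
  exact h.isRight_of_adj hG hcyc ham hmb hadj hxfar hyfar hx

lemma IsGeodesicSeq_s4.dist_le_of_mem_tube (hG : G.Connected) {t : ℕ} (hs : IsGeodesicSeq_s4 G s n)
    (hx : x ∈ tube G r s n) (hn : n ≤ G.dist (s 0) x + t) : G.dist (s n) x ≤ t + 2 * r := by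
  obtain ⟨i, hi, hxi⟩ := hx
  have h₁ := hs.dist_eq 0 (Nat.zero_le n) i hi
  have h₂ := hs.dist_eq n le_rfl i hi
  have h₃ := hG.dist_triangle (u := s 0) (v := s i) (w := x)
  have h₄ := hG.dist_triangle (u := s n) (v := s i) (w := x)
  rw [dist_comm] at hxi
  omega

lemma IsGeodesicSeq_s4.dist_le_of_shadow_ge (hG : G.Connected) {t : ℕ} (hs : IsGeodesicSeq_s4 G s n)
    (hx : x ∉ tube G r s n) (hshadow : ∀ i ∈ shadow G r s n x, n - r ≤ i)
    (hn : G.dist (s 0) x ≤ n + t) : G.dist (s n) x ≤ t + 4 * r := by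
  obtain ⟨i, hi, hle⟩ := exists_mem_shadow hG (mem_tube (Nat.zero_le n)) hx
  have h₁ := hs.dist_eq 0 (Nat.zero_le n) i hi.1
  have h₂ := hs.dist_eq n le_rfl i hi.1
  have h₃ := hG.dist_triangle (u := s n) (v := s i) (w := x)
  have h₄ := hshadow i hi
  omega

namespace IsMiddle

lemma of_reachable (hG : G.Connected) (h : Spine G r s n a b) (hu : IsMiddle G r s n a b u)
    {M : ℕ} (hM : 5 * r + 3 < M)
    (hreach : (restrictTo G {x | M ≤ G.dist (s a) x}).Reachable u v) :
    IsMiddle G r s n a b v := by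
  refine reachable_induction hreach hu fun x y hxy ⟨hx, hshadow⟩ => ?_
  obtain ⟨hadj, -, hyfar⟩ := restrictTo_adj.1 hxy
  have hy : y ∉ tube G r s n := by
    rintro ⟨j, hj, hyj⟩
    have h₁ := hshadow j (mem_shadow_of_adj hadj hj hyj)
    have h₂ := h.geodesic.dist_eq a (h.left_le_right.trans h.right_le) j hj
    have h₃ := hG.dist_triangle (u := s a) (v := s j) (w := y)
    have h₄ := h.width_le
    rw [dist_comm] at hyj
    simp only [Set.mem_ofPred_eq] at hyfar
    omega
  rw [shadow_congr (restrictTo_adj.2 ⟨hadj, hx, hy⟩).reachable] at hshadow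
  exact ⟨hy, hshadow⟩

lemma add_dist_le (hG : G.Connected) (hs : IsGeodesicSeq_s4 G s n) (ha : a ≤ n)
    (hx : IsMiddle G r s n a b x) : a + G.dist (s a) x ≤ G.dist (s 0) x + 2 * r := by
  obtain ⟨i, hi, hle⟩ := exists_mem_shadow hG (mem_tube (Nat.zero_le n)) hx.1
  have h₁ := hs.dist_eq 0 (Nat.zero_le n) i hi.1
  have h₂ := hs.dist_eq a ha i hi.1
  have h₃ := hG.dist_triangle (u := s a) (v := s i) (w := x)
  have h₄ := hx.2 i hi
  omega

lemma dist_start_le (hG : G.Connected) (h : Spine G r s n a b) (hx : IsMiddle G r s n a b x)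
    (hdist : a + G.dist (s n) x ≤ n + r) : G.dist (s 0) x ≤ a + 11 * r + 6 := by
  obtain ⟨j, hj, hle⟩ := exists_mem_shadow hG (mem_tube le_rfl) hx.1
  have hj' := hx.2 j hj
  have h₁ := h.geodesic.dist_eq n le_rfl j hj.1
  have h₂ := h.geodesic.dist_eq 0 (Nat.zero_le n) j hj.1
  have h₃ := hG.dist_triangle (u := s 0) (v := s j) (w := x)
  have h₄ := h.width_le
  omega

lemma exists_exit (hG : G.Connected) (h : Spine G r s n a b) (hu : IsMiddle G r s n a b u) {ℓ : ℕ}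
    (hq : IsGeodesicSeq_s4 G q ℓ) (hq₀ : q 0 = s 0) (hq₁ : q ℓ = u) :
    ∃ t ≤ ℓ, t ≤ b + r ∧ a + G.dist (s n) (q t) ≤ n + r ∧
      ∀ p, t < p → p ≤ ℓ → IsMiddle G r s n a b (q p) := by
  obtain ⟨t, ht, hatt, hexit⟩ := exists_last_exit (X := tube G r s n) hq.adj
    (hq₀ ▸ mem_tube (Nat.zero_le n)) (hq₁ ▸ hu.1)
  rw [hq₁] at hatt hexit
  obtain ⟨i, hi, hti⟩ := hatt.1
  obtain ⟨hai, hib⟩ := hu.2 i ⟨hi, q t, hatt, hti⟩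
  have h₁ := h.geodesic.dist_eq 0 (Nat.zero_le n) i hi
  have h₂ := h.geodesic.dist_eq n le_rfl i hi
  have h₃ := hG.dist_triangle (u := s 0) (v := s i) (w := q t)
  have h₄ := hG.dist_triangle (u := s n) (v := s i) (w := q t)
  have h₅ := hq.dist_eq 0 (Nat.zero_le _) t ht.le
  rw [hq₀] at h₅
  rw [dist_comm] at hti
  exact ⟨t, ht.le, by omega, by omega, fun p htp hp =>
    ⟨mem_of_reachable_restrictTo (hexit p htp hp) hu.1, shadow_congr (hexit p htp hp) ▸ hu.2⟩⟩

/-- The right half of the spine is a leg that branches off every geodesic from `s 0` to a middle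
vertex within bounded distance of `s a`. -/
lemma exists_isFoot (hG : G.Connected) (h : Spine G r s n a b) (hbn : b + 4 * r + 2 ≤ n)
    (hu : IsMiddle G r s n a b u) {ℓ : ℕ} (hq : IsGeodesicSeq_s4 G q ℓ) (hq₀ : q 0 = s 0)
    (hq₁ : q ℓ = u) : ∃ t, IsFoot G r q ℓ t ∧ a ≤ t + r ∧ t ≤ a + 11 * r + 6 := by
  have hwidth := h.width_le
  have dist_start : ∀ p ≤ ℓ, G.dist (s 0) (q p) = p := fun p hp => by
    simpa [hq₀] using hq.dist_eq 0 (Nat.zero_le _) p hp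
  have le_add : ∀ p ≤ ℓ, n ≤ p + G.dist (s n) (q p) := fun p hp => by
    have h₁ := h.geodesic.dist_eq 0 (Nat.zero_le n) n le_rfl
    have h₂ := hG.dist_triangle (u := s 0) (v := q p) (w := s n)
    rw [dist_start p hp, dist_comm (u := q p)] at h₂
    omega
  obtain ⟨t₀, ht₀, ht₀b, hdist₀, hmid⟩ := hu.exists_exit hG h hq hq₀ hq₁
  obtain ⟨t, ht, hmin⟩ := (Set.finite_Iic ℓ).exists_minimalFor (fun p => G.dist (s n) (q p)) _
    ⟨t₀, ht₀⟩
  replace hmin : ∀ p ≤ ℓ, G.dist (s n) (q t) ≤ G.dist (s n) (q p) := fun p hp =>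
    (le_total _ _).elim id fun hle => hmin hp hle
  have hmin₀ := hmin t₀ ht₀
  have hle_t := le_add t ht
  by_cases htt : t ≤ t₀
  · exact ⟨t, isFoot_of_forall_dist_le hG ht (by omega) hmin, by omega, by omega⟩
  · have hqt := hmid t (not_le.1 htt) ht
    have hfar : r < G.dist (s n) (q t) := dist_comm ▸ lt_dist_of_notMem_tube hqt.1 le_rfl
    refine ⟨t, isFoot_of_forall_dist_le hG ht hfar hmin, by omega, ?_⟩
    exact dist_start t ht ▸ hqt.dist_start_le hG h (by omega)

lemma isFoot_le_or_le (hG : G.Connected) (hW : WrenchFree G (r + 1)) (h : Spine G r s n a b)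
    (ha : 4 * r + 2 ≤ a) (hbn : b + 4 * r + 2 ≤ n) (hu : IsMiddle G r s n a b u) {ℓ : ℕ}
    (hq : IsGeodesicSeq_s4 G q ℓ) (hq₀ : q 0 = s 0) (hq₁ : q ℓ = u) (hi : IsFoot G r q ℓ i) :
    i ≤ a + 15 * r + 9 ∨ ℓ - r ≤ i := by
  obtain ⟨t, ht, hat, hta⟩ := hu.exists_isFoot hG h hbn hq hq₀ hq₁
  by_contra! hcon
  exact not_isFoot_of_wrenchFree hG hW hq ht (by omega) (by omega) (by omega) hi

/-- If `v` were far from `u`, its component outside the tube around a geodesic from `s 0` to `u`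
would be attached both near `u` and near the only foot of that geodesic. -/
lemma dist_le (hG : G.Connected) (hcyc : GeodesicCyclesLE G (r + 2))
    (hW : WrenchFree G (r + 1)) (h : Spine G r s n a b) (ha : 4 * r + 2 ≤ a)
    (hbn : b + 4 * r + 2 ≤ n) (hu : IsMiddle G r s n a b u)
    (huv : G.dist (s a) u = G.dist (s a) v) (hfar : 21 * r + 13 ≤ G.dist (s a) u)
    (hreach : (restrictTo G {x | 21 * r + 13 ≤ G.dist (s a) x}).Reachable u v) :
    G.dist u v ≤ 6 * r := by
  have han : a ≤ n := h.left_le_right.trans h.right_le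
  have hv := hu.of_reachable hG h (by omega) hreach
  have hu_ge := hu.add_dist_le hG h.geodesic han
  have dist_start_le : ∀ x, G.dist (s 0) x ≤ a + G.dist (s a) x := fun x => by
    simpa [h.geodesic.dist_eq 0 (Nat.zero_le n) a han] using
      hG.dist_triangle (u := s 0) (v := s a) (w := x)
  have hu_le := dist_start_le u
  have hv_le := dist_start_le v
  obtain ⟨q, hq, hq₀, hq₁⟩ := exists_isGeodesicSeq_s4 (hG (s 0) u)
  generalize G.dist (s 0) u = ℓ at *
  by_cases hvt : v ∈ tube G r q ℓ
  · have hv_ge := hv.add_dist_le hG h.geodesic han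
    have := hq.dist_le_of_mem_tube hG hvt (t := 2 * r) (by rw [hq₀]; omega)
    rw [hq₁] at this
    omega
  obtain ⟨w, hw, hvw⟩ := exists_attachment_of_reachable hreach.symm hvt
    (hq₁ ▸ mem_tube le_rfl : u ∈ tube G r q ℓ)
  obtain ⟨z, hz, hwz⟩ := hw.1
  rcases shadow_le_or_le hG hcyc hq hvt (a + 15 * r + 9) (ℓ - r) (by omega)
    fun i hi => hu.isFoot_le_or_le hG hW h ha hbn hq hq₀ hq₁ hi with hnear | hnear
  · have hw_far : 21 * r + 13 ≤ G.dist (s a) w := mem_of_reachable_restrictTo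
      (X := {x | 21 * r + 13 ≤ G.dist (s a) x}) hvw (huv.symm.trans_ge hfar)
    have hw_ge := (hu.of_reachable hG h (by omega) (hreach.trans hvw)).add_dist_le hG h.geodesic han
    have hw_le := hG.dist_triangle (u := s 0) (v := q z) (w := w)
    have h₁ := hq.dist_eq 0 (Nat.zero_le ℓ) z hz
    have h₂ := hnear z ⟨hz, w, hw, hwz⟩
    rw [hq₀] at h₁
    rw [dist_comm (u := q z)] at hw_le
    omega
  · have := hq.dist_le_of_shadow_ge hG hvt hnear (t := 2 * r) (by rw [hq₀]; omega)
    rw [hq₁] at this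
    omega

end IsMiddle

lemma exists_center [Finite V] (hG : G.Connected) (hcyc : GeodesicCyclesLE G (r + 2))
    (hW : WrenchFree G (r + 1)) :
    ∃ c, ∀ u v, G.dist c u = G.dist c v → 21 * r + 13 ≤ G.dist c u →
      (restrictTo G {x | 21 * r + 13 ≤ G.dist c x}).Reachable u v → G.dist u v ≤ 6 * r := by
  obtain ⟨s, n, a, b, h⟩ := exists_spine hG hW
  refine ⟨s a, fun u v huv hfar hreach => ?_⟩
  have han : n - (n - a) = a := Nat.sub_sub_self (h.left_le_right.trans h.right_le)
  rcases h.isRight_or_isMiddle hG hcyc le_rfl h.left_le_right hfar with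
    hu | hu | ⟨ha, hbn, hu⟩
  · exact h.dist_le_of_reachable_of_isRight hG hcyc le_rfl h.left_le_right huv hfar hreach hu
  · exact h.reverse.dist_le_of_reachable_of_isRight hG hcyc
      (Nat.sub_le_sub_left h.left_le_right n) le_rfl (by rwa [han]) (by rwa [han])
      (by rwa [han]) hu
  · exact hu.dist_le hG hcyc hW h ha hbn huv hfar hreach

end Spines

section Components

variable {G : SimpleGraph V} {r ℓ : ℕ}

lemma edist_induce_le_length {X : Set V} {x y : V} (p : G.Walk x y) (hp : ∀ z ∈ p.support, z ∈ X) :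
    (G.induce X).edist ⟨x, hp x p.start_mem_support⟩ ⟨y, hp y p.end_mem_support⟩ ≤ p.length := by
  have hlen : (p.induce X hp).length = p.length := by
    rw [← Walk.length_map (Embedding.induce X).toHom, Walk.map_induce]
    rfl
  exact hlen ▸ SimpleGraph.edist_le _

variable (K : G.ConnectedComponent)

lemma dist_toSimpleGraph (x y : K) : K.toSimpleGraph.dist x y = G.dist x y := by
  classical
  refine le_antisymm ?_ ?_
  · have hxy : G.Reachable (x : V) y := ConnectedComponent.exact (x.2.trans y.2.symm)
    obtain ⟨p, hp⟩ := hxy.exists_walk_length_eq_dist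
    have hpK : ∀ z ∈ p.support, z ∈ K.supp := fun z hz =>
      (ConnectedComponent.sound (p.takeUntil z hz).reachable.symm).trans x.2
    have hle := edist_induce_le_length p hpK
    rw [hp] at hle
    exact ENat.toNat_le_of_le_natCast hle
  · obtain ⟨p, hp⟩ := (K.connected_toSimpleGraph x y).exists_walk_length_eq_dist
    rw [← hp, ← Walk.length_map K.toSimpleGraph_hom]
    exact dist_le _

variable {K}

lemma GeodesicCyclesLE.toSimpleGraph (hG : GeodesicCyclesLE G ℓ) :
    GeodesicCyclesLE K.toSimpleGraph ℓ := fun v p hp => by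
  rw [← Walk.length_map K.toSimpleGraph_hom]
  refine hG _ (p.map K.toSimpleGraph_hom) fun i j hij hj => ?_
  simp only [Walk.length_map, Walk.getVert_map] at hj ⊢
  exact (hp i j hij hj).trans (dist_toSimpleGraph K _ _).le

lemma IsGeodesicSeq_s4.coe {s : ℕ → K} {n : ℕ} (hs : IsGeodesicSeq_s4 K.toSimpleGraph s n) :
    IsGeodesicSeq_s4 G (fun i => (s i : V)) n where
  adj i hi := hs.adj i hi
  dist_eq i hi j hj := (dist_toSimpleGraph K _ _).symm.trans (hs.dist_eq i hi j hj)

lemma WrenchFree.toSimpleGraph (hG : WrenchFree G ℓ) : WrenchFree K.toSimpleGraph ℓ :=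
  fun s q r n i j h => hG (fun i => s i) (fun i => q i) (fun i => r i) n i j
    { spine := h.spine.coe
      left := h.left.coe
      right := h.right.coe
      left_zero := congrArg _ h.left_zero
      right_zero := congrArg _ h.right_zero
      le_left := h.le_left
      gap := h.gap
      right_le := h.right_le
      left_far p hp := (h.left_far p hp).trans (dist_toSimpleGraph K _ _).le
      right_far p hp := (h.right_far p hp).trans (dist_toSimpleGraph K _ _).le }

variable (K) in
lemma reachable_toSimpleGraph_of_restrictTo {X : Set V} {u v : V}
    (h : (restrictTo G X).Reachable u v) (hu : u ∈ K) :
    ∃ hv : v ∈ K, (restrictTo K.toSimpleGraph {x | ↑x ∈ X}).Reachable ⟨u, hu⟩ ⟨v, hv⟩ := by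
  refine reachable_induction (P := fun z => ∃ hz : z ∈ K,
    (restrictTo K.toSimpleGraph {x | ↑x ∈ X}).Reachable ⟨u, hu⟩ ⟨z, hz⟩) h ⟨hu, .rfl⟩ ?_
  rintro a b hab ⟨ha, hua⟩
  obtain ⟨hab, haX, hbX⟩ := restrictTo_adj.1 hab
  have hb : b ∈ K := (ConnectedComponent.sound hab.symm.reachable).trans ha
  exact ⟨hb, hua.trans (Adj.reachable (restrictTo_adj.2 ⟨hab, haX, hbX⟩))⟩

/-- The distance of a vertex from the chosen centre of its component. -/
noncomputable def depth (c : G.ConnectedComponent → V) (v : V) : ℕ :=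
  G.dist (c (G.connectedComponentMk v)) v

lemma exists_centers [Finite V] (hcyc : GeodesicCyclesLE G (r + 2)) (hW : WrenchFree G (r + 1)) :
    ∃ c : G.ConnectedComponent → V, (∀ K, G.connectedComponentMk (c K) = K) ∧
      ∀ u v, depth c u = depth c v → 21 * r + 13 ≤ depth c u →
        (restrictTo G {x | 21 * r + 13 ≤ depth c x}).Reachable u v → G.dist u v ≤ 6 * r := by
  choose c hc using fun K : G.ConnectedComponent => exists_center (G := K.toSimpleGraph)
    K.connected_toSimpleGraph hcyc.toSimpleGraph hW.toSimpleGraph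
  have depth_coe : ∀ (K : G.ConnectedComponent) (x : K),
      depth (fun K => (c K : V)) x = K.toSimpleGraph.dist (c K) x := by
    rintro K ⟨x, rfl⟩
    exact (dist_toSimpleGraph _ _ _).symm
  refine ⟨fun K => c K, fun K => (c K).2, fun u v huv hu h => ?_⟩
  obtain ⟨hv, h⟩ := reachable_toSimpleGraph_of_restrictTo (G.connectedComponentMk u) h rfl
  have := hc _ ⟨u, rfl⟩ ⟨v, hv⟩
  rw [← depth_coe, ← depth_coe, dist_toSimpleGraph] at this
  refine this huv hu ?_
  simpa only [depth_coe, Set.mem_ofPred_eq] using h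

end Components

section StarForests

variable {T K Λ : Type*} {H : SimpleGraph T} {κ : Λ → K} {L : ℕ}

/-- A labelling of `H` as a disjoint union of subdivided stars, one for every `c : K`: the star of
`c` has the centre `root c` and its arms are the paths `arm l 0, …, arm l L` with `κ l = c`. The
values of `arm l` beyond `L` are irrelevant. -/
structure StarForest (H : SimpleGraph T) (κ : Λ → K) (L : ℕ) where
  root : K → T
  arm : Λ → ℕ → T
  center : T → K
  center_root : ∀ c, center (root c) = c
  center_arm : ∀ l t, center (arm l t) = κ l
  arm_zero : ∀ l, arm l 0 = root (κ l)
  arm_ne_root : ∀ l t c, 0 < t → t ≤ L → arm l t ≠ root c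
  arm_inj : ∀ l l' t t', 0 < t → t ≤ L → 0 < t' → t' ≤ L → arm l t = arm l' t' → l = l' ∧ t = t'
  exists_eq : ∀ x, (∃ c, root c = x) ∨ ∃ l t, 0 < t ∧ t ≤ L ∧ arm l t = x
  adj_iff : ∀ x y, H.Adj x y ↔ ∃ l, ∃ t < L, s(arm l t, arm l (t + 1)) = s(x, y)

namespace StarForest

variable (F : StarForest H κ L)

lemma root_injective : Function.Injective F.root :=
  Function.LeftInverse.injective F.center_root

lemma adj_arm {l : Λ} {t : ℕ} (ht : t < L) : H.Adj (F.arm l t) (F.arm l (t + 1)) :=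
  (F.adj_iff _ _).2 ⟨l, t, ht, rfl⟩

lemma center_eq_of_adj {x y : T} (h : H.Adj x y) : F.center x = F.center y := by
  obtain ⟨l, t, -, h⟩ := (F.adj_iff x y).1 h
  rcases Sym2.eq_iff.1 h with ⟨rfl, rfl⟩ | ⟨rfl, rfl⟩ <;> simp only [F.center_arm]

lemma reachable_root_center (x : T) : H.Reachable (F.root (F.center x)) x := by
  rcases F.exists_eq x with ⟨c, rfl⟩ | ⟨l, t, -, ht, rfl⟩
  · rw [F.center_root]
  · rw [F.center_arm, ← F.arm_zero]
    exact reachable_of_adj (Nat.zero_le t) fun i _ hi => F.adj_arm (hi.trans_le ht)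

lemma supp_connectedComponentMk (x : T) :
    (H.connectedComponentMk x).supp = {y | F.center y = F.center x} := by
  ext y
  refine ⟨fun h => ?_, fun h => ConnectedComponent.sound ?_⟩
  · exact reachable_induction (ConnectedComponent.exact h).symm rfl
      fun a b hab ha => (F.center_eq_of_adj hab).symm.trans ha
  · exact ((h : F.center y = _) ▸ F.reachable_root_center y).symm.trans (F.reachable_root_center x)

/-- The star of `c`, as a subdivision of the star graph with one leaf for every arm. -/
def starSubdivision (hL : 0 < L) {c : K} {m : ℕ} (φ : Fin m ≃ {l // κ l = c}) :
    SubdivisionData (H.induce {x | F.center x = c}) (starGraph m) 0 (Fin m) where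
  branch w := w.elim ⟨F.root c, F.center_root c⟩
    fun a => ⟨F.arm (φ a) L, (F.center_arm _ _).trans (φ a).2⟩
  src _ := none
  tgt a := some a
  len _ := L
  pt a t := ⟨F.arm (φ a) t, (F.center_arm _ _).trans (φ a).2⟩
  adj_iff u v := by
    cases u <;> cases v <;> simp [starGraph]
  edge_injective a b h := by simpa using h
  branch_injective u v h := by
    have h := congrArg Subtype.val h
    cases u with
    | none =>
      cases v with
      | none => rfl
      | some b => exact absurd h.symm (F.arm_ne_root _ _ _ hL le_rfl)
    | some a =>
      cases v with
      | none => exact absurd h (F.arm_ne_root _ _ _ hL le_rfl)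
      | some b =>
        exact congrArg some (φ.injective (Subtype.ext (F.arm_inj _ _ _ _ hL le_rfl hL le_rfl h).1))
  pt_zero a := Subtype.ext ((F.arm_zero _).trans (congrArg F.root (φ a).2))
  pt_len _ := rfl
  adj a t ht := F.adj_arm ht
  lt_len _ := hL
  pt_ne_branch a t w ht₀ ht h := by
    cases w with
    | none => exact F.arm_ne_root _ _ _ ht₀ ht.le (congrArg Subtype.val h)
    | some b => exact ht.ne (F.arm_inj _ _ _ _ ht₀ ht.le hL le_rfl (congrArg Subtype.val h)).2
  pt_inj a b t t' ht₀ ht ht'₀ ht' h := by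
    have := F.arm_inj _ _ _ _ ht₀ ht.le ht'₀ ht'.le (congrArg Subtype.val h)
    exact ⟨φ.injective (Subtype.ext this.1), this.2⟩

lemma subgraph_starSubdivision (hL : 0 < L) {c : K} {m : ℕ} (φ : Fin m ≃ {l // κ l = c}) :
    (F.starSubdivision hL φ).subgraph = ⊤ := by
  ext x y
  · refine iff_of_true ?_ trivial
    obtain ⟨x, rfl⟩ := x
    rcases F.exists_eq x with ⟨c, rfl⟩ | ⟨l, t, -, ht, rfl⟩
    · exact Or.inl ⟨none, Subtype.ext (congrArg F.root (F.center_root c))⟩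
    · refine Or.inr ⟨φ.symm ⟨l, (F.center_arm l t).symm⟩, t, ht, Subtype.ext ?_⟩
      simp [starSubdivision]
  · refine ⟨Subgraph.adj_sub _, fun h => ?_⟩
    obtain ⟨l, t, ht, hxy⟩ := (F.adj_iff x y).1 h
    have hl : κ l = c := by
      rw [← F.center_arm l t]
      rcases Sym2.eq_iff.1 hxy with ⟨h, -⟩ | ⟨h, -⟩
      exacts [(congrArg F.center h).trans x.2, (congrArg F.center h).trans y.2]
    refine ⟨φ.symm ⟨l, hl⟩, t, ht, ?_⟩
    simpa [starSubdivision, Subtype.ext_iff] using hxy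

lemma isUnionOfSubdividedStars [Finite Λ] (F : StarForest H κ L) (hL : 0 < L) :
    IsUnionOfSubdividedStars H := by
  refine ConnectedComponent.ind fun x => ?_
  obtain ⟨m, ⟨φ⟩⟩ := Finite.exists_equiv_fin {l // κ l = F.center x}
  rw [F.supp_connectedComponentMk x]
  exact ⟨m, F.subgraph_starSubdivision hL φ.symm ▸ (F.starSubdivision hL φ.symm).isSubdivGE⟩

end StarForest

lemma exists_starForest [Finite K] [Finite Λ] (κ : Λ → K) (L : ℕ) :
    ∃ (n : ℕ) (H : SimpleGraph (Fin n)), Nonempty (StarForest H κ (L + 1)) := by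
  obtain ⟨n, ⟨e⟩⟩ := Finite.exists_equiv_fin (K ⊕ (Λ × Fin (L + 1)))
  let arm (l : Λ) : ℕ → Fin n
    | 0 => e (Sum.inl (κ l))
    | t + 1 => e (Sum.inr (l, Fin.ofNat (L + 1) t))
  have arm_ne_root : ∀ l t c, 0 < t → arm l t ≠ e (Sum.inl c) := fun l t c ht => by
    obtain ⟨t, rfl⟩ := Nat.exists_eq_add_one.2 ht
    exact fun h => Sum.inr_ne_inl (e.injective h)
  have arm_inj : ∀ l l' t t', 0 < t → t ≤ L + 1 → 0 < t' → t' ≤ L + 1 → arm l t = arm l' t' →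
      l = l' ∧ t = t' := fun l l' t t' ht₀ ht ht'₀ ht' h => by
    obtain ⟨t, rfl⟩ := Nat.exists_eq_add_one.2 ht₀
    obtain ⟨t', rfl⟩ := Nat.exists_eq_add_one.2 ht'₀
    obtain ⟨hl, htt'⟩ := Prod.ext_iff.1 (Sum.inr_injective (e.injective h))
    have := congrArg Fin.val htt'
    rw [Fin.val_ofNat, Fin.val_ofNat, Nat.mod_eq_of_lt ht, Nat.mod_eq_of_lt ht'] at this
    exact ⟨hl, congrArg (· + 1) this⟩
  have arm_ne_succ : ∀ l, ∀ t < L + 1, arm l t ≠ arm l (t + 1) := by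
    rintro l (_ | t) ht h
    · exact arm_ne_root l 1 (κ l) one_pos h.symm
    · have := arm_inj _ _ _ _ t.succ_pos ht.le (t + 1).succ_pos ht h
      omega
  refine ⟨n, fromEdgeSet {z | ∃ l, ∃ t < L + 1, s(arm l t, arm l (t + 1)) = z}, ⟨
    { root := fun c => e (Sum.inl c)
      arm := arm
      center := fun x => Sum.elim id (fun a => κ a.1) (e.symm x)
      center_root := fun c => by simp
      center_arm := fun l t => by cases t <;> simp [arm]
      arm_zero := fun l => rfl
      arm_ne_root := fun l t c ht _ => arm_ne_root l t c ht
      arm_inj := arm_inj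
      exists_eq := e.surjective.forall.2 ?_
      adj_iff := fun x y => ?_ }⟩⟩
  · rintro (c | ⟨l, t⟩)
    · exact Or.inl ⟨c, rfl⟩
    · exact Or.inr ⟨l, t + 1, t.val.succ_pos, t.2, by simp [arm]⟩
  · rw [fromEdgeSet_adj, and_iff_left_of_imp, Set.mem_ofPred_eq]
    rintro ⟨l, t, ht, h⟩ rfl
    rcases Sym2.eq_iff.1 h with h | h
    all_goals exact arm_ne_succ l t ht (h.1.trans h.2.symm)

end StarForests

section Decompositions

variable {G : SimpleGraph V} {Hg : SimpleGraph N} {B : N → Set V} {U : Set V} {u v z : V}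
  {r R : ℕ}

lemma mem_ballSet_of_walk (hu : u ∈ U) (p : G.Walk u v) (hp : p.length ≤ r) :
    v ∈ ballSet G U r :=
  ⟨u, hu, (SimpleGraph.edist_le p).trans (by exact_mod_cast hp)⟩

lemma exists_walk_of_mem_ballSet (hv : v ∈ ballSet G U r) :
    ∃ u ∈ U, ∃ p : G.Walk u v, p.length ≤ r := by
  obtain ⟨u, hu, huv⟩ := hv
  obtain ⟨p, hp⟩ := exists_walk_of_edist_ne_top (ne_top_of_le_ne_top (ENat.natCast_ne_top r) huv)
  exact ⟨u, hu, p, by exact_mod_cast hp.trans_le huv⟩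

lemma support_subset_ballSet (hu : u ∈ U) (p : G.Walk u v) (hp : p.length ≤ r) :
    ∀ w ∈ p.support, w ∈ ballSet G U r := fun w hw => by
  classical
  exact mem_ballSet_of_walk hu (p.takeUntil w hw) ((p.length_takeUntil_le_length hw).trans hp)

lemma support_subset_ballSet_of_mem_of_mem (hu : u ∈ U) (hv : v ∈ U) (p : G.Walk u v)
    (hp : p.length ≤ 2 * r) : ∀ w ∈ p.support, w ∈ ballSet G U r := fun w hw => by
  classical
  have hlen := congrArg Walk.length (p.take_spec hw)
  rw [Walk.length_append] at hlen
  rcases le_total (p.takeUntil w hw).length r with h | h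
  · exact mem_ballSet_of_walk hu _ h
  · refine mem_ballSet_of_walk hv (p.dropUntil w hw).reverse ?_
    rw [Walk.length_reverse]
    omega

lemma radiusLE_induce_ballSet (h : ∀ u ∈ U, ∃ p : G.Walk z u, p.length ≤ R ∧
    ∀ w ∈ p.support, w ∈ ballSet G U r) : radiusLE (G.induce (ballSet G U r)) (R + r) := by
  rintro ⟨⟨v, u, hu, -⟩⟩
  obtain ⟨p, -, hp⟩ := h u hu
  refine ⟨⟨z, hp z p.start_mem_support⟩, ?_⟩
  rintro ⟨x, hx⟩
  obtain ⟨y, hy, q, hq⟩ := exists_walk_of_mem_ballSet hx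
  obtain ⟨p, hpR, hp⟩ := h y hy
  have hpq : ∀ w ∈ (p.append q).support, w ∈ ballSet G U r := fun w hw =>
    ((Walk.mem_support_append_iff _ _).1 hw).elim (hp w) (support_subset_ballSet hy q hq w)
  refine (edist_induce_le_length (p.append q) hpq).trans ?_
  rw [Walk.length_append]
  exact_mod_cast add_le_add hpR hq

lemma connected_nodes_meeting_walk (hB : IsGraphDecomp G Hg B) (p : G.Walk u v) :
    (Hg.induce {h | ∃ w ∈ p.support, w ∈ B h}).Connected := by
  induction p with
  | @nil u =>
    have hnil : {h | ∃ w ∈ (Walk.nil : G.Walk u u).support, w ∈ B h} = {h | u ∈ B h} := by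
      ext h
      simp only [Walk.support_nil, List.mem_singleton, exists_eq_left, Set.mem_ofPred_eq]
    rw [hnil]
    exact hB.2.2 u
  | @cons u x v hux p ih =>
    obtain ⟨h, hu, hx⟩ := hB.2.1 hux
    have hunion : {h | ∃ w ∈ (Walk.cons hux p).support, w ∈ B h} =
        {h | u ∈ B h} ∪ {h | ∃ w ∈ p.support, w ∈ B h} := by
      ext h
      simp only [Walk.support_cons, List.exists_mem_cons_iff, Set.mem_ofPred_eq, Set.mem_union]
    rw [hunion]
    exact induce_union_connected (hB.2.2 u).preconnected ih.preconnected
      ⟨h, hu, x, p.start_mem_support, hx⟩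

lemma isGraphDecomp_ballSet (hB : IsGraphDecomp G Hg B) (r : ℕ) :
    IsGraphDecomp G Hg fun h => ballSet G (B h) r := by
  have subset : ∀ h, B h ⊆ ballSet G (B h) r := fun h v hv => mem_ballSet_of_walk hv .nil r.zero_le
  refine ⟨fun v => (hB.1 v).imp fun h hv => subset h hv,
    fun u v huv => (hB.2.1 huv).imp fun h huv => ⟨subset h huv.1, subset h huv.2⟩, fun v => ?_⟩
  obtain ⟨h₀, hv⟩ := hB.1 v
  refine induce_connected_of_patches h₀ (subset h₀ hv) fun {h} hh => ?_
  obtain ⟨u, hu, p, hp⟩ := exists_walk_of_mem_ballSet hh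
  refine ⟨{h | ∃ w ∈ p.support, w ∈ B h}, ?_, ⟨v, p.end_mem_support, hv⟩,
    ⟨u, p.start_mem_support, hu⟩, (connected_nodes_meeting_walk hB p).preconnected _ _⟩
  rintro h' ⟨w, hw, hwB⟩
  classical
  exact mem_ballSet_of_walk hwB (p.dropUntil w hw) ((p.length_dropUntil_le_length hw).trans hp)

lemma connected_induce_of_adj {S : Set N} {h₀ : N} (h₀S : h₀ ∈ S)
    (hS : ∀ h ∈ S, h = h₀ ∨ Hg.Adj h₀ h) : (Hg.induce S).Connected := by
  refine (connected_iff_exists_forall_reachable _).2 ⟨⟨h₀, h₀S⟩, fun ⟨h, hh⟩ => ?_⟩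
  rcases hS h hh with rfl | hadj
  exacts [.rfl, Adj.reachable hadj]

end Decompositions

section Layers

variable {T K Λ : Type*} {G : SimpleGraph V} {H : SimpleGraph T} {κ : Λ → K} {L M : ℕ}
  {d : V → ℕ} {comp : V → K} {far : V → Λ}

/-- Given a depth `d` on the vertices, the bag of a centre consists of the vertices of depth at most
`M` of one component of `G`; the bags along an arm consist of two consecutive layers each of one
component of the vertices of depth at least `M`. -/
def layerBag (F : StarForest H κ L) (M : ℕ) (d : V → ℕ) (comp : V → K) (far : V → Λ) (x : T) :
    Set V :=
  {v | x = F.root (comp v) ∧ d v ≤ M ∨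
    ∃ j < L, x = F.arm (far v) (j + 1) ∧ (d v = M + j ∨ d v = M + j + 1)}

namespace StarForest

variable (F : StarForest H κ L)

lemma mem_layerBag_root {c : K} {v : V} :
    v ∈ layerBag F M d comp far (F.root c) ↔ comp v = c ∧ d v ≤ M := by
  refine ⟨?_, fun ⟨hc, hd⟩ => Or.inl ⟨hc ▸ rfl, hd⟩⟩
  rintro (⟨hc, hd⟩ | ⟨j, hj, h, -⟩)
  · exact ⟨(F.root_injective hc).symm, hd⟩
  · exact absurd h.symm (F.arm_ne_root _ _ _ j.succ_pos hj)

lemma mem_layerBag_arm {l : Λ} {j : ℕ} (hj : j < L) {v : V} :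
    v ∈ layerBag F M d comp far (F.arm l (j + 1)) ↔
      far v = l ∧ (d v = M + j ∨ d v = M + j + 1) := by
  refine ⟨?_, fun ⟨hl, hd⟩ => Or.inr ⟨j, hj, hl ▸ rfl, hd⟩⟩
  rintro (⟨h, -⟩ | ⟨j', hj', h, hd⟩)
  · exact absurd h (F.arm_ne_root _ _ _ j.succ_pos hj)
  · obtain ⟨hl, hjj'⟩ := F.arm_inj _ _ _ _ j.succ_pos hj j'.succ_pos hj' h
    obtain rfl := Nat.succ_injective hjj'
    exact ⟨hl.symm, hd⟩

lemma root_or_arm (x : T) : (∃ c, F.root c = x) ∨ ∃ l, ∃ j < L, F.arm l (j + 1) = x := by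
  refine (F.exists_eq x).imp_right ?_
  rintro ⟨l, t, ht₀, ht, rfl⟩
  obtain ⟨j, rfl⟩ := Nat.exists_eq_add_one.2 ht₀
  exact ⟨l, j, ht, rfl⟩

lemma connected_layerBag (hfar : ∀ v, κ (far v) = comp v) (hd : ∀ v, d v ≤ M + L) (v : V) :
    (H.induce {x | v ∈ layerBag F M d comp far x}).Connected := by
  rcases le_or_gt (d v) M with hv | hv
  · refine connected_induce_of_adj (h₀ := F.root (comp v)) (F.mem_layerBag_root.2 ⟨rfl, hv⟩)
      fun x hx => ?_
    rcases hx with ⟨rfl, -⟩ | ⟨j, hj, rfl, hvj⟩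
    · exact Or.inl rfl
    · obtain rfl : j = 0 := by omega
      rw [← hfar, ← F.arm_zero]
      exact Or.inr (F.adj_arm hj)
  · obtain ⟨i, hi⟩ := Nat.exists_eq_add_of_lt hv
    have := hd v
    refine connected_induce_of_adj (h₀ := F.arm (far v) (i + 1))
      ((F.mem_layerBag_arm (by omega)).2 ⟨rfl, Or.inr hi⟩) fun x hx => ?_
    rcases hx with ⟨-, hvM⟩ | ⟨j, hj, rfl, hvj | hvj⟩
    · omega
    · obtain rfl : j = i + 1 := by omega
      exact Or.inr (F.adj_arm hj)
    · obtain rfl : j = i := by omega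
      exact Or.inl rfl

lemma isGraphDecomp_layerBag (hfar : ∀ v, κ (far v) = comp v) (hd : ∀ v, d v ≤ M + L)
    (hd_adj : ∀ u v, G.Adj u v → d v ≤ d u + 1) (hcomp : ∀ u v, G.Adj u v → comp u = comp v)
    (hfar_adj : ∀ u v, G.Adj u v → M ≤ d u → M ≤ d v → far u = far v) :
    IsGraphDecomp G H (layerBag F M d comp far) := by
  have h_edge : ∀ u v, G.Adj u v → d u ≤ d v → ∃ x, u ∈ layerBag F M d comp far x ∧
      v ∈ layerBag F M d comp far x := fun u v huv hle => by
    have hv := hd_adj u v huv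
    have hvL := hd v
    rcases le_or_gt (d v) M with hvM | hvM
    · exact ⟨_, F.mem_layerBag_root.2 ⟨rfl, hle.trans hvM⟩,
        F.mem_layerBag_root.2 ⟨(hcomp u v huv).symm, hvM⟩⟩
    · obtain ⟨i, hi⟩ := Nat.exists_eq_add_of_lt hvM
      have hi' : i < L := by omega
      exact ⟨_, (F.mem_layerBag_arm hi').2 ⟨hfar_adj u v huv (by omega) hvM.le, by omega⟩,
        (F.mem_layerBag_arm hi').2 ⟨rfl, Or.inr hi⟩⟩
  refine ⟨fun v => ?_, fun u v huv => ?_, F.connected_layerBag hfar hd⟩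
  · obtain ⟨x, hx⟩ := (F.connected_layerBag hfar hd v).nonempty
    exact ⟨x, hx⟩
  · rcases le_total (d u) (d v) with h | h
    · exact h_edge u v huv h
    · exact (h_edge v u huv.symm h).imp fun _ => And.symm

end StarForest

end Layers

section Depth

variable {G : SimpleGraph V} {c : G.ConnectedComponent → V} {u v : V} {M m ρ d : ℕ}

lemma depth_le_depth_add_one (h : G.Adj u v) : depth c v ≤ depth c u + 1 := by
  rw [depth, depth, ← ConnectedComponent.sound h.reachable, ← dist_eq_one_iff_adj.2 h]
  exact h.reachable.dist_triangle_right _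

lemma exists_adj_depth_eq (hc : ∀ K, G.connectedComponentMk (c K) = K) (hv : depth c v = d + 1) :
    ∃ u, G.Adj u v ∧ depth c u = d := by
  obtain ⟨s, hs, hs₀, hsv⟩ := exists_isGeodesicSeq_s4 (ConnectedComponent.exact (hc _) :
    G.Reachable (c (G.connectedComponentMk v)) v)
  change G.dist _ _ = _ at hv
  rw [hv] at hs hsv
  have hadj := hs.adj d d.lt_succ_self
  rw [hsv] at hadj
  refine ⟨s d, hadj, ?_⟩
  rw [depth, ConnectedComponent.sound hadj.reachable, ← hs₀,
    hs.dist_eq 0 (Nat.zero_le _) d d.le_succ]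
  omega

lemma radiusLE_ball_component (hc : ∀ K, G.connectedComponentMk (c K) = K)
    (K : G.ConnectedComponent) :
    radiusLE (G.induce (ballSet G {v | G.connectedComponentMk v = K ∧ depth c v ≤ M} ρ))
      (M + ρ) := by
  classical
  refine radiusLE_induce_ballSet (z := c K) ?_
  rintro v ⟨rfl, hv⟩
  obtain ⟨p, hp⟩ := (ConnectedComponent.exact (hc _) :
    G.Reachable (c (G.connectedComponentMk v)) v).exists_walk_length_eq_dist
  refine ⟨p, hp.trans_le hv, fun w hw => mem_ballSet_of_walk ⟨?_, ?_⟩ .nil ρ.zero_le⟩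
  · exact ConnectedComponent.sound (p.dropUntil w hw).reachable
  · have hwv : G.connectedComponentMk w = G.connectedComponentMk v :=
      ConnectedComponent.sound (p.dropUntil w hw).reachable
    calc depth c w = G.dist (c (G.connectedComponentMk v)) w := by rw [depth, hwv]
      _ ≤ p.length := (dist_le (p.takeUntil w hw)).trans (p.length_takeUntil_le_length hw)
      _ ≤ M := hp.trans_le hv

lemma radiusLE_ball_layers (hc : ∀ K, G.connectedComponentMk (c K) = K)
    (hdist : ∀ u v, depth c u = depth c v → M ≤ depth c u →
      (restrictTo G {x | M ≤ depth c x}).Reachable u v → G.dist u v < 2 * ρ)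
    (hm : M ≤ m) (C : (restrictTo G {x | M ≤ depth c x}).ConnectedComponent) :
    radiusLE (G.induce (ballSet G {v | (restrictTo G _).connectedComponentMk v = C ∧
      (depth c v = m ∨ depth c v = m + 1)} ρ)) (2 * ρ + ρ) := by
  set U := {v | (restrictTo G _).connectedComponentMk v = C ∧ (depth c v = m ∨ depth c v = m + 1)}
  have exists_near : ∀ x ∈ U, ∃ y ∈ U, depth c y = m ∧ ∃ p : G.Walk y x, p.length ≤ 1 := by
    rintro x ⟨rfl, hx⟩
    rcases id hx with hx' | hx'
    · exact ⟨x, ⟨rfl, hx⟩, hx', .nil, zero_le_one⟩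
    · obtain ⟨y, hyx, hy⟩ := exists_adj_depth_eq hc hx'
      refine ⟨y, ⟨ConnectedComponent.sound (Adj.reachable ?_), .inl hy⟩, hy, hyx.toWalk, le_rfl⟩
      exact restrictTo_adj.2 ⟨hyx, hm.trans hy.ge, hm.trans (by omega)⟩
  intro hne
  obtain ⟨⟨-, x₀, hx₀, -⟩⟩ := id hne
  obtain ⟨z, hz, hzm, -⟩ := exists_near x₀ hx₀
  refine radiusLE_induce_ballSet (z := z) (fun x hx => ?_) hne
  obtain ⟨y, hy, hym, p, hp⟩ := exists_near x hx
  have hzy := ConnectedComponent.exact (hz.1.trans hy.1.symm)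
  obtain ⟨q, hq⟩ := (hzy.mono restrictTo_le).exists_walk_length_eq_dist
  have hlt := hdist z y (hzm.trans hym.symm) (hm.trans hzm.ge) hzy
  have hlen : (q.append p).length ≤ 2 * ρ := by
    rw [Walk.length_append]
    omega
  exact ⟨q.append p, hlen, support_subset_ballSet_of_mem_of_mem hz hx _ hlen⟩

lemma radiusLE_mono {r s : ℕ} (h : radiusLE G r) (hrs : r ≤ s) : radiusLE G s := fun hne =>
  (h hne).imp fun _ hv w => (hv w).trans (by exact_mod_cast hrs)

lemma exists_star_decomposition [Finite V] (hc : ∀ K, G.connectedComponentMk (c K) = K)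
    (hdist : ∀ u v, depth c u = depth c v → M ≤ depth c u →
      (restrictTo G {x | M ≤ depth c x}).Reachable u v → G.dist u v < 2 * ρ)
    (hρ : 2 * ρ ≤ M) :
    ∃ (n : ℕ) (Hg : SimpleGraph (Fin n)) (B : Fin n → Set V),
      IsUnionOfSubdividedStars Hg ∧ IsGraphDecomp G Hg B ∧
      ∀ h, radiusLE (G.induce (B h)) (M + ρ) := by
  have : Finite G.ConnectedComponent := Quot.finite _
  have : Finite (restrictTo G {x | M ≤ depth c x}).ConnectedComponent := Quot.finite _
  obtain ⟨L, hL⟩ := (Set.finite_range (depth c)).bddAbove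
  obtain ⟨n, H, ⟨F⟩⟩ := exists_starForest (ConnectedComponent.map
    (Hom.ofLE (restrictTo_le (G := G) (X := {x | M ≤ depth c x})))) L
  have hdecomp := F.isGraphDecomp_layerBag (G := G) (M := M) (d := depth c)
    (comp := G.connectedComponentMk) (far := connectedComponentMk _) (fun _ => rfl)
    (fun v => (hL ⟨v, rfl⟩).trans (by omega)) (fun _ _ => depth_le_depth_add_one)
    (fun _ _ h => ConnectedComponent.sound h.reachable)
    fun _ _ h hu hv => ConnectedComponent.sound (restrictTo_adj.2 ⟨h, hu, hv⟩).reachable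
  refine ⟨n, H, _, F.isUnionOfSubdividedStars L.succ_pos, isGraphDecomp_ballSet hdecomp ρ,
    fun x => ?_⟩
  rcases F.root_or_arm x with ⟨K, rfl⟩ | ⟨C, j, hj, rfl⟩
  · rw [Set.ext fun v => F.mem_layerBag_root]
    exact radiusLE_ball_component hc K
  · rw [Set.ext fun v => F.mem_layerBag_arm hj]
    exact radiusLE_mono (radiusLE_ball_layers hc hdist (Nat.le_add_right M j) C)
      (Nat.add_le_add_right hρ ρ)

end Depth

/-- Let `k : ℕ`. If a graph `G` contains no `(≥ k)`-subdivision of the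
triangle `K³` as a geodesic subgraph and no `(≥ 3k)`-subdivision of the wrench graph `W`
as a `3`-quasi-geodesic subgraph, then `G` has radial star-width at most `72k + 14`. -/
theorem radial_star_width_upper_bound
    {V : Type*} [Fintype V] (k : ℕ) (G : SimpleGraph V)
    (hK3 : ¬ ContainsQuasiGeodesicSubdivGE G k triangleGraph 1)
    (hW : ¬ ContainsQuasiGeodesicSubdivGE G (3 * k) wrenchGraph 3) :
    ∃ (n : ℕ) (Hg : SimpleGraph (Fin n)) (B : Fin n → Set V),
      IsUnionOfSubdividedStars Hg ∧ IsGraphDecomp G Hg B ∧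
      ∀ h, radiusLE (G.induce (B h)) (72 * k + 14) := by
  have hcyc : GeodesicCyclesLE G (3 * k + 2) := geodesicCyclesLE_of_not_contains hK3
  have hwrench : WrenchFree G (3 * k + 1) := wrenchFree_of_not_contains hW
  obtain ⟨c, hc, hlayer⟩ := exists_centers hcyc hwrench
  have hdist : ∀ u v, depth c u = depth c v → 21 * (3 * k) + 13 ≤ depth c u →
      (restrictTo G {x | 21 * (3 * k) + 13 ≤ depth c x}).Reachable u v →
      G.dist u v < 2 * (9 * k + 1) := fun u v huv hu hreach => by
    have := hlayer u v huv hu hreach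
    omega
  rw [show 72 * k + 14 = 21 * (3 * k) + 13 + (9 * k + 1) by ring]
  exact exists_star_decomposition hc hdist (by omega)

end RadialPaper
end
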